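/- Let p > 3 be a prime and let (p/3) denote the Legendre symbol. If p ≡ 1 (mod 4), write p = x^2 + 4y^2 with integers x, y; then (p/3)·Σ_{k=0}^{p−1} k·C(2k,k)·C(3k,k)·C(6k,3k)/12^{3k} ≡ −(5/9)x^2 + (5/18)p + 5p^2/(72x^2) (mod p^3), (p/3)·Σ_{k=0}^{p−1} k^2·C(2k,k)·C(3k,k)·C(6k,3k)/12^{3k} ≡ (25/486)x^2 − (25/972)p − 35p^2/(1944x^2) (mod p^3), and (p/3)·Σ_{k=0}^{p−1} k^3·C(2k,k)·C(3k,k)·C(6k,3k)/12^{3k} ≡ (5/2187)x^2 − (5/4374)p + 187p^2/(69984x^2) (mod p^3). If p ≡ 3 (mod 4), then these three sums times (p/3) are congruent modulo p^2 to (1/12)R_1(p), −(23/648)R_1(p), and (197/29160)R_1(p), respectively. -/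

import Mathlib

/-- `a ≡ b (mod p^r)` for rationals: the numerator of `a - b` in lowest terms
is divisible by `p^r`. -/
def ratCongr (p r : ℕ) (a b : ℚ) : Prop := (p : ℤ)^r ∣ (a - b).num
/-- `R_1(p) = (2p + 2 - 2^(p-1)) * C((p-1)/2, ⌊p/4⌋)^2`. -/
def R1 (p : ℕ) : ℚ :=
  (2*(p:ℚ) + 2 - 2^(p-1)) * (((p-1)/2).choose (p/4) : ℚ)^2

instance : Fact (Nat.Prime 3) := ⟨by norm_num⟩

/-!
Modulo `p ^ 3` the summands are `k ^ j` times the terms of the truncated hypergeometric series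
`F(a) = ∑ (1/2)_k (-a)_k (1 + a)_k / k!^3` at `a = -1/6`. Telescoping in `k` expresses the sums with
`j = 2, 3` through those with `j = 0, 1`, and gives the contiguous relations
`F₁(a) = a (a + 1) F(a) - a ^ 2 F(a - 1)` and `(a + 1) ^ 2 F(a + 1) = a ^ 2 F(a - 1)`, the latter
up to a multiple of `p` that vanishes at most of the points `a = j + p t`. Iterating from `a = p t`
evaluates `F(2 h + p t)` as a quotient of Morita gamma values, while `a ^ 2 F(a) F(a - 1)` is the
constant `p ^ 2 (t ^ 2 + t)` along `a = j + p t`. As `F(-1 - a) = F(a)`, the point `-1/6` may be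
replaced by `-5/6`, and one of the two has this form with `t = -1/6` or lies next to such a point.

Gauss multiplication reduces the gamma values to `Γ(1/4)`. If `p ≡ 1 (mod 4)`, then
`(p/3) F(-1/6) = J ^ 2` for the `p`-adic quartic Jacobi sum `J`, of which `± x` is half the trace
and `p` the norm, so `2 x J = ± (J ^ 2 + p)`. If `p ≡ 3 (mod 4)`, then `p F(-1/6) = 0`, so only
`F(a - 1)` contributes to `F₁`, and Gauss's formula for `C((p - 1)/2, ⌊p/4⌋)` finishes.
-/

/-- The ring of integers modulo `p^3`, in which all the congruences are computed. -/
abbrev ModCube (p : ℕ) := ZMod (p ^ 3)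

namespace ModCube

/-- Reduction from `ℤ/p^3` to `ℤ/p`. -/
def residue (p : ℕ) : ModCube p →+* ZMod p := ZMod.castHom (dvd_pow_self p three_ne_zero) (ZMod p)

section Basics

lemma p_pow_three {p : ℕ} : (p : ModCube p) ^ 3 = 0 := by
  exact_mod_cast ZMod.natCast_self (p ^ 3)

lemma p_sq_mul_prod_congr {p : ℕ} {ι : Type*} (s : Finset ι) (f g : ι → ModCube p)
    (h : ∀ i ∈ s, (p : ModCube p) ^ 2 * f i = p ^ 2 * g i) :
    (p : ModCube p) ^ 2 * ∏ i ∈ s, f i = p ^ 2 * ∏ i ∈ s, g i := by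
  classical
  induction s using Finset.induction_on with
  | empty => simp
  | insert i s hi ih =>
    rw [Finset.prod_insert hi, Finset.prod_insert hi]
    have hs := ih fun j hj => h j (Finset.mem_insert_of_mem hj)
    linear_combination (∏ i ∈ s, f i) * h i (Finset.mem_insert_self _ _) + g i * hs

variable {p : ℕ} [hp : Fact p.Prime]

lemma exists_natCast_eq (x : ModCube p) : ∃ n : ℕ, (n : ModCube p) = x :=
  ⟨x.val, ZMod.natCast_zmod_val x⟩

lemma residue_eq_zero_iff {x : ModCube p} : residue p x = 0 ↔ (p : ModCube p) ∣ x := by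
  constructor
  · obtain ⟨n, rfl⟩ := exists_natCast_eq x
    rw [map_natCast, ZMod.natCast_eq_zero_iff]
    rintro ⟨k, rfl⟩
    exact ⟨k, Nat.cast_mul p k⟩
  · rintro ⟨y, rfl⟩
    simp

lemma isUnit_natCast_iff {n : ℕ} : IsUnit (n : ModCube p) ↔ ¬p ∣ n := by
  rw [ZMod.isUnit_iff_coprime, Nat.coprime_pow_right_iff three_pos, Nat.coprime_comm]
  exact hp.out.coprime_iff_not_dvd

lemma isUnit_iff_residue_ne_zero {x : ModCube p} : IsUnit x ↔ residue p x ≠ 0 := by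
  obtain ⟨n, rfl⟩ := exists_natCast_eq x
  rw [isUnit_natCast_iff, map_natCast, Ne, ZMod.natCast_eq_zero_iff]

lemma p_dvd_iff_not_isUnit {x : ModCube p} : (p : ModCube p) ∣ x ↔ ¬IsUnit x := by
  rw [isUnit_iff_residue_ne_zero, not_not, residue_eq_zero_iff]

lemma isUnit_intCast_iff {n : ℤ} : IsUnit (n : ModCube p) ↔ ¬(p : ℤ) ∣ n := by
  rw [isUnit_iff_residue_ne_zero, map_intCast, Ne, ZMod.intCast_zmod_eq_zero_iff_dvd]

lemma isUnit_natCast_of_lt {n : ℕ} (hn0 : 0 < n) (hn : n < p) : IsUnit (n : ModCube p) :=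
  isUnit_natCast_iff.2 (Nat.not_dvd_of_pos_of_lt hn0 hn)

lemma natCast_mul_inv_of_lt {n : ℕ} (hn0 : 0 < n) (hn : n < p) :
    (n : ModCube p) * (n : ModCube p)⁻¹ = 1 :=
  ZMod.mul_inv_of_unit _ (isUnit_natCast_of_lt hn0 hn)

lemma not_isUnit_p_mul (y : ModCube p) : ¬IsUnit ((p : ModCube p) * y) :=
  p_dvd_iff_not_isUnit.1 (dvd_mul_right _ _)

lemma isUnit_add_p_mul {x : ModCube p} (y : ModCube p) : IsUnit (x + p * y) ↔ IsUnit x := by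
  simp [isUnit_iff_residue_ne_zero]

lemma p_dvd_of_p_sq_mul_eq_zero {x : ModCube p} (h : (p : ModCube p) ^ 2 * x = 0) :
    (p : ModCube p) ∣ x := by
  rw [p_dvd_iff_not_isUnit]
  intro hx
  have hp2 : ((p ^ 2 : ℕ) : ModCube p) = 0 := by
    push_cast
    exact hx.mul_left_eq_zero.1 h
  rw [ZMod.natCast_eq_zero_iff, Nat.pow_dvd_pow_iff_le_right hp.out.one_lt] at hp2
  omega

lemma two_lt_of_ne_two (hp2 : p ≠ 2) : 2 < p :=
  hp.out.two_le.lt_of_ne' hp2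

lemma two_mul_div_two_add_one (hp2 : p ≠ 2) : 2 * ((p - 1) / 2) + 1 = p := by
  have := hp.out.eq_two_or_odd
  omega

lemma isUnit_two (hp2 : p ≠ 2) : IsUnit (2 : ModCube p) := by
  exact_mod_cast isUnit_natCast_of_lt two_pos (two_lt_of_ne_two hp2)

lemma isUnit_three (hp3 : 3 < p) : IsUnit (3 : ModCube p) := by
  exact_mod_cast isUnit_natCast_of_lt three_pos hp3

lemma two_mul_inv_two (hp2 : p ≠ 2) : 2 * (2 : ModCube p)⁻¹ = 1 :=
  ZMod.mul_inv_of_unit _ (isUnit_two hp2)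

lemma isUnit_inv_two (hp2 : p ≠ 2) : IsUnit (2⁻¹ : ModCube p) :=
  IsUnit.of_mul_eq_one_right _ (two_mul_inv_two hp2)

lemma p_eq_two_mul_add_one (hp2 : p ≠ 2) :
    (p : ModCube p) = 2 * (((p - 1) / 2 : ℕ) : ModCube p) + 1 := by
  exact_mod_cast congrArg (Nat.cast : ℕ → ModCube p) (two_mul_div_two_add_one hp2).symm

lemma eq_of_sq_eq_sq (hp2 : p ≠ 2) {a b : ModCube p} (ha : IsUnit a) (h : a ^ 2 = b ^ 2)
    (hab : (p : ModCube p) ∣ a - b) : a = b := by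
  obtain ⟨y, hy⟩ := hab
  have hsum : IsUnit (a + b) := by
    rw [show a + b = 2 * a + p * (-y) by linear_combination -hy, isUnit_add_p_mul]
    exact (isUnit_two hp2).mul ha
  exact sub_eq_zero.1 (hsum.mul_right_eq_zero.1 (by linear_combination h))

lemma sum_range_add_mul_of_periodic {M : Type*} [AddCommMonoid M] {φ : ModCube p → M}
    (hφ : ∀ z y, φ (z + p * y) = φ z) (x : ModCube p) {u : ModCube p} (hu : IsUnit u) :
    ∑ i ∈ Finset.range p, φ (x + u * i) = ∑ i ∈ Finset.range p, φ i := by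
  have hφ_residue : ∀ z w, residue p z = residue p w → φ z = φ w := fun z w h => by
    obtain ⟨y, hy⟩ := residue_eq_zero_iff.1 ((map_sub _ _ _).trans (sub_eq_zero.2 h))
    rw [← hφ w y, ← hy, add_sub_cancel]
  have hsum : ∀ f : ZMod p → M, ∑ i ∈ Finset.range p, f i = ∑ r, f r := fun f =>
    Finset.sum_bij' (fun i _ => (i : ZMod p)) (fun r _ => r.val) (by simp)
      (fun r _ => by simpa using r.val_lt)
      (fun i hi => ZMod.val_cast_of_lt (Finset.mem_range.1 hi)) (by simp) (by simp)
  let e : ZMod p ≃ ZMod p :=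
    (Equiv.mulLeft₀ _ (isUnit_iff_residue_ne_zero.1 hu)).trans (Equiv.addLeft (residue p x))
  calc ∑ i ∈ Finset.range p, φ (x + u * i)
      = ∑ i ∈ Finset.range p, φ ((e i).val : ModCube p) :=
        Finset.sum_congr rfl fun i _ => hφ_residue _ _ (by simp [e])
    _ = ∑ r : ZMod p, φ (r.val : ModCube p) :=
        (hsum fun r => φ ((e r).val : ModCube p)).trans
          (Equiv.sum_comp e fun r => φ (r.val : ModCube p))
    _ = ∑ i ∈ Finset.range p, φ ((i : ZMod p).val : ModCube p) :=
        (hsum fun r => φ (r.val : ModCube p)).symm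
    _ = ∑ i ∈ Finset.range p, φ i :=
        Finset.sum_congr rfl fun i _ => hφ_residue _ _ (by simp)

lemma prod_range_add_mul_of_periodic {M : Type*} [CommMonoid M] {φ : ModCube p → M}
    (hφ : ∀ z y, φ (z + p * y) = φ z) (x : ModCube p) {u : ModCube p} (hu : IsUnit u) :
    ∏ i ∈ Finset.range p, φ (x + u * i) = ∏ i ∈ Finset.range p, φ i :=
  sum_range_add_mul_of_periodic (M := Additive M) hφ x hu

end Basics

section InverseSums

variable {p : ℕ} [hp : Fact p.Prime]

lemma p_sq_mul_inverse_add (z y : ModCube p) :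
    (p : ModCube p) ^ 2 * Ring.inverse (z + p * y) = p ^ 2 * Ring.inverse z := by
  by_cases hz : IsUnit z
  · have hzy := Ring.mul_inverse_cancel _ ((isUnit_add_p_mul y).2 hz)
    linear_combination p ^ 2 * Ring.inverse z * hzy
      - p ^ 2 * Ring.inverse (z + p * y) * Ring.mul_inverse_cancel _ hz
      - Ring.inverse (z + p * y) * Ring.inverse z * y * p_pow_three (p := p)
  · rw [Ring.inverse_non_unit _ hz, Ring.inverse_non_unit _ ((isUnit_add_p_mul y).not.2 hz)]

lemma two_mul_inverse_two_mul (hp2 : p ≠ 2) (z : ModCube p) :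
    2 * Ring.inverse (2 * z) = Ring.inverse z := by
  rw [Ring.mul_inverse_rev, mul_left_comm, Ring.mul_inverse_cancel _ (isUnit_two hp2), mul_one]

lemma p_sq_mul_sum_inverse (hp2 : p ≠ 2) (x : ModCube p) :
    (p : ModCube p) ^ 2 * ∑ i ∈ Finset.range p, Ring.inverse (x + i) = 0 := by
  have hperm := fun x u (hu : IsUnit u) => sum_range_add_mul_of_periodic
    (φ := fun z : ModCube p => p ^ 2 * Ring.inverse z) p_sq_mul_inverse_add x hu
  have hone := hperm x 1 isUnit_one
  have htwo := hperm 0 2 (isUnit_two hp2)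
  simp only [one_mul, zero_add, ← Finset.mul_sum] at hone htwo
  have hhalf : 2 * ∑ i ∈ Finset.range p, Ring.inverse (2 * i : ModCube p) =
      ∑ i ∈ Finset.range p, Ring.inverse (i : ModCube p) := by
    simp only [Finset.mul_sum, two_mul_inverse_two_mul hp2]
  linear_combination hone - 2 * htwo + p ^ 2 * hhalf

lemma p_sq_mul_sum_inverse_sq (hp3 : 3 < p) (x : ModCube p) :
    (p : ModCube p) ^ 2 * ∑ i ∈ Finset.range p, Ring.inverse (x + i) ^ 2 = 0 := by
  have hp2 : p ≠ 2 := by omega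
  have hperm := fun x u (hu : IsUnit u) => sum_range_add_mul_of_periodic
    (φ := fun z : ModCube p => p ^ 2 * Ring.inverse z ^ 2)
    (fun z y => by
      linear_combination
        (Ring.inverse (z + p * y) + Ring.inverse z) * p_sq_mul_inverse_add z y) x hu
  have hone := hperm x 1 isUnit_one
  have htwo := hperm 0 2 (isUnit_two hp2)
  simp only [one_mul, zero_add, ← Finset.mul_sum] at hone htwo
  have hquarter : 4 * ∑ i ∈ Finset.range p, Ring.inverse (2 * i : ModCube p) ^ 2 =
      ∑ i ∈ Finset.range p, Ring.inverse (i : ModCube p) ^ 2 := by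
    rw [Finset.mul_sum]
    refine Finset.sum_congr rfl fun i _ => ?_
    rw [← two_mul_inverse_two_mul hp2 (i : ModCube p)]
    ring
  apply (isUnit_three hp3).mul_right_eq_zero.1
  linear_combination 3 * hone - 4 * htwo + p ^ 2 * hquarter

end InverseSums

section Gamma

lemma two_mul_prod_one_add_mul {R ι : Type*} [CommRing R] {q : R} (hq : q ^ 3 = 0)
    (s : Finset ι) (r : ι → R) :
    2 * ∏ i ∈ s, (1 + q * r i) =
      2 + 2 * q * ∑ i ∈ s, r i + q ^ 2 * ((∑ i ∈ s, r i) ^ 2 - ∑ i ∈ s, r i ^ 2) := by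
  classical
  induction s using Finset.induction_on with
  | empty => simp
  | insert i s hi ih =>
    rw [Finset.prod_insert hi, Finset.sum_insert hi, Finset.sum_insert hi]
    linear_combination (1 + q * r i) * ih + r i * ((∑ i ∈ s, r i) ^ 2 - ∑ i ∈ s, r i ^ 2) * hq

open scoped Classical in
/-- The factor `Γ(z + 1) / Γ(z)` of the Morita gamma function: `-z` if `z` is a unit and `-1`
otherwise. -/
noncomputable def gammaFactor (p : ℕ) (z : ModCube p) : ModCube p := if IsUnit z then -z else -1

/-- The Morita gamma function modulo `p ^ 3` at a natural number. -/
noncomputable def gammaNat (p n : ℕ) : ModCube p := ∏ i ∈ Finset.range n, gammaFactor p i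

/-- The Morita gamma function modulo `p ^ 3`. -/
noncomputable def gamma (p : ℕ) (x : ModCube p) : ModCube p := gammaNat p x.val

/-- The quotient `Γ(x + p) / Γ(x)`. -/
noncomputable def gammaBlock (p : ℕ) (x : ModCube p) : ModCube p :=
  ∏ i ∈ Finset.range p, gammaFactor p (x + i)

/-- The reflection product `Γ(x) Γ(1 - x)`. -/
noncomputable def reflection (p : ℕ) (x : ModCube p) : ModCube p := gamma p x * gamma p (1 - x)

section

variable {p : ℕ}

lemma gammaFactor_of_isUnit {z : ModCube p} (hz : IsUnit z) : gammaFactor p z = -z := if_pos hz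

lemma gammaFactor_of_not_isUnit {z : ModCube p} (hz : ¬IsUnit z) : gammaFactor p z = -1 := if_neg hz

lemma isUnit_gammaFactor (z : ModCube p) : IsUnit (gammaFactor p z) := by
  by_cases hz : IsUnit z
  · rw [gammaFactor_of_isUnit hz]
    exact hz.neg
  · rw [gammaFactor_of_not_isUnit hz]
    exact isUnit_neg_one

lemma gammaFactor_mul_isUnit {d : ModCube p} (hd : IsUnit d) (z : ModCube p)
    [Decidable (IsUnit z)] :
    gammaFactor p (z * d) = (if IsUnit z then d else 1) * gammaFactor p z := by
  by_cases hz : IsUnit z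
  · rw [gammaFactor_of_isUnit (hz.mul hd), gammaFactor_of_isUnit hz, if_pos hz]
    ring
  · rw [gammaFactor_of_not_isUnit (hd.mul_right_iff.not.2 hz), gammaFactor_of_not_isUnit hz,
      if_neg hz, one_mul]

lemma gammaFactor_neg (z : ModCube p) [Decidable (IsUnit z)] :
    gammaFactor p (-z) = (if IsUnit z then -1 else 1) * gammaFactor p z := by
  rw [← mul_neg_one, gammaFactor_mul_isUnit isUnit_neg_one]

lemma gammaNat_succ (n : ℕ) :
    gammaNat p (n + 1) = gammaFactor p n * gammaNat p n := by
  rw [gammaNat, Finset.prod_range_succ, mul_comm, gammaNat]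

lemma gammaNat_add_p (n : ℕ) :
    gammaNat p (n + p) = gammaNat p n * gammaBlock p n := by
  simp only [gammaNat, gammaBlock, Finset.prod_range_add, Nat.cast_add]

lemma gamma_zero : gamma p 0 = 1 := by simp [gamma, gammaNat]

lemma isUnit_gamma (x : ModCube p) : IsUnit (gamma p x) := by
  rw [gamma, gammaNat, IsUnit.prod_iff]
  exact fun _ _ => isUnit_gammaFactor _

end

variable {p : ℕ} [hp : Fact p.Prime]

lemma gammaFactor_add (z y : ModCube p) :
    gammaFactor p (z + p * y) = gammaFactor p z * (1 + p * (y * Ring.inverse z)) := by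
  by_cases hz : IsUnit z
  · rw [gammaFactor_of_isUnit hz, gammaFactor_of_isUnit ((isUnit_add_p_mul y).2 hz)]
    linear_combination p * y * Ring.mul_inverse_cancel _ hz
  · rw [gammaFactor_of_not_isUnit hz, gammaFactor_of_not_isUnit ((isUnit_add_p_mul y).not.2 hz),
      Ring.inverse_non_unit _ hz]
    ring

lemma gammaBlock_add (hp3 : 3 < p) (x : ModCube p) :
    ∃ c, ∀ y, gammaBlock p (x + p * y) = gammaBlock p x * (1 + p ^ 2 * c * y) := by
  have hp2 : p ≠ 2 := by omega
  obtain ⟨c, hc⟩ := p_dvd_of_p_sq_mul_eq_zero (p_sq_mul_sum_inverse hp2 x)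
  refine ⟨c, fun y => ?_⟩
  have hprod := two_mul_prod_one_add_mul (p_pow_three (p := p)) (Finset.range p)
    fun i => y * Ring.inverse (x + i)
  simp only [mul_pow, ← Finset.mul_sum, hc] at hprod
  have hfactor : ∏ i ∈ Finset.range p, (1 + p * (y * Ring.inverse (x + i))) =
      1 + p ^ 2 * c * y := by
    apply (isUnit_two hp2).mul_left_cancel
    linear_combination hprod - y ^ 2 * p_sq_mul_sum_inverse_sq hp3 x
      + p * y ^ 2 * c ^ 2 * p_pow_three (p := p)
  rw [← hfactor, gammaBlock, gammaBlock, ← Finset.prod_mul_distrib]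
  exact Finset.prod_congr rfl fun i _ => by rw [← gammaFactor_add, add_right_comm]

lemma residue_gammaBlock (hp2 : p ≠ 2) (x : ModCube p) : residue p (gammaBlock p x) = 1 := by
  have hshift := prod_range_add_mul_of_periodic
    (φ := fun z : ModCube p => residue p (gammaFactor p z))
    (fun z y => by simp [gammaFactor_add]) x isUnit_one
  have hfactor : ∀ i ∈ Finset.range (p - 1),
      residue p (gammaFactor p ((i + 1 : ℕ) : ModCube p)) = -((i + 1 : ℕ) : ZMod p) := by
    intro i hi
    have hi' := Finset.mem_range.1 hi
    rw [gammaFactor_of_isUnit (isUnit_natCast_of_lt i.succ_pos (by omega)), map_neg, map_natCast]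
  have hsign : (-1 : ZMod p) ^ (p - 1) = 1 :=
    (hp.out.even_sub_one hp2).neg_one_pow
  have hrange : ∏ i ∈ Finset.range p, residue p (gammaFactor p i) = 1 := by
    rw [show Finset.range p = Finset.range (p - 1 + 1) by rw [Nat.sub_add_cancel hp.out.one_le],
      Finset.prod_range_succ', Finset.prod_congr rfl hfactor, Finset.prod_neg, Finset.card_range,
      ← Nat.cast_prod, Finset.prod_range_add_one_eq_factorial, ZMod.wilsons_lemma, hsign,
      Nat.cast_zero, gammaFactor_of_not_isUnit (by simpa using not_isUnit_p_mul (p := p) 0)]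
    simp
  simpa [gammaBlock, hrange] using hshift

lemma gammaNat_add_p_mul (hp3 : 3 < p) (x : ℕ) : ∃ d e : ModCube p, ∀ n : ℕ,
    gammaNat p (x + p * n) = gammaNat p x * (1 + p * d * n + p ^ 2 * e * (n * (n - 1))) := by
  have hp2 : p ≠ 2 := by omega
  obtain ⟨c, hc⟩ := gammaBlock_add hp3 (x : ModCube p)
  obtain ⟨d, hd⟩ : (p : ModCube p) ∣ gammaBlock p x - 1 := by
    rw [← residue_eq_zero_iff, map_sub, map_one, residue_gammaBlock hp2, sub_self]
  refine ⟨d, 2⁻¹ * (d ^ 2 + c), fun n => ?_⟩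
  induction n with
  | zero => simp
  | succ n ih =>
    rw [show x + p * (n + 1) = x + p * n + p by ring, gammaNat_add_p, ih]
    push_cast
    rw [hc, sub_eq_iff_eq_add'.1 hd]
    generalize (n : ModCube p) = n
    linear_combination
      gammaNat p x * (d * n * c * n + d * n * p * d * c * n + d * c * n
        + 2⁻¹ * (d ^ 2 + c) * (n * (n - 1)) * (d + p * c * n + p ^ 2 * d * c * n))
          * p_pow_three (p := p)
        - gammaNat p x * p ^ 2 * (d ^ 2 + c) * n * two_mul_inv_two hp2

lemma gammaNat_add_p_pow_three (hp3 : 3 < p) : Function.Periodic (gammaNat p) (p ^ 3) := by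
  intro x
  obtain ⟨d, e, h⟩ := gammaNat_add_p_mul hp3 x
  rw [show x + p ^ 3 = x + p * p ^ 2 by ring, h]
  push_cast
  linear_combination gammaNat p x * (d + p * e * (p ^ 2 - 1)) * p_pow_three (p := p)

lemma gamma_natCast (hp3 : 3 < p) (n : ℕ) : gamma p n = gammaNat p n := by
  rw [gamma, ZMod.val_natCast, (gammaNat_add_p_pow_three hp3).map_mod_nat]

lemma gamma_add_one (hp3 : 3 < p) (x : ModCube p) :
    gamma p (x + 1) = gammaFactor p x * gamma p x := by
  obtain ⟨n, rfl⟩ := exists_natCast_eq x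
  rw [gamma_natCast hp3, ← Nat.cast_succ, gamma_natCast hp3, gammaNat_succ]

lemma gamma_add_p_mul (hp3 : 3 < p) (x : ModCube p) : ∃ a b, ∀ y,
    gamma p (x + p * y) = gamma p x * (1 + p * a * y + p ^ 2 * b * y ^ 2) := by
  obtain ⟨n, rfl⟩ := exists_natCast_eq x
  obtain ⟨d, e, h⟩ := gammaNat_add_p_mul hp3 n
  refine ⟨d - p * e, e, fun y => ?_⟩
  obtain ⟨k, rfl⟩ := exists_natCast_eq y
  rw [← Nat.cast_mul, ← Nat.cast_add, gamma_natCast hp3, gamma_natCast hp3, h]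
  ring

lemma reflection_zero (hp3 : 3 < p) : reflection p 0 = -1 := by
  have hone := gamma_add_one hp3 0
  rw [zero_add, gammaFactor_of_not_isUnit (by simpa using not_isUnit_p_mul (p := p) 0)] at hone
  rw [reflection, sub_zero, hone, gamma_zero]
  ring

lemma reflection_add_one (hp3 : 3 < p) (x : ModCube p) [Decidable (IsUnit x)] :
    reflection p (x + 1) = (if IsUnit x then -1 else 1) * reflection p x := by
  have hneg := gamma_add_one hp3 (-x)
  rw [neg_add_eq_sub, gammaFactor_neg] at hneg
  rw [reflection, reflection, gamma_add_one hp3, show 1 - (x + 1) = -x by ring, hneg]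
  split_ifs <;> ring

lemma reflection_sq (hp3 : 3 < p) (x : ModCube p) : reflection p x ^ 2 = 1 := by
  classical
  obtain ⟨n, rfl⟩ := exists_natCast_eq x
  induction n with
  | zero => simp [reflection_zero hp3]
  | succ n ih =>
    rw [Nat.cast_succ, reflection_add_one hp3, mul_pow, ih]
    split_ifs <;> ring

lemma reflection_add_p_mul (hp3 : 3 < p) (x y : ModCube p) :
    reflection p (x + p * y) = reflection p x := by
  obtain ⟨a, b, h⟩ := gamma_add_p_mul hp3 x
  obtain ⟨a', b', h'⟩ := gamma_add_p_mul hp3 (1 - x)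
  refine eq_of_sq_eq_sq (by omega) ((isUnit_gamma _).mul (isUnit_gamma _))
    ((reflection_sq hp3 _).trans (reflection_sq hp3 _).symm) (residue_eq_zero_iff.1 ?_)
  rw [reflection, reflection, show 1 - (x + p * y) = 1 - x + p * (-y) by ring, h, h']
  simp

lemma reflection_natCast_add_one (hp3 : 3 < p) {n : ℕ} (hn : n < p) :
    reflection p ((n + 1 : ℕ) : ModCube p) = (-1) ^ (n + 1) := by
  classical
  induction n with
  | zero =>
    rw [Nat.cast_succ, reflection_add_one hp3, if_neg (by simpa using not_isUnit_p_mul (p := p) 0)]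
    simp [reflection_zero hp3]
  | succ n ih =>
    rw [Nat.cast_succ, reflection_add_one hp3, if_pos (isUnit_natCast_of_lt n.succ_pos hn),
      ih (Nat.lt_of_succ_lt hn), pow_succ' _ (n + 1)]

lemma count_not_dvd {k r : ℕ} (hr : r < p) :
    Nat.count (¬p ∣ ·) (p * k + (r + 1)) = k * (p - 1) + r := by
  have hblock : ∀ k r, r < p →
      Nat.count (¬p ∣ ·) (p * k + (r + 1)) = Nat.count (¬p ∣ ·) (p * k) + r := by
    intro k r hr
    induction r with
    | zero => simp [Nat.count_succ]
    | succ r ih =>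
      rw [← add_assoc, Nat.count_succ, ih (by omega), if_pos, add_assoc]
      rw [Nat.dvd_add_right (dvd_mul_right _ _)]
      exact Nat.not_dvd_of_pos_of_lt r.succ_pos hr
  rw [hblock k r hr]
  congr 1
  induction k with
  | zero => simp
  | succ k ih =>
    have hlast := hblock k (p - 1) (Nat.sub_lt hp.out.pos one_pos)
    rw [Nat.sub_add_cancel hp.out.one_le, ih] at hlast
    rw [mul_add_one, hlast, add_one_mul]

lemma prod_gamma_mul_add_mul (hp3 : 3 < p) {m : ℕ} {d : ModCube p} (hd : m * d = 1) (N : ℕ) :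
    ∏ j ∈ Finset.range m, gamma p (N * d + j * d) =
      (∏ j ∈ Finset.range m, gamma p (j * d)) * gamma p N *
        d ^ Nat.count (¬p ∣ ·) N := by
  classical
  induction N with
  | zero => simp [gamma_zero]
  | succ N ih =>
    apply (isUnit_gamma (p := p) (N * d)).mul_left_cancel
    have hshift : gamma p (N * d) *
        ∏ j ∈ Finset.range m, gamma p ((N + 1 : ℕ) * d + j * d : ModCube p) =
        (∏ j ∈ Finset.range m, gamma p (N * d + j * d)) *
          (gammaFactor p (N * d) * gamma p (N * d)) := by
      rw [← gamma_add_one hp3, ← hd, ← Finset.prod_range_succ, Finset.prod_range_succ']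
      push_cast
      rw [zero_mul, add_zero, mul_comm]
      congr 1
      exact Finset.prod_congr rfl fun j _ => by ring_nf
    rw [hshift, ih, gammaFactor_mul_isUnit (IsUnit.of_mul_eq_one_right _ hd), Nat.cast_succ,
      gamma_add_one hp3, Nat.count_succ, pow_add]
    simp only [isUnit_natCast_iff]
    split_ifs <;> ring

end Gamma

section Hypergeometric

/-- The term `(1/2)_k (b)_k (c)_k / k!^3` of the hypergeometric series `₃F₂(1/2, b, c; 1, 1; 1)`. -/
noncomputable def hyperTerm (p : ℕ) (b c : ModCube p) (k : ℕ) : ModCube p :=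
  ∏ i ∈ Finset.range k, ((i + 2⁻¹) * (i + b) * (i + c) * (i + 1 : ModCube p)⁻¹ ^ 3)

/-- The truncated series `∑_{k < p} k ^ j (1/2)_k (-a)_k (1 + a)_k / k!^3`. -/
noncomputable def hyperSum (p j : ℕ) (a : ModCube p) : ModCube p :=
  ∑ k ∈ Finset.range p, (k : ModCube p) ^ j * hyperTerm p (-a) (1 + a) k

section

variable {p : ℕ}

lemma hyperTerm_zero (b c : ModCube p) : hyperTerm p b c 0 = 1 := Finset.prod_range_zero _

lemma hyperTerm_succ (b c : ModCube p) (k : ℕ) : hyperTerm p b c (k + 1) =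
    hyperTerm p b c k * ((k + 2⁻¹) * (k + b) * (k + c) * (k + 1 : ModCube p)⁻¹ ^ 3) :=
  Finset.prod_range_succ _ _

lemma hyperTerm_comm (b c : ModCube p) (k : ℕ) : hyperTerm p b c k = hyperTerm p c b k :=
  Finset.prod_congr rfl fun i _ => by ring

lemma hyperTerm_eq_mul_prod (b c : ModCube p) (k : ℕ) : hyperTerm p b c k =
    (∏ i ∈ Finset.range k, ((i : ModCube p) + 2⁻¹)) * (∏ i ∈ Finset.range k, (i + b)) *
      (∏ i ∈ Finset.range k, (i + c)) * ∏ i ∈ Finset.range k, (i + 1 : ModCube p)⁻¹ ^ 3 := by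
  simp only [hyperTerm, Finset.prod_mul_distrib]

lemma mul_hyperTerm_add_one (b c : ModCube p) (k : ℕ) :
    b * hyperTerm p (b + 1) c k = hyperTerm p b c k * (k + b) := by
  induction k with
  | zero => simp [hyperTerm_zero]
  | succ k ih =>
    rw [hyperTerm_succ, hyperTerm_succ, ← mul_assoc, ih]
    push_cast
    ring

lemma hyperTerm_succ_left (b c : ModCube p) (k : ℕ) : hyperTerm p b c (k + 1) =
    b * hyperTerm p (b + 1) c k * ((k + 2⁻¹) * (k + c) * (k + 1 : ModCube p)⁻¹ ^ 3) := by
  rw [hyperTerm_succ, mul_hyperTerm_add_one]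
  ring

lemma hyperSum_neg_one_sub (j : ℕ) (a : ModCube p) : hyperSum p j (-1 - a) = hyperSum p j a := by
  refine Finset.sum_congr rfl fun k _ => ?_
  rw [hyperTerm_comm, show 1 + (-1 - a) = -a by ring, show -(-1 - a) = 1 + a by ring]

end

variable {p : ℕ} [hp : Fact p.Prime]

lemma p_dvd_prod_add (x : ModCube p) : (p : ModCube p) ∣ ∏ i ∈ Finset.range p, (i + x) := by
  rw [← residue_eq_zero_iff, map_prod, Finset.prod_eq_zero_iff]
  refine ⟨(-residue p x).val, by simpa using ZMod.val_lt _, by simp⟩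

lemma succ_pow_three_mul_hyperTerm_succ (b c : ModCube p) {k : ℕ} (hk : k + 1 < p) :
    (k + 1 : ModCube p) ^ 3 * hyperTerm p b c (k + 1) =
      hyperTerm p b c k * ((k + 2⁻¹) * (k + b) * (k + c)) := by
  have hinv := natCast_mul_inv_of_lt k.succ_pos hk
  push_cast at hinv
  rw [hyperTerm_succ]
  calc _ = hyperTerm p b c k * ((k + 2⁻¹) * (k + b) * (k + c)) *
        ((k + 1) * (k + 1 : ModCube p)⁻¹) ^ 3 := by ring
    _ = _ := by rw [hinv, one_pow, mul_one]

lemma hyperTerm_p_sub_one_mul (b c : ModCube p) :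
    hyperTerm p b c (p - 1) *
      (((p - 1 : ℕ) + 2⁻¹) * ((p - 1 : ℕ) + b) * ((p - 1 : ℕ) + c)) = 0 := by
  have hdvd : ∀ x : ModCube p,
      (p : ModCube p) ∣ (∏ i ∈ Finset.range (p - 1), (i + x)) * ((p - 1 : ℕ) + x) := fun x => by
    rw [← Finset.prod_range_succ fun i : ℕ => (i : ModCube p) + x,
      Nat.sub_add_cancel hp.out.one_le]
    exact p_dvd_prod_add x
  obtain ⟨x, hx⟩ := hdvd 2⁻¹
  obtain ⟨y, hy⟩ := hdvd b
  obtain ⟨z, hz⟩ := hdvd c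
  rw [hyperTerm_eq_mul_prod]
  calc _ = (∏ i ∈ Finset.range (p - 1), ((i : ModCube p) + 2⁻¹)) * ((p - 1 : ℕ) + 2⁻¹) *
        ((∏ i ∈ Finset.range (p - 1), (i + b)) * ((p - 1 : ℕ) + b)) *
        ((∏ i ∈ Finset.range (p - 1), (i + c)) * ((p - 1 : ℕ) + c)) *
        ∏ i ∈ Finset.range (p - 1), (i + 1 : ModCube p)⁻¹ ^ 3 := by ring
    _ = 0 := by
      rw [hx, hy, hz]
      linear_combination
        x * y * z * (∏ i ∈ Finset.range (p - 1), (i + 1 : ModCube p)⁻¹ ^ 3) * p_pow_three (p := p)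

lemma sum_hyperTerm_telescope (b c : ModCube p) (P : ℕ → ModCube p) :
    ∑ k ∈ Finset.range p,
      hyperTerm p b c k * (P (k + 1) * ((k + 2⁻¹) * (k + b) * (k + c)) - P k * k ^ 3) = 0 := by
  have hpartial : ∀ n < p, ∑ k ∈ Finset.range (n + 1),
      hyperTerm p b c k * (P (k + 1) * ((k + 2⁻¹) * (k + b) * (k + c)) - P k * k ^ 3) =
        P (n + 1) * (hyperTerm p b c n * ((n + 2⁻¹) * (n + b) * (n + c))) := by
    intro n hn
    induction n with
    | zero => simp; ring
    | succ n ih =>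
      rw [Finset.sum_range_succ, ih (by omega)]
      push_cast
      linear_combination -P (n + 1) * succ_pow_three_mul_hyperTerm_succ b c hn
  have hlast := hpartial (p - 1) (Nat.sub_lt hp.out.pos one_pos)
  rwa [Nat.sub_add_cancel hp.out.one_le, hyperTerm_p_sub_one_mul, mul_zero] at hlast

lemma three_mul_hyperSum_two (hp2 : p ≠ 2) (a : ModCube p) :
    3 * hyperSum p 2 a =
      -(1 - 2 * (a * (a + 1))) * hyperSum p 1 a + a * (a + 1) * hyperSum p 0 a := by
  have htel := congrArg (2 * ·) (sum_hyperTerm_telescope (-a) (1 + a) fun _ => 1)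
  simp only [Finset.mul_sum, mul_zero] at htel
  rw [← sub_eq_zero, ← htel]
  simp only [hyperSum, Finset.mul_sum, ← Finset.sum_add_distrib, ← Finset.sum_sub_distrib]
  refine Finset.sum_congr rfl fun k _ => ?_
  linear_combination
    -(hyperTerm p (-a) (1 + a) k * (k - a) * (k + 1 + a)) * two_mul_inv_two hp2

lemma five_mul_hyperSum_three (hp2 : p ≠ 2) (a : ModCube p) :
    5 * hyperSum p 3 a = -(4 - 2 * (a * (a + 1))) * hyperSum p 2 a -
      (1 - 3 * (a * (a + 1))) * hyperSum p 1 a + a * (a + 1) * hyperSum p 0 a := by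
  have htel := congrArg (2 * ·) (sum_hyperTerm_telescope (-a) (1 + a) fun k => k)
  simp only [Finset.mul_sum, mul_zero] at htel
  rw [← sub_eq_zero, ← htel]
  simp only [hyperSum, Finset.mul_sum, ← Finset.sum_add_distrib, ← Finset.sum_sub_distrib]
  refine Finset.sum_congr rfl fun k _ => ?_
  push_cast
  linear_combination
    -(hyperTerm p (-a) (1 + a) k * (k - a) * (k + 1 + a) * (k + 1)) * two_mul_inv_two hp2

lemma sum_range_succ_contiguous (hp2 : p ≠ 2) (a : ModCube p) {n : ℕ} (hn : n < p) :
    ∑ k ∈ Finset.range (n + 1), ((k - a * (a + 1)) * hyperTerm p (-a) (1 + a) k +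
      a ^ 2 * hyperTerm p (1 - a) a k) = -2 * a * (n + 2⁻¹) * hyperTerm p (1 - a) (1 + a) n := by
  induction n with
  | zero =>
    simp only [zero_add, Finset.sum_range_one, hyperTerm_zero, Nat.cast_zero]
    linear_combination a * two_mul_inv_two hp2
  | succ n ih =>
    have hinv := natCast_mul_inv_of_lt n.succ_pos hn
    push_cast at hinv
    have hcube : (n + 1 : ModCube p) ^ 3 * (n + 1 : ModCube p)⁻¹ ^ 3 = 1 := by
      rw [← mul_pow, hinv, one_pow]
    rw [Finset.sum_range_succ, ih (by omega), hyperTerm_succ_left (-a), hyperTerm_comm (1 - a) a,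
      hyperTerm_succ_left a, hyperTerm_succ (1 - a) (1 + a), add_comm a 1,
      hyperTerm_comm (1 + a) (1 - a), neg_add_eq_sub]
    push_cast
    linear_combination 2 * a * (n + 2⁻¹) * hyperTerm p (1 - a) (1 + a) n * hcube
      + a * hyperTerm p (1 - a) (1 + a) n * (n + 1 : ModCube p)⁻¹ ^ 3 * (n + 2⁻¹)
        * ((n + 1) ^ 2 - a ^ 2) * two_mul_inv_two hp2

lemma hyperSum_one (hp2 : p ≠ 2) {a : ModCube p} (ha : IsUnit a) :
    hyperSum p 1 a = a * (a + 1) * hyperSum p 0 a - a ^ 2 * hyperSum p 0 (a - 1) := by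
  have hsum := sum_range_succ_contiguous hp2 a (Nat.sub_lt hp.out.pos one_pos)
  rw [Nat.sub_add_cancel hp.out.one_le] at hsum
  have hleft := mul_hyperTerm_add_one (-a) (1 + a) (p - 1)
  have hright := mul_hyperTerm_add_one a (-a) (p - 1)
  rw [neg_add_eq_sub] at hleft
  rw [add_comm a 1, hyperTerm_comm (1 + a), hyperTerm_comm a] at hright
  have hlast := hyperTerm_p_sub_one_mul (-a) a
  have hexpand : hyperSum p 1 a - (a * (a + 1) * hyperSum p 0 a - a ^ 2 * hyperSum p 0 (a - 1)) =
      ∑ k ∈ Finset.range p, ((k - a * (a + 1)) * hyperTerm p (-a) (1 + a) k +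
        a ^ 2 * hyperTerm p (1 - a) a k) := by
    simp only [hyperSum, Finset.mul_sum, ← Finset.sum_sub_distrib, neg_sub, add_sub_cancel]
    exact Finset.sum_congr rfl fun k _ => by ring
  refine sub_eq_zero.1 (ha.mul_right_eq_zero.1 ?_)
  rw [hexpand, hsum]
  generalize ((p - 1 : ℕ) : ModCube p) = m at *
  linear_combination 2 * hlast + 2 * (m + 2⁻¹) * a * hleft + 2 * (m + 2⁻¹) * (m - a) * hright

lemma sum_range_add_two_recurrence (hp2 : p ≠ 2) (a : ModCube p) {n : ℕ} (hn : n + 1 < p) :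
    ∑ k ∈ Finset.range (n + 2), ((a + 1) ^ 2 * hyperTerm p (-1 - a) (2 + a) k -
        a ^ 2 * hyperTerm p (1 - a) a k) =
      -2 * (2 * a + 1) * (a * (a + 1)) * ((n + 2⁻¹) * (n + 1 + 2⁻¹)) *
        hyperTerm p (1 - a) (2 + a) n * (n + 1 : ModCube p)⁻¹ ^ 3 := by
  induction n with
  | zero =>
    simp only [zero_add, Finset.sum_range_succ, Finset.sum_range_zero, hyperTerm_succ,
      hyperTerm_zero, Nat.cast_zero]
    have hone : (1 : ModCube p)⁻¹ = 1 := by simp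
    rw [hone]
    linear_combination (a * (a + 1) * (2 * a + 1) * 2⁻¹ - (2 * a + 1)) * two_mul_inv_two hp2
  | succ n ih =>
    have hinv := natCast_mul_inv_of_lt (n + 1).succ_pos hn
    push_cast at hinv
    have hcube : (n + 1 + 1 : ModCube p) ^ 3 * (n + 1 + 1 : ModCube p)⁻¹ ^ 3 = 1 := by
      rw [← mul_pow, hinv, one_pow]
    rw [Finset.sum_range_succ, ih (by omega), hyperTerm_succ_left (-1 - a),
      hyperTerm_succ_left (-1 - a + 1), hyperTerm_comm (1 - a) a,
      hyperTerm_succ_left a, hyperTerm_succ_left (a + 1), hyperTerm_succ (1 - a) (2 + a),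
      show -1 - a + 1 + 1 = 1 - a by ring, show a + 1 + 1 = 2 + a by ring,
      hyperTerm_comm (2 + a) (1 - a)]
    push_cast
    linear_combination 2 * (2 * a + 1) * (a * (a + 1)) * (n + 2⁻¹) * (n + 1 + 2⁻¹) *
      hyperTerm p (1 - a) (2 + a) n * (n + 1 : ModCube p)⁻¹ ^ 3 * hcube +
      (2 * a + 1) * (a * (a + 1)) * (n + 2⁻¹) * (n + 1 + 2⁻¹) * hyperTerm p (1 - a) (2 + a) n *
      (n + 1 : ModCube p)⁻¹ ^ 3 * (n + 1 + 1 : ModCube p)⁻¹ ^ 3 * (n + 1 - a) * (n + 2 + a) *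
      two_mul_inv_two hp2

lemma exists_hyperSum_recurrence (hp2 : p ≠ 2) : ∃ C : ModCube p, ∀ a,
    (a + 1) ^ 2 * hyperSum p 0 (a + 1) - a ^ 2 * hyperSum p 0 (a - 1) =
      p * (C * (a * (a + 1) * (2 * a + 1)) *
        ((∏ i ∈ Finset.range (p - 2), (i + (1 - a))) *
          ∏ i ∈ Finset.range (p - 2), (i + (2 + a)))) := by
  have hrange : Finset.range p = Finset.range (p - 2 + 1 + 1) := by
    have := hp.out.two_le
    congr 1
    omega
  obtain ⟨y, hy⟩ := p_dvd_prod_add (2⁻¹ : ModCube p)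
  rw [hrange, Finset.prod_range_succ, Finset.prod_range_succ] at hy
  refine ⟨-2 * y * (∏ i ∈ Finset.range (p - 2), (i + 1 : ModCube p)⁻¹ ^ 3) *
    ((p - 2 : ℕ) + 1 : ModCube p)⁻¹ ^ 3, fun a => ?_⟩
  have hp := two_lt_of_ne_two hp2
  have hsum := sum_range_add_two_recurrence hp2 a (n := p - 2) (by omega)
  rw [hyperTerm_eq_mul_prod] at hsum
  have hexpand : (a + 1) ^ 2 * hyperSum p 0 (a + 1) - a ^ 2 * hyperSum p 0 (a - 1) =
      ∑ k ∈ Finset.range (p - 2 + 2), ((a + 1) ^ 2 * hyperTerm p (-1 - a) (2 + a) k -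
        a ^ 2 * hyperTerm p (1 - a) a k) := by
    rw [show p - 2 + 2 = p - 2 + 1 + 1 from rfl, ← hrange]
    simp only [hyperSum, Finset.mul_sum, ← Finset.sum_sub_distrib, neg_sub, add_sub_cancel,
      pow_zero, one_mul]
    rw [neg_add', neg_sub_comm a 1, show 1 + (a + 1) = 2 + a by ring]
  rw [hexpand, hsum]
  push_cast at hy
  linear_combination -2 * (2 * a + 1) * (a * (a + 1)) *
    (∏ i ∈ Finset.range (p - 2), (i + (1 - a))) * (∏ i ∈ Finset.range (p - 2), (i + (2 + a))) *
    (∏ i ∈ Finset.range (p - 2), (i + 1 : ModCube p)⁻¹ ^ 3) *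
    ((p - 2 : ℕ) + 1 : ModCube p)⁻¹ ^ 3 * hy

lemma hyperSum_recurrence (hp2 : p ≠ 2) {j : ℕ} (hj : j + 3 ≤ p) (t : ModCube p) :
    (j + 2 + p * t) ^ 2 * hyperSum p 0 (j + 2 + p * t) =
      (j + 1 + p * t) ^ 2 * hyperSum p 0 (j + p * t) := by
  obtain ⟨C, hC⟩ := exists_hyperSum_recurrence hp2
  have hleft : (p : ModCube p) ∣ ∏ i ∈ Finset.range (p - 2), (i + (1 - (j + 1 + p * t))) :=
    Dvd.dvd.trans ⟨-t, by ring⟩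
      (Finset.dvd_prod_of_mem _ (Finset.mem_range.2 (by omega : j < p - 2)))
  have hright : (p : ModCube p) ∣ ∏ i ∈ Finset.range (p - 2), (i + (2 + (j + 1 + p * t))) := by
    refine Dvd.dvd.trans ⟨1 + t, ?_⟩
      (Finset.dvd_prod_of_mem _ (Finset.mem_range.2 (by omega : p - 3 - j < p - 2)))
    have hcast : ((p - 3 - j : ℕ) : ModCube p) = p - 3 - j := by
      rw [Nat.cast_sub (by omega), Nat.cast_sub (by omega), Nat.cast_ofNat]
    rw [hcast]
    ring
  obtain ⟨x, hx⟩ := hleft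
  obtain ⟨y, hy⟩ := hright
  have hrec := hC (j + 1 + p * t)
  rw [hx, hy, show (j + 1 + p * t + 1 : ModCube p) = j + 2 + p * t by ring,
    show (j + 1 + p * t - 1 : ModCube p) = j + p * t by ring] at hrec
  linear_combination hrec + C * ((j + 1 + p * t) * (j + 2 + p * t) * (2 * (j + 1 + p * t) + 1)) *
    x * y * p_pow_three (p := p)

lemma p_dvd_hyperSum_p_mul_sub_one (t : ModCube p) :
    (p : ModCube p) ∣ hyperSum p 0 (p * t) - 1 := by
  rw [hyperSum, show Finset.range p = Finset.range (p - 1 + 1) by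
    rw [Nat.sub_add_cancel hp.out.one_le], Finset.sum_range_succ', pow_zero, hyperTerm_zero,
    mul_one, add_sub_cancel_right]
  refine Finset.dvd_sum fun k _ => ?_
  rw [hyperTerm_succ_left]
  exact ⟨(k + 1 : ℕ) ^ 0 * (-t * hyperTerm p (-(p * t) + 1) (1 + p * t) k *
    ((k + 2⁻¹) * (k + (1 + p * t)) * (k + 1 : ModCube p)⁻¹ ^ 3)), by ring⟩

lemma exists_hyperSum_one_add_p_mul (hp2 : p ≠ 2) : ∃ c : ModCube p, ∀ t,
    hyperSum p 0 (1 + p * t) = p ^ 2 * (t ^ 2 + c * t) := by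
  obtain ⟨C, hC⟩ := exists_hyperSum_recurrence hp2
  refine ⟨C * ∏ i ∈ Finset.range (p - 2), (((i : ModCube p) + 1) * (i + 2)), fun t => ?_⟩
  have hprod := p_sq_mul_prod_congr (p := p) (Finset.range (p - 2))
    (fun i : ℕ => ((i : ModCube p) + (1 - p * t)) * (i + (2 + p * t)))
    (fun i => ((i : ModCube p) + 1) * (i + 2))
    fun i _ => by linear_combination (-t - p * t ^ 2) * p_pow_three (p := p)
  obtain ⟨y, hy⟩ := p_dvd_hyperSum_p_mul_sub_one (-t)
  have hrec := hC (p * t)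
  rw [← Finset.prod_mul_distrib, ← hyperSum_neg_one_sub 0 ((p : ModCube p) * t - 1),
    show (-1 - (p * t - 1) : ModCube p) = p * -t by ring, eq_add_of_sub_eq hy] at hrec
  set P := ∏ i ∈ Finset.range (p - 2), (((i : ModCube p) + (1 - p * t)) * (i + (2 + p * t)))
  set Q := ∏ i ∈ Finset.range (p - 2), (((i : ModCube p) + 1) * (i + 2))
  have hsq : (1 + p * t) ^ 2 * hyperSum p 0 (1 + p * t) = p ^ 2 * (t ^ 2 + C * Q * t) := by
    rw [add_comm 1]
    linear_combination hrec + C * t * (p * t + 1) * (2 * (p * t) + 1) * hprod +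
      (t ^ 2 * y + C * t * Q * (3 * t + 2 * p * t ^ 2)) * p_pow_three (p := p)
  -- the inverse of `(1 + p t)²` is `1 - 2 p t + 3 p² t²`
  linear_combination (1 - 2 * (p * t) + 3 * (p * t) ^ 2) * hsq -
    ((4 * t ^ 3 + 3 * t ^ 4 * p) * hyperSum p 0 (1 + p * t) +
      (2 * t - 3 * p * t ^ 2) * (t ^ 2 + C * Q * t)) * p_pow_three (p := p)

lemma hyperSum_two_mul_add_one (hp2 : p ≠ 2) {h : ℕ} (hh : 2 * h + 1 < p) :
    hyperSum p 0 ((2 * h + 1 : ℕ) : ModCube p) = 0 := by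
  induction h with
  | zero =>
    obtain ⟨c, hc⟩ := exists_hyperSum_one_add_p_mul hp2
    simpa using hc 0
  | succ h ih =>
    have hrec := hyperSum_recurrence hp2 (j := 2 * h + 1) (by omega) 0
    rw [mul_zero, add_zero, add_zero, add_zero, ih (by omega), mul_zero] at hrec
    have hunit := (isUnit_natCast_of_lt (p := p) (Nat.succ_pos (2 * (h + 1))) hh).pow 2
    push_cast at hrec hunit ⊢
    rw [show (2 * (h + 1) + 1 : ModCube p) = 2 * h + 1 + 2 by ring] at hunit ⊢
    exact hunit.mul_right_eq_zero.1 hrec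

lemma hyperSum_one_add_p_mul (hp2 : p ≠ 2) (t : ModCube p) :
    hyperSum p 0 (1 + p * t) = p ^ 2 * (t ^ 2 + t) := by
  obtain ⟨c, hc⟩ := exists_hyperSum_one_add_p_mul hp2
  -- `1 - p` is the reflection of the odd number `p - 2`, where the sum vanishes; this fixes `c = 1`
  have hzero := hc (-1)
  have hp' := two_mul_div_two_add_one hp2
  have := two_lt_of_ne_two hp2
  have harg : (1 + p * -1 : ModCube p) = -1 - ((2 * ((p - 1) / 2 - 1) + 1 : ℕ) : ModCube p) := by
    rw [show 2 * ((p - 1) / 2 - 1) + 1 = p - 2 by omega, Nat.cast_sub (by omega)]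
    push_cast
    ring
  rw [harg, hyperSum_neg_one_sub, hyperSum_two_mul_add_one hp2 (by omega)] at hzero
  rw [hc t]
  linear_combination t * hzero

lemma hyperSum_mul_hyperSum (hp2 : p ≠ 2) (t : ModCube p) {j : ℕ} (hj : j + 1 < p) :
    (j + 1 + p * t) ^ 2 * hyperSum p 0 (j + 1 + p * t) * hyperSum p 0 (j + p * t) =
      p ^ 2 * (t ^ 2 + t) := by
  induction j with
  | zero =>
    obtain ⟨y, hy⟩ := p_dvd_hyperSum_p_mul_sub_one t
    rw [Nat.cast_zero, zero_add, zero_add, hyperSum_one_add_p_mul hp2, eq_add_of_sub_eq hy]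
    linear_combination (t ^ 2 + t) * (2 * t + p * t ^ 2 + (1 + p * t) ^ 2 * y) *
      p_pow_three (p := p)
  | succ j ih =>
    have hrec := hyperSum_recurrence hp2 (show j + 3 ≤ p by omega) t
    push_cast
    rw [show (j + 1 + 1 + p * t : ModCube p) = j + 2 + p * t by ring, hrec, ← ih (by omega)]
    ring

lemma hyperSum_two_mul_add_p_mul (hp2 : p ≠ 2) (t : ModCube p) {h : ℕ} (hh : 2 * h < p) :
    hyperSum p 0 (2 * h + p * t) * (∏ i ∈ Finset.range h, (2 * i + 2 + p * t)) ^ 2 =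
      hyperSum p 0 (p * t) * (∏ i ∈ Finset.range h, (2 * i + 1 + p * t)) ^ 2 := by
  induction h with
  | zero => simp
  | succ h ih =>
    have hodd := two_mul_div_two_add_one hp2
    have hrec := hyperSum_recurrence hp2 (j := 2 * h) (by omega) t
    push_cast at hrec ⊢
    rw [Finset.prod_range_succ, Finset.prod_range_succ,
      show (2 * (h + 1) + p * t : ModCube p) = 2 * h + 2 + p * t by ring]
    linear_combination (∏ i ∈ Finset.range h, (2 * i + 2 + p * t)) ^ 2 * hrec +
      (2 * h + 1 + p * t) ^ 2 * ih (by omega)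

end Hypergeometric

section Exponential

/-- The truncated exponential series of `p * t`, which is all of it modulo `p ^ 3`. -/
noncomputable def pexp (p : ℕ) (t : ModCube p) : ModCube p := 1 + p * t + 2⁻¹ * (p * t) ^ 2

lemma pexp_zero {p : ℕ} : pexp p 0 = 1 := by simp [pexp]

variable {p : ℕ} [hp : Fact p.Prime]

lemma pexp_add (hp2 : p ≠ 2) (s t : ModCube p) : pexp p (s + t) = pexp p s * pexp p t := by
  rw [pexp, pexp, pexp]
  linear_combination p ^ 2 * s * t * two_mul_inv_two hp2 -
    (2⁻¹ * s * t * (s + t) + p * 2⁻¹ ^ 2 * s ^ 2 * t ^ 2) * p_pow_three (p := p)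

lemma pexp_natCast_mul (hp2 : p ≠ 2) (n : ℕ) (t : ModCube p) : pexp p (n * t) = pexp p t ^ n := by
  induction n with
  | zero => rw [Nat.cast_zero, zero_mul, pexp_zero, pow_zero]
  | succ n ih =>
    rw [Nat.cast_succ, add_mul, one_mul, pexp_add hp2, ih]
    ring

end Exponential

section HalfIntegers

/-- The coefficient `(1/2)_k / k!` of the binomial series for `(1 - x) ^ (-1/2)`. -/
noncomputable def halfCoeff (p k : ℕ) : ModCube p :=
  ∏ i ∈ Finset.range k, ((i + 2⁻¹) * (i + 1 : ModCube p)⁻¹)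

/-- The sum `∑_{1 ≤ k < p} (-1)^k C(n, k) / k ^ r`. -/
noncomputable def altBinomSum (p r n : ℕ) : ModCube p :=
  ∑ k ∈ Finset.range (p - 1), (-1) ^ (k + 1) * n.choose (k + 1) * (k + 1 : ModCube p)⁻¹ ^ r

lemma altBinomSum_zero_right {p : ℕ} (r : ℕ) : altBinomSum p r 0 = 0 := by simp [altBinomSum]

lemma altBinomSum_zero_succ {p n : ℕ} (hn : n + 1 < p) : altBinomSum p 0 (n + 1) = -1 := by
  have halt : ∑ k ∈ Finset.range (n + 1 + 1), (-1 : ModCube p) ^ k * (n + 1).choose k = 0 := by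
    exact_mod_cast congrArg (Int.cast : ℤ → ModCube p)
      (Int.alternating_sum_range_choose_of_ne n.succ_ne_zero)
  rw [Finset.sum_subset (Finset.range_subset_range.2 (by omega : n + 1 + 1 ≤ p - 1 + 1))
    fun k _ hk => by
      rw [Nat.choose_eq_zero_of_lt (by simpa using hk), Nat.cast_zero, mul_zero],
    Finset.sum_range_succ'] at halt
  simp only [altBinomSum, pow_zero, mul_one]
  simpa [add_eq_zero_iff_eq_neg] using halt

variable {p : ℕ} [hp : Fact p.Prime]

lemma succ_mul_inv_succ {k : ℕ} (hk : k + 1 < p) :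
    (k + 1 : ModCube p) * (k + 1 : ModCube p)⁻¹ = 1 := by
  exact_mod_cast natCast_mul_inv_of_lt k.succ_pos hk

lemma hyperTerm_p_mul_succ (t : ModCube p) {k : ℕ} (hk : k + 1 < p) :
    hyperTerm p (-(p * t)) (1 + p * t) (k + 1) =
      -halfCoeff p (k + 1) * (p * t * (k + 1 : ModCube p)⁻¹) *
        (1 + p * t * (k + 1 : ModCube p)⁻¹) := by
  induction k with
  | zero =>
    have hinv : (1 : ModCube p)⁻¹ = 1 := by simp
    simp only [hyperTerm_succ, hyperTerm_zero, halfCoeff, zero_add, Finset.prod_range_one,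
      Nat.cast_zero, hinv]
    ring
  | succ k ih =>
    have hinv := succ_mul_inv_succ (p := p) (k := k) (by omega)
    have hinv' := succ_mul_inv_succ hk
    rw [hyperTerm_succ, ih (by omega), halfCoeff, halfCoeff, Finset.prod_range_succ _ (k + 1)]
    push_cast at hinv' ⊢
    generalize (k + 1 : ModCube p) = x at *
    have hcancel : (p * t * x⁻¹) * (1 + p * t * x⁻¹) * (x - p * t) = p * t := by
      linear_combination (p * t + p ^ 2 * t ^ 2 * x⁻¹) * hinv -
        t ^ 3 * x⁻¹ ^ 2 * p_pow_three (p := p)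
    generalize ∏ i ∈ Finset.range (k + 1), ((i + 2⁻¹) * (i + 1 : ModCube p)⁻¹) = g
    generalize (x + 1)⁻¹ = c at *
    linear_combination -g * (x + 2⁻¹) * (x + 1 + p * t) * c ^ 3 * hcancel -
      g * (x + 2⁻¹) * p * t * c ^ 2 * hinv'

lemma hyperSum_p_mul (t : ModCube p) : hyperSum p 0 (p * t) =
    1 - p * t * (∑ k ∈ Finset.range (p - 1), halfCoeff p (k + 1) * (k + 1 : ModCube p)⁻¹) -
      (p * t) ^ 2 *
        ∑ k ∈ Finset.range (p - 1), halfCoeff p (k + 1) * (k + 1 : ModCube p)⁻¹ ^ 2 := by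
  have hterm : ∀ k ∈ Finset.range (p - 1), (((k + 1 : ℕ) : ModCube p)) ^ 0 *
      hyperTerm p (-(p * t)) (1 + p * t) (k + 1) =
        -(p * t) * (halfCoeff p (k + 1) * (k + 1 : ModCube p)⁻¹) -
          (p * t) ^ 2 * (halfCoeff p (k + 1) * (k + 1 : ModCube p)⁻¹ ^ 2) := fun k hk => by
    rw [hyperTerm_p_mul_succ t (by have := Finset.mem_range.1 hk; omega)]
    ring
  rw [hyperSum, show Finset.range p = Finset.range (p - 1 + 1) by
    rw [Nat.sub_add_cancel hp.out.one_le], Finset.sum_range_succ', hyperTerm_zero,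
    Finset.sum_congr rfl hterm, Finset.sum_sub_distrib, ← Finset.mul_sum, ← Finset.mul_sum]
  ring

lemma choose_mul_inv_succ {n k : ℕ} (hn : n + 1 < p) (hk : k + 1 < p) :
    (n.choose k : ModCube p) * (k + 1 : ModCube p)⁻¹ =
      (n + 1).choose (k + 1) * (n + 1 : ModCube p)⁻¹ := by
  have hchoose : (n + 1 : ModCube p) * n.choose k = (n + 1).choose (k + 1) * (k + 1) := by
    exact_mod_cast congrArg (Nat.cast : ℕ → ModCube p) (Nat.add_one_mul_choose_eq n k)
  linear_combination -(n.choose k * (k + 1 : ModCube p)⁻¹) * succ_mul_inv_succ hn +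
    (n + 1).choose (k + 1) * (n + 1 : ModCube p)⁻¹ * succ_mul_inv_succ hk +
    (n + 1 : ModCube p)⁻¹ * (k + 1 : ModCube p)⁻¹ * hchoose

lemma altBinomSum_succ_succ (r : ℕ) {n : ℕ} (hn : n + 1 < p) :
    altBinomSum p (r + 1) (n + 1) =
      altBinomSum p (r + 1) n + altBinomSum p r (n + 1) * (n + 1 : ModCube p)⁻¹ := by
  rw [altBinomSum, altBinomSum, altBinomSum, Finset.sum_mul, ← Finset.sum_add_distrib]
  refine Finset.sum_congr rfl fun k hk => ?_
  have hpascal : ((n + 1).choose (k + 1) : ModCube p) = n.choose k + n.choose (k + 1) := by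
    exact_mod_cast congrArg (Nat.cast : ℕ → ModCube p) (Nat.choose_succ_succ' n k)
  linear_combination (-1) ^ (k + 1) * (k + 1 : ModCube p)⁻¹ ^ (r + 1) * hpascal +
    (-1) ^ (k + 1) * (k + 1 : ModCube p)⁻¹ ^ r *
      choose_mul_inv_succ hn (by have := Finset.mem_range.1 hk; omega : k + 1 < p)

lemma two_mul_altBinomSum_two_add_sq {n : ℕ} (hn : n < p) :
    2 * altBinomSum p 2 n + altBinomSum p 1 n ^ 2 =
      -∑ i ∈ Finset.range n, (i + 1 : ModCube p)⁻¹ ^ 2 := by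
  induction n with
  | zero => simp [altBinomSum_zero_right]
  | succ n ih =>
    have hone := altBinomSum_succ_succ 0 hn
    rw [zero_add, altBinomSum_zero_succ hn] at hone
    rw [altBinomSum_succ_succ 1 hn, hone, Finset.sum_range_succ]
    linear_combination ih (by omega)

lemma p_sq_mul_sum_inv_sq (hp3 : 3 < p) :
    (p : ModCube p) ^ 2 * ∑ i ∈ Finset.range ((p - 1) / 2), (i + 1 : ModCube p)⁻¹ ^ 2 = 0 := by
  have hp2 : p ≠ 2 := by omega
  have hhalf := two_mul_div_two_add_one hp2
  set m := (p - 1) / 2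
  set w : ℕ → ModCube p := fun i => (i + 1 : ModCube p)⁻¹
  have hinv : ∀ i < 2 * m, Ring.inverse (0 + ((i + 1 : ℕ) : ModCube p)) = w i := fun i hi => by
    have hmul : w i * (i + 1 : ℕ) = 1 := by
      rw [mul_comm, Nat.cast_succ]
      exact succ_mul_inv_succ (by omega)
    rw [zero_add, (Ring.eq_mul_inverse_iff_mul_eq _ 1 _ (IsUnit.of_mul_eq_one_right _ hmul)).2 hmul,
      one_mul]
  have hreflect : (p : ModCube p) ^ 2 * ∑ i ∈ Finset.range m, w (m + i) ^ 2 =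
      p ^ 2 * ∑ i ∈ Finset.range m, w i ^ 2 := by
    rw [← Finset.sum_range_reflect, Finset.mul_sum, Finset.mul_sum]
    refine Finset.sum_congr rfl fun i hi => ?_
    have hi := Finset.mem_range.1 hi
    have hlow := succ_mul_inv_succ (p := p) (k := i) (by omega)
    have hhigh := succ_mul_inv_succ (p := p) (k := m + (m - 1 - i)) (by omega)
    have hcast : ((m + (m - 1 - i) : ℕ) : ModCube p) + 1 = p - (i + 1) := by
      rw [eq_sub_iff_add_eq]
      exact_mod_cast congrArg (Nat.cast : ℕ → ModCube p)
        (by omega : m + (m - 1 - i) + 1 + (i + 1) = p)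
    rw [hcast] at hhigh
    simp only [w]
    rw [hcast]
    generalize (p - (i + 1) : ModCube p)⁻¹ = y at *
    generalize (i + 1 : ModCube p)⁻¹ = x at *
    have hy : y = -x + p * x * y := by linear_combination (-x) * hhigh - y * hlow
    linear_combination p ^ 2 * (y - x) * hy + x * y * (y - x) * p_pow_three (p := p)
  have hsum := p_sq_mul_sum_inverse_sq hp3 0
  have hp_zero : Ring.inverse (0 + ((0 : ℕ) : ModCube p)) = 0 :=
    Ring.inverse_non_unit _ (by simpa using not_isUnit_p_mul (p := p) 0)
  rw [show Finset.range p = Finset.range (m + m + 1) by congr 1; omega, Finset.sum_range_succ',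
    hp_zero, Finset.sum_congr rfl fun i hi => by
      rw [hinv i (by have := Finset.mem_range.1 hi; omega)], Finset.sum_range_add] at hsum
  refine (isUnit_two hp2).mul_right_eq_zero.1 ?_
  linear_combination hsum - hreflect

lemma p_sq_mul_halfCoeff (hp2 : p ≠ 2) {k : ℕ} (hk : k < p) :
    (p : ModCube p) ^ 2 * halfCoeff p k = p ^ 2 * ((-1) ^ k * ((p - 1) / 2).choose k) := by
  induction k with
  | zero => simp [halfCoeff]
  | succ k ih =>
    have hcast := p_eq_two_mul_add_one hp2
    set m := (p - 1) / 2
    have hchoose : (m.choose (k + 1) : ModCube p) * (k + 1) = m.choose k * (m - k) := by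
      rcases le_or_gt k m with h | h
      · rw [← Nat.cast_sub h]
        exact_mod_cast congrArg (Nat.cast : ℕ → ModCube p) (Nat.choose_succ_right_eq m k)
      · rw [Nat.choose_eq_zero_of_lt h, Nat.choose_eq_zero_of_lt (by omega)]
        simp
    have ih' := ih (by omega)
    rw [halfCoeff] at ih' ⊢
    rw [Finset.prod_range_succ]
    generalize ∏ i ∈ Finset.range k, ((i + 2⁻¹) * (i + 1 : ModCube p)⁻¹) = g at *
    have hhalf : (2 : ModCube p)⁻¹ = -m + p * 2⁻¹ := by
      linear_combination (-2⁻¹) * hcast - m * two_mul_inv_two hp2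
    have hchoose' : (m.choose (k + 1) : ModCube p) =
        m.choose k * (m - k) * (k + 1 : ModCube p)⁻¹ := by
      linear_combination (k + 1 : ModCube p)⁻¹ * hchoose - m.choose (k + 1) * succ_mul_inv_succ hk
    rw [hchoose']
    generalize (k + 1 : ModCube p)⁻¹ = w
    linear_combination (k + 2⁻¹) * w * ih' + p ^ 2 * (-1) ^ k * m.choose k * w * hhalf +
      (-1) ^ k * m.choose k * w * 2⁻¹ * p_pow_three (p := p)

lemma exists_hyperSum_p_mul_eq_pexp (hp3 : 3 < p) :
    ∃ c : ModCube p, ∀ t, hyperSum p 0 (p * t) = pexp p (c * t) := by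
  have hp2 : p ≠ 2 := by omega
  have hcoeff : ∀ r, (p : ModCube p) ^ 2 *
      (∑ k ∈ Finset.range (p - 1), halfCoeff p (k + 1) * (k + 1 : ModCube p)⁻¹ ^ r) =
        p ^ 2 * altBinomSum p r ((p - 1) / 2) := fun r => by
    rw [altBinomSum, Finset.mul_sum, Finset.mul_sum]
    refine Finset.sum_congr rfl fun k hk => ?_
    linear_combination (k + 1 : ModCube p)⁻¹ ^ r *
      p_sq_mul_halfCoeff hp2 (by have := Finset.mem_range.1 hk; omega : k + 1 < p)
  refine ⟨-∑ k ∈ Finset.range (p - 1), halfCoeff p (k + 1) * (k + 1 : ModCube p)⁻¹, fun t => ?_⟩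
  have hone := hcoeff 1
  have htwo := hcoeff 2
  have hsq := two_mul_altBinomSum_two_add_sq (p := p) (n := (p - 1) / 2) (by omega)
  have hzero := p_sq_mul_sum_inv_sq hp3
  simp only [pow_one] at hone
  rw [hyperSum_p_mul, pexp]
  generalize ∑ k ∈ Finset.range (p - 1), halfCoeff p (k + 1) * (k + 1 : ModCube p)⁻¹ = A at *
  generalize ∑ k ∈ Finset.range (p - 1), halfCoeff p (k + 1) * (k + 1 : ModCube p)⁻¹ ^ 2 = B at *
  linear_combination (-t ^ 2) * htwo - 2⁻¹ * t ^ 2 * (A + altBinomSum p 1 ((p - 1) / 2)) * hone -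
    2⁻¹ * t ^ 2 * p ^ 2 * hsq + 2⁻¹ * t ^ 2 * hzero +
    p ^ 2 * t ^ 2 * altBinomSum p 2 ((p - 1) / 2) * two_mul_inv_two hp2

end HalfIntegers

section GammaExpansions

variable {p : ℕ} [hp : Fact p.Prime]

lemma exists_gamma_add_p_mul_eq_pexp (hp3 : 3 < p) {x c : ModCube p}
    (hc : ∀ y, gamma p (x + p * y) * gamma p (x + p * -y) = c) :
    ∃ w, ∀ y, gamma p (x + p * y) = gamma p x * pexp p (w * y) := by
  obtain ⟨a, b, hab⟩ := gamma_add_p_mul hp3 x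
  refine ⟨a, fun y => ?_⟩
  have hzero := hc 0
  have hone := hc 1
  rw [hab, hab] at hzero hone
  have hprod : (gamma p x * gamma p x) * (p ^ 2 * (2 * b - a ^ 2)) = 0 := by
    linear_combination hone - hzero - gamma p x * gamma p x * p * b ^ 2 * p_pow_three (p := p)
  have hb := ((isUnit_gamma x).mul (isUnit_gamma x)).mul_right_eq_zero.1 hprod
  rw [hab, pexp]
  linear_combination 2⁻¹ * gamma p x * y ^ 2 * hb -
    gamma p x * y ^ 2 * p ^ 2 * b * two_mul_inv_two (p := p) (by omega)

lemma gamma_p_mul_add_one (hp3 : 3 < p) (t : ModCube p) :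
    gamma p (p * t + 1) = -gamma p (p * t) := by
  rw [gamma_add_one hp3, gammaFactor_of_not_isUnit (not_isUnit_p_mul t), neg_one_mul]

lemma exists_gamma_p_mul_eq_pexp (hp3 : 3 < p) : ∃ w, ∀ y, gamma p (p * y) = pexp p (w * y) := by
  obtain ⟨w, hw⟩ := exists_gamma_add_p_mul_eq_pexp (p := p) hp3 (x := 0) (c := 1) fun y => by
    have hrefl := reflection_add_p_mul hp3 0 y
    rw [reflection_zero hp3, reflection, show 1 - (0 + p * y) = p * -y + 1 by ring,
      gamma_p_mul_add_one hp3] at hrefl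
    rw [zero_add (p * -y)]
    linear_combination -hrefl
  refine ⟨w, fun y => ?_⟩
  have hy := hw y
  rwa [gamma_zero, zero_add, one_mul] at hy

lemma gamma_p_mul_add (hp3 : 3 < p) (s t : ModCube p) :
    gamma p (p * (s + t)) = gamma p (p * s) * gamma p (p * t) := by
  obtain ⟨w, hw⟩ := exists_gamma_p_mul_eq_pexp (p := p) hp3
  rw [hw, hw, hw, mul_add, pexp_add (by omega)]

lemma one_sub_inv_two (hp2 : p ≠ 2) : (1 : ModCube p) - 2⁻¹ = 2⁻¹ := by
  linear_combination -two_mul_inv_two hp2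

lemma gamma_add_natCast (hp3 : 3 < p) (x : ModCube p) {h : ℕ} (hx : ∀ i < h, IsUnit (x + i)) :
    gamma p (x + h) = (-1) ^ h * (∏ i ∈ Finset.range h, (x + i)) * gamma p x := by
  induction h with
  | zero => simp
  | succ h ih =>
    rw [Nat.cast_succ, ← add_assoc, gamma_add_one hp3, ih fun i hi => hx i (by omega),
      Finset.prod_range_succ, gammaFactor_of_isUnit (hx h (by omega))]
    ring

lemma reflection_inv_two (hp3 : 3 < p) : reflection p 2⁻¹ = (-1) ^ ((p - 1) / 2 + 1) := by
  have hp2 : p ≠ 2 := by omega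
  rw [← reflection_natCast_add_one hp3 (n := (p - 1) / 2) (by omega),
    ← reflection_add_p_mul hp3 2⁻¹ 2⁻¹]
  congr 1
  push_cast
  linear_combination 2⁻¹ * p_eq_two_mul_add_one hp2 +
    (((p - 1) / 2 : ℕ) + 1 : ModCube p) * two_mul_inv_two hp2

lemma gamma_inv_two_sq (hp3 : 3 < p) : gamma p 2⁻¹ ^ 2 = (-1) ^ ((p - 1) / 2 + 1) := by
  rw [← reflection_inv_two hp3, reflection, one_sub_inv_two (by omega), sq]

lemma count_not_dvd_p_mul (k : ℕ) : Nat.count (¬p ∣ ·) (p * k) = k * (p - 1) := by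
  have hpos := hp.out.pos
  cases k with
  | zero => simp
  | succ k =>
    rw [show p * (k + 1) = p * k + (p - 1 + 1) by rw [Nat.sub_add_cancel hpos]; ring,
      count_not_dvd (by omega)]
    ring

lemma gamma_inv_two_add_p_mul (hp3 : 3 < p) (τ : ℕ) :
    gamma p (2⁻¹ + p * (τ * 2⁻¹)) =
      gamma p 2⁻¹ * gamma p (p * (τ * 2⁻¹)) * 2⁻¹ ^ (τ * (p - 1)) := by
  have htwo := two_mul_inv_two (p := p) (by omega)
  have hmul := prod_gamma_mul_add_mul hp3 (m := 2) (d := 2⁻¹) (by exact_mod_cast htwo) (p * τ)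
  have hdouble : ((p * τ : ℕ) : ModCube p) = p * (τ * 2⁻¹ + τ * 2⁻¹) := by
    push_cast
    linear_combination -(p * τ) * htwo
  have hhalf : ((p * τ : ℕ) : ModCube p) * 2⁻¹ = p * (τ * 2⁻¹) := by push_cast; ring
  rw [Finset.prod_range_succ, Finset.prod_range_one, Finset.prod_range_succ, Finset.prod_range_one,
    count_not_dvd_p_mul, hhalf, hdouble, gamma_p_mul_add hp3] at hmul
  simp only [Nat.cast_zero, zero_mul, add_zero, gamma_zero, Nat.cast_one, one_mul] at hmul
  apply (isUnit_gamma (p := p) (p * (τ * 2⁻¹))).mul_left_cancel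
  rw [add_comm (2⁻¹ : ModCube p)]
  linear_combination hmul

end GammaExpansions

section HyperSumGamma

lemma neg_one_pow_sq {p : ℕ} (n : ℕ) : ((-1 : ModCube p) ^ n) ^ 2 = 1 := by
  rw [← pow_mul, mul_comm, pow_mul, neg_one_sq, one_pow]

variable {p : ℕ} [hp : Fact p.Prime]

lemma hyperSum_mul_gamma_sq (hp3 : 3 < p) (t : ModCube p) {h : ℕ} (hh : 2 * h < p) :
    hyperSum p 0 (2 * h + p * t) *
        (gamma p (1 + p * (t * 2⁻¹) + h) * gamma p (2⁻¹ + p * (t * 2⁻¹))) ^ 2 =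
      hyperSum p 0 (p * t) *
        (gamma p (2⁻¹ + p * (t * 2⁻¹) + h) * gamma p (p * (t * 2⁻¹))) ^ 2 := by
  have hp2 : p ≠ 2 := by omega
  have htwo := two_mul_inv_two hp2
  have hrec := hyperSum_two_mul_add_p_mul hp2 t hh
  have heven (i : ℕ) : (2 * i + 2 + p * t : ModCube p) = 2 * (1 + p * (t * 2⁻¹) + i) := by
    linear_combination -p * t * htwo
  have hodd (i : ℕ) : (2 * i + 1 + p * t : ModCube p) = 2 * (2⁻¹ + p * (t * 2⁻¹) + i) := by
    linear_combination (-p * t - 1) * htwo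
  have hone := gamma_add_natCast hp3 (1 + p * (t * 2⁻¹)) (h := h) fun i hi => by
    have hunit := isUnit_natCast_of_lt (by omega : 0 < 2 * i + 2) (by omega : 2 * i + 2 < p)
    push_cast at hunit
    rw [← isUnit_add_p_mul t, heven] at hunit
    exact isUnit_of_mul_isUnit_right hunit
  have hhalf := gamma_add_natCast hp3 (2⁻¹ + p * (t * 2⁻¹)) (h := h) fun i hi => by
    have hunit := isUnit_natCast_of_lt (by omega : 0 < 2 * i + 1) (by omega : 2 * i + 1 < p)
    push_cast at hunit
    rw [← isUnit_add_p_mul t, hodd] at hunit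
    exact isUnit_of_mul_isUnit_right hunit
  simp only [heven, hodd, Finset.prod_mul_distrib, Finset.prod_const, Finset.card_range] at hrec
  rw [hone, hhalf, add_comm 1, gamma_p_mul_add_one hp3, add_comm _ 1]
  apply (((isUnit_two hp2).pow h).pow 2).mul_left_cancel
  linear_combination gamma p (2⁻¹ + p * (t * 2⁻¹)) ^ 2 * gamma p (p * (t * 2⁻¹)) ^ 2 *
    ((-1) ^ h) ^ 2 * hrec

lemma hyperSum_zero_zero (hp3 : 3 < p) : hyperSum p 0 (0 : ModCube p) = 1 := by
  obtain ⟨c, hc⟩ := exists_hyperSum_p_mul_eq_pexp (p := p) hp3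
  simpa [pexp_zero] using hc 0

-- `-1 - p * (-1)` is the even integer `p - 1`, so `2 * h = p - 1` and `t = 0` determine this value.
lemma hyperSum_neg_p (hp3 : 3 < p) : hyperSum p 0 (p * (-1)) * (2⁻¹ ^ (p - 1)) ^ 2 = 1 := by
  have hp2 : p ≠ 2 := by omega
  have hsum := hyperSum_mul_gamma_sq hp3 0 (h := (p - 1) / 2) (by omega)
  have hcast := p_eq_two_mul_add_one hp2
  have htwo := two_mul_inv_two hp2
  have hgamma := gamma_inv_two_add_p_mul hp3 1
  have hfour : gamma p 2⁻¹ ^ 4 = 1 := by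
    rw [show gamma p 2⁻¹ ^ 4 = (gamma p 2⁻¹ ^ 2) ^ 2 by ring, gamma_inv_two_sq hp3, neg_one_pow_sq]
  rw [show (2 * ((p - 1) / 2 : ℕ) + p * 0 : ModCube p) = -1 - p * (-1) by
    linear_combination -hcast, hyperSum_neg_one_sub] at hsum
  simp only [zero_mul, mul_zero, add_zero, Nat.cast_one, one_mul, hyperSum_zero_zero hp3,
    gamma_zero, mul_one] at hsum hgamma
  rw [show 1 + (((p - 1) / 2 : ℕ) : ModCube p) = 2⁻¹ + p * 2⁻¹ by
      linear_combination -2⁻¹ * hcast - (((p - 1) / 2 : ℕ) + 1 : ModCube p) * htwo,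
    show 2⁻¹ + (((p - 1) / 2 : ℕ) : ModCube p) = p * 2⁻¹ by
      linear_combination -2⁻¹ * hcast - ((p - 1) / 2 : ℕ) * htwo, hgamma] at hsum
  apply ((isUnit_gamma ((p : ModCube p) * 2⁻¹)).pow 2).mul_left_cancel
  linear_combination hsum -
    hyperSum p 0 (p * (-1)) * (2⁻¹ ^ (p - 1)) ^ 2 * gamma p (p * 2⁻¹) ^ 2 * hfour

lemma hyperSum_p_mul_natCast (hp3 : 3 < p) (τ : ℕ) :
    hyperSum p 0 (p * τ) = (2⁻¹ ^ (τ * (p - 1))) ^ 2 := by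
  have hp2 : p ≠ 2 := by omega
  obtain ⟨c, hc⟩ := exists_hyperSum_p_mul_eq_pexp (p := p) hp3
  have hneg := hyperSum_neg_p hp3
  have hinv : hyperSum p 0 (p * τ) * hyperSum p 0 (p * (-1)) ^ τ = 1 := by
    rw [hc, hc, ← pexp_natCast_mul hp2, ← pexp_add hp2,
      show c * τ + τ * (c * -1) = 0 by ring, pexp_zero]
  have hpow : hyperSum p 0 (p * (-1)) ^ τ * (2⁻¹ ^ (τ * (p - 1))) ^ 2 = 1 := by
    rw [mul_comm τ, pow_mul, pow_right_comm, ← mul_pow, hneg, one_pow]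
  linear_combination (2⁻¹ ^ (τ * (p - 1))) ^ 2 * hinv - hyperSum p 0 (p * τ) * hpow

lemma hyperSum_two_mul_add_p_mul_natCast (hp3 : 3 < p) (τ : ℕ) {h : ℕ} (hh : 2 * h < p) :
    hyperSum p 0 (2 * h + p * τ) * gamma p (1 + p * (τ * 2⁻¹) + h) ^ 2 =
      (-1) ^ ((p - 1) / 2 + 1) * gamma p (2⁻¹ + p * (τ * 2⁻¹) + h) ^ 2 := by
  have hp2 : p ≠ 2 := by omega
  have hsum := hyperSum_mul_gamma_sq hp3 τ hh
  rw [hyperSum_p_mul_natCast hp3, gamma_inv_two_add_p_mul hp3] at hsum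
  have hsq := gamma_inv_two_sq hp3
  have hsign := neg_one_pow_sq (p := p) ((p - 1) / 2 + 1)
  apply (((isUnit_gamma (p * (τ * 2⁻¹))).mul ((isUnit_inv_two hp2).pow (τ * (p - 1)))).pow
    2).mul_left_cancel
  generalize (-1 : ModCube p) ^ ((p - 1) / 2 + 1) = ε at *
  generalize gamma p (p * (τ * 2⁻¹)) = G at *
  generalize (2⁻¹ : ModCube p) ^ (τ * (p - 1)) = D at *
  generalize gamma p (1 + p * (τ * 2⁻¹) + h) = U at *
  linear_combination ε * hsum - hyperSum p 0 (2 * h + p * τ) * U ^ 2 * G ^ 2 * D ^ 2 * ε * hsq -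
    hyperSum p 0 (2 * h + p * τ) * U ^ 2 * G ^ 2 * D ^ 2 * hsign

end HyperSumGamma

section MinusOneSixth

lemma isUnit_of_twelve_mul {p : ℕ} {e : ModCube p} (he : 12 * e = 1) : IsUnit e :=
  IsUnit.of_mul_eq_one_right _ he

-- With `τ = -1/6` modulo `p ^ 3`, the integer `2 * h + p * τ` is `-r / 6`.
lemma two_mul_add_p_mul_eq {p : ℕ} {e : ModCube p} (he : 12 * e = 1) {h r : ℕ}
    (hr : 12 * h + r = p) :
    2 * h + p * (-2 * e) = -2 * (r * e) := by
  have hcast : (p : ModCube p) = 12 * h + r := by exact_mod_cast congrArg Nat.cast hr.symm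
  linear_combination -2 * h * he - 2 * e * hcast

lemma hyperSum_neg_ten_mul {p : ℕ} (j : ℕ) {e : ModCube p} (he : 12 * e = 1) :
    hyperSum p j (-2 * (5 * e)) = hyperSum p j (-2 * e) := by
  rw [← hyperSum_neg_one_sub]
  congr 1
  linear_combination he

variable {p : ℕ} [hp : Fact p.Prime]

lemma gamma_sq_mul_gamma_one_sub_sq (hp3 : 3 < p) (x : ModCube p) :
    gamma p x ^ 2 * gamma p (1 - x) ^ 2 = 1 := by
  rw [← mul_pow]
  exact reflection_sq hp3 x

lemma inv_two_eq_six_mul (hp2 : p ≠ 2) {e : ModCube p} (he : 12 * e = 1) :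
    (2⁻¹ : ModCube p) = 6 * e := by
  linear_combination 6 * e * two_mul_inv_two hp2 - 2⁻¹ * he

lemma hyperSum_neg_two_mul_mul (hp3 : 3 < p) {e : ModCube p} (he : 12 * e = 1) {h r : ℕ}
    (hr : 12 * h + r = p) :
    hyperSum p 0 (-2 * (r * e)) =
      (-1) ^ ((p - 1) / 2 + 1) * (gamma p (r * e) * gamma p ((6 - r) * e)) ^ 2 := by
  obtain ⟨τ, hτ⟩ := exists_natCast_eq (-2 * e)
  have hsum := hyperSum_two_mul_add_p_mul_natCast hp3 τ (h := h) (by omega)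
  have hcast : (p : ModCube p) = 12 * h + r := by exact_mod_cast congrArg Nat.cast hr.symm
  rw [hτ, inv_two_eq_six_mul (by omega) he, two_mul_add_p_mul_eq he hr,
    show 1 + p * (-2 * e * (6 * e)) + h = 1 - r * e by
      linear_combination (-h - p * e) * he - e * hcast,
    show 6 * e + p * (-2 * e * (6 * e)) + h = (6 - r) * e by
      linear_combination (-h - p * e) * he - e * hcast] at hsum
  linear_combination gamma p (r * e) ^ 2 * hsum -
    hyperSum p 0 (-2 * (r * e)) * gamma_sq_mul_gamma_one_sub_sq hp3 (r * e)

lemma mod_twelve_of_prime (hp3 : 3 < p) : p % 12 = 1 ∨ p % 12 = 5 ∨ p % 12 = 7 ∨ p % 12 = 11 := by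
  have hodd := hp.out.eq_two_or_odd
  have hthree : p % 3 ≠ 0 := fun h => by
    have := (Nat.prime_dvd_prime_iff_eq Nat.prime_three hp.out).1 (Nat.dvd_of_mod_eq_zero h)
    omega
  omega

lemma hyperSum_zero_of_mod_four_eq_one (hp3 : 3 < p) (hp4 : p % 4 = 1) {e : ModCube p}
    (he : 12 * e = 1) : hyperSum p 0 (-2 * e) = -(gamma p e * gamma p (5 * e)) ^ 2 := by
  have hsign : (-1 : ModCube p) ^ ((p - 1) / 2 + 1) = -1 :=
    Odd.neg_one_pow (by rw [Nat.odd_iff]; omega)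
  have hmod := mod_twelve_of_prime hp3
  obtain hr | hr : p % 12 = 1 ∨ p % 12 = 5 := by omega
  · have hsum := hyperSum_neg_two_mul_mul hp3 he (h := p / 12) (r := 1) (by omega)
    rw [hsign, Nat.cast_one, one_mul, show (6 - 1 : ModCube p) = 5 by norm_num] at hsum
    rw [hsum, neg_one_mul]
  · have hsum := hyperSum_neg_two_mul_mul hp3 he (h := p / 12) (r := 5) (by omega)
    rw [hsign, Nat.cast_ofNat, hyperSum_neg_ten_mul 0 he, show (6 - 5 : ModCube p) = 1 by norm_num,
      one_mul] at hsum
    rw [hsum]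
    ring

lemma hyperSum_one_mul_hyperSum_zero (hp3 : 3 < p) {e : ModCube p} (he : 12 * e = 1) {h r : ℕ}
    (hr : 12 * h + r = p) (hh : 0 < h) :
    hyperSum p 1 (-2 * (r * e)) * hyperSum p 0 (-2 * (r * e)) =
      -2 * (r * e) * (1 - 2 * (r * e)) * hyperSum p 0 (-2 * (r * e)) ^ 2 + 20 * e ^ 2 * p ^ 2 := by
  have hunit : IsUnit (-2 * (r * e)) := by
    have hnat := isUnit_natCast_of_lt (by omega : 0 < 2 * h) (by omega : 2 * h < p)
    rw [← two_mul_add_p_mul_eq he hr, isUnit_add_p_mul]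
    exact_mod_cast hnat
  have hone := hyperSum_one (by omega) hunit
  have hmul := hyperSum_mul_hyperSum (by omega) (-2 * e) (j := 2 * h - 1) (by omega)
  have hcast : ((2 * h - 1 : ℕ) : ModCube p) + 1 = 2 * h := by
    exact_mod_cast congrArg (Nat.cast : ℕ → ModCube p) (by omega : 2 * h - 1 + 1 = 2 * h)
  rw [hcast, eq_sub_of_add_eq hcast, sub_add_eq_add_sub, two_mul_add_p_mul_eq he hr] at hmul
  linear_combination hyperSum p 0 (-2 * (r * e)) * hone - hmul - 2 * e * p ^ 2 * he

lemma hyperSum_one_mul_hyperSum_zero_of_mod_four_eq_one (hp3 : 3 < p) (hp4 : p % 4 = 1)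
    (hp13 : 13 ≤ p) {e : ModCube p} (he : 12 * e = 1) :
    hyperSum p 1 (-2 * e) * hyperSum p 0 (-2 * e) =
      -20 * e ^ 2 * hyperSum p 0 (-2 * e) ^ 2 + 20 * e ^ 2 * p ^ 2 := by
  have hmod := mod_twelve_of_prime hp3
  obtain hr | hr : p % 12 = 1 ∨ p % 12 = 5 := by omega
  · have hmul := hyperSum_one_mul_hyperSum_zero hp3 he (h := p / 12) (r := 1) (by omega) (by omega)
    rw [Nat.cast_one, one_mul] at hmul
    linear_combination hmul + 2 * e * hyperSum p 0 (-2 * e) ^ 2 * he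
  · have hmul := hyperSum_one_mul_hyperSum_zero hp3 he (h := p / 12) (r := 5) (by omega) (by omega)
    rw [Nat.cast_ofNat, hyperSum_neg_ten_mul 0 he, hyperSum_neg_ten_mul 1 he] at hmul
    linear_combination hmul + 10 * e * hyperSum p 0 (-2 * e) ^ 2 * he

lemma sq_mul_hyperSum_sub_one_mul_gamma (hp3 : 3 < p) (hp4 : p % 4 = 3) {e : ModCube p}
    (he : 12 * e = 1) {h s : ℕ} (hs : 12 * h + (s + 6) = p) (hunit : IsUnit (s * e : ModCube p)) :
    (-2 * (s * e)) ^ 2 * hyperSum p 0 (-2 * (s * e) - 1) *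
      (gamma p (s * e) * gamma p ((6 - s) * e)) ^ 2 = 4 := by
  have hsum := hyperSum_neg_two_mul_mul hp3 he hs
  have hsign : (-1 : ModCube p) ^ ((p - 1) / 2 + 1) = 1 :=
    Even.neg_one_pow (by rw [Nat.even_iff]; omega)
  push_cast at hsum
  rw [hsign, one_mul, show -2 * ((s + 6) * e) = -2 * (s * e) - 1 by linear_combination -he,
    show (s + 6) * e = 1 - (6 - s) * e by linear_combination he,
    show (6 - (s + 6)) * e = -(s * e) by ring] at hsum
  have hadd := gamma_add_one hp3 (-(s * e))
  rw [gammaFactor_of_isUnit hunit.neg, neg_add_eq_sub, neg_neg] at hadd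
  have hrefl := gamma_sq_mul_gamma_one_sub_sq hp3 (s * e)
  have hrefl' := gamma_sq_mul_gamma_one_sub_sq hp3 ((6 - s) * e)
  rw [hadd] at hrefl
  rw [hsum]
  linear_combination 4 * hrefl + 4 * (s * e) ^ 2 * gamma p (s * e) ^ 2 *
    gamma p (-(s * e)) ^ 2 * hrefl'

lemma hyperSum_of_sq_mul_gamma (hp2 : p ≠ 2) {e : ModCube p} (he : 12 * e = 1) {h s : ℕ}
    (hs : 12 * h + (s + 6) = p) {X : ModCube p}
    (hX : (-2 * (s * e)) ^ 2 * hyperSum p 0 (-2 * (s * e) - 1) * X = 4) :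
    p * hyperSum p 0 (-2 * (s * e)) = 0 ∧ p * (hyperSum p 1 (-2 * (s * e)) * X) = -4 * p := by
  have hodd : 2 * h + p * (-2 * e) = -2 * (s * e) - 1 := by
    have heq := two_mul_add_p_mul_eq he hs
    push_cast at heq
    linear_combination heq - he
  have hmul := hyperSum_mul_hyperSum hp2 (-2 * e) (j := 2 * h) (by omega)
  push_cast at hmul
  rw [add_right_comm, hodd, sub_add_cancel] at hmul
  have hfour : IsUnit (4 : ModCube p) := by
    rw [show (4 : ModCube p) = 2 ^ 2 by norm_num]
    exact (isUnit_two hp2).pow 2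
  have hunit : IsUnit (-2 * (s * e)) := by
    refine isUnit_of_dvd_unit ?_ hfour
    exact ⟨-2 * (s * e) * hyperSum p 0 (-2 * (s * e) - 1) * X, by linear_combination -hX⟩
  have hzero : p * hyperSum p 0 (-2 * (s * e)) = 0 := by
    apply hfour.mul_right_eq_zero.1
    linear_combination (-p * hyperSum p 0 (-2 * (s * e))) * hX + p * X * hmul +
      (4 * e ^ 2 - 2 * e) * X * p_pow_three (p := p)
  refine ⟨hzero, ?_⟩
  rw [hyperSum_one hp2 hunit]
  linear_combination -2 * (s * e) * (-2 * (s * e) + 1) * X * hzero - p * hX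

lemma hyperSum_of_mod_four_eq_three (hp3 : 3 < p) (hp4 : p % 4 = 3) {e : ModCube p}
    (he : 12 * e = 1) :
    p * hyperSum p 0 (-2 * e) = 0 ∧
      p * (hyperSum p 1 (-2 * e) * (gamma p e * gamma p (5 * e)) ^ 2) = -4 * p := by
  have hmod := mod_twelve_of_prime hp3
  have hunit := isUnit_of_twelve_mul he
  obtain hr | hr : p % 12 = 7 ∨ p % 12 = 11 := by omega
  · have hs : 12 * (p / 12) + (1 + 6) = p := by omega
    have hX := hyperSum_of_sq_mul_gamma (by omega) he hs
      (sq_mul_hyperSum_sub_one_mul_gamma hp3 hp4 he hs (by simpa using hunit))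
    rwa [Nat.cast_one, one_mul, show (6 - 1 : ModCube p) = 5 by norm_num] at hX
  · have hs : 12 * (p / 12) + (5 + 6) = p := by omega
    have hfive := isUnit_natCast_of_lt (by norm_num : 0 < 5) (by omega : 5 < p)
    have hX := hyperSum_of_sq_mul_gamma (by omega) he hs
      (sq_mul_hyperSum_sub_one_mul_gamma hp3 hp4 he hs (hfive.mul hunit))
    rwa [Nat.cast_ofNat, show (6 - 5 : ModCube p) = 1 by norm_num, one_mul,
      hyperSum_neg_ten_mul 0 he, hyperSum_neg_ten_mul 1 he, mul_comm (gamma p (5 * e))] at hX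

end MinusOneSixth

section QuadraticCharacter

lemma pow_p_sq_eq_of_p_dvd_sub {p : ℕ} {x y : ModCube p} (h : (p : ModCube p) ∣ x - y) :
    x ^ p ^ 2 = y ^ p ^ 2 := by
  have hdvd := dvd_sub_pow_of_dvd_sub h 2
  rw [p_pow_three, zero_dvd_iff] at hdvd
  exact sub_eq_zero.1 hdvd

variable {p : ℕ} [hp : Fact p.Prime]

lemma p_dvd_sub_of_residue_eq {x y : ModCube p} (h : residue p x = residue p y) :
    (p : ModCube p) ∣ x - y := by
  rw [← residue_eq_zero_iff, map_sub, h, sub_self]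

lemma intCast_pow_eq_legendreSym (hp2 : p ≠ 2) (a : ℤ) :
    (a : ModCube p) ^ ((p - 1) / 2 * p ^ 2) = (legendreSym p a : ModCube p) := by
  have hodd : Odd (p ^ 2) := (hp.out.odd_of_ne_two hp2).pow
  have hpow : ((legendreSym p a : ℤ) : ModCube p) ^ p ^ 2 = legendreSym p a := by
    by_cases ha : (a : ZMod p) = 0
    · rw [(legendreSym.eq_zero_iff p a).2 ha, Int.cast_zero, zero_pow hodd.pos.ne']
    · obtain h | h := legendreSym.eq_one_or_neg_one p ha
      · rw [h, Int.cast_one, one_pow]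
      · rw [h, Int.cast_neg, Int.cast_one, hodd.neg_one_pow]
  have hhalf : (p - 1) / 2 = p / 2 := by have := two_mul_div_two_add_one hp2; omega
  rw [pow_mul, ← hpow]
  refine pow_p_sq_eq_of_p_dvd_sub (p_dvd_sub_of_residue_eq ?_)
  rw [map_pow, map_intCast, map_intCast, legendreSym.eq_pow, hhalf]

lemma legendreSym_three (hp3 : 3 < p) :
    legendreSym 3 p = (-1) ^ ((p - 1) / 2) * legendreSym p 3 := by
  have hrec := legendreSym.quadratic_reciprocity' (p := p) (q := 3) (by omega) (by norm_num)
  have hhalf := two_mul_div_two_add_one (p := p) (by omega)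
  rw [show p / 2 * (3 / 2) = (p - 1) / 2 by omega] at hrec
  exact_mod_cast hrec

lemma legendreSym_three_sq (hp3 : 3 < p) : (legendreSym 3 p : ModCube p) ^ 2 = 1 := by
  have hsq : legendreSym 3 p ^ 2 = 1 := legendreSym.sq_one 3 fun h => by
    have hdvd := (ZMod.natCast_eq_zero_iff p 3).1 (by exact_mod_cast h)
    have := (Nat.prime_dvd_prime_iff_eq Nat.prime_three hp.out).1 hdvd
    omega
  exact_mod_cast congrArg (Int.cast : ℤ → ModCube p) hsq

end QuadraticCharacter

section Triplication

variable {p : ℕ} [hp : Fact p.Prime]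

lemma gamma_triplication_sq (hp3 : 3 < p) {e : ModCube p} (he : 12 * e = 1) {N : ℕ}
    (hN : 4 * (N : ModCube p) = 1) :
    (gamma p e * gamma p (5 * e)) ^ 2 * (3 ^ Nat.count (¬p ∣ ·) N) ^ 2 = gamma p (3 * e) ^ 4 := by
  have hN' : (N : ModCube p) = 3 * e := by linear_combination 3 * e * hN - N * he
  have hmul := prod_gamma_mul_add_mul hp3 (m := 3) (d := 4 * e)
    (by push_cast; linear_combination he) N
  generalize Nat.count (¬p ∣ ·) N = n at *
  rw [Finset.prod_range_succ, Finset.prod_range_succ, Finset.prod_range_one,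
    Finset.prod_range_succ, Finset.prod_range_succ, Finset.prod_range_one, hN'] at hmul
  push_cast at hmul
  rw [show 3 * e * (4 * e) + 0 * (4 * e) = e by linear_combination e * he,
    show 3 * e * (4 * e) + 1 * (4 * e) = 5 * e by linear_combination e * he,
    show 3 * e * (4 * e) + 2 * (4 * e) = 1 - 3 * e by linear_combination (e + 1) * he,
    show 2 * (4 * e) = 1 - 4 * e by linear_combination he, zero_mul, one_mul, gamma_zero,
    one_mul] at hmul
  have hthird := gamma_sq_mul_gamma_one_sub_sq hp3 (4 * e)
  have hquarter := gamma_sq_mul_gamma_one_sub_sq hp3 (3 * e)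
  have hpow : (4 * e) ^ n * 3 ^ n = 1 := by
    rw [← mul_pow, show 4 * e * 3 = 1 by linear_combination he, one_pow]
  have hpow_sq : ((4 * e) ^ n) ^ 2 * (3 ^ n) ^ 2 = 1 := by rw [← mul_pow, hpow, one_pow]
  have hsq := congrArg (· ^ 2) hmul
  generalize (4 * e) ^ n = u at *
  generalize (3 : ModCube p) ^ n = v at *
  linear_combination v ^ 2 * gamma p (3 * e) ^ 2 * hsq +
    v ^ 2 * gamma p (3 * e) ^ 4 * u ^ 2 * hthird + gamma p (3 * e) ^ 4 * hpow_sq -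
    (gamma p e * gamma p (5 * e)) ^ 2 * v ^ 2 * hquarter

lemma gamma_mul_gamma_sq_of_mod_four_eq_one (hp3 : 3 < p) (hp4 : p % 4 = 1) {e : ModCube p}
    (he : 12 * e = 1) :
    (gamma p e * gamma p (5 * e)) ^ 2 = legendreSym 3 p * gamma p (3 * e) ^ 4 := by
  obtain ⟨m, hm⟩ : ∃ m, p = 4 * m + 1 := ⟨p / 4, by omega⟩
  -- `N = (3 * p ^ 3 + 1) / 4`
  set N := p * (3 * (4 * m ^ 2 + 2 * m)) + (3 * m + 1) with hN
  have hfour : 4 * N = 3 * p ^ 3 + 1 := by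
    rw [hN]
    generalize p = q at hm
    subst hm
    ring
  have hN4 : 4 * (N : ModCube p) = 1 := by
    have hcast := congrArg (Nat.cast : ℕ → ModCube p) hfour
    push_cast at hcast
    linear_combination hcast + 3 * p_pow_three (p := p)
  have hcount : Nat.count (¬p ∣ ·) N * 2 = (p - 1) / 2 * p ^ 2 * 3 := by
    rw [hN, count_not_dvd (by omega), show (p - 1) / 2 = 2 * m by omega,
      show p - 1 = 4 * m by omega]
    generalize p = q at hm
    subst hm
    ring
  have htriple := gamma_triplication_sq hp3 he hN4
  have hthree := intCast_pow_eq_legendreSym (p := p) (by omega) 3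
  have hrec := legendreSym_three hp3
  rw [Even.neg_one_pow (by rw [Nat.even_iff]; omega), one_mul] at hrec
  rw [← hrec, Int.cast_ofNat] at hthree
  rw [← pow_mul, hcount, pow_mul, hthree] at htriple
  linear_combination legendreSym 3 p * htriple - (gamma p e * gamma p (5 * e)) ^ 2 *
    ((legendreSym 3 p : ModCube p) ^ 2 + 1) * legendreSym_three_sq hp3

lemma gamma_mul_gamma_sq_of_mod_four_eq_three (hp3 : 3 < p) (hp4 : p % 4 = 3) {e : ModCube p}
    (he : 12 * e = 1) :
    (gamma p e * gamma p (5 * e)) ^ 2 = -3 * legendreSym 3 p * gamma p (3 * e) ^ 4 := by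
  obtain ⟨m, hm⟩ : ∃ m, p = 4 * m + 3 := ⟨p / 4, by omega⟩
  -- `N = (p ^ 3 + 1) / 4`
  set N := p * (4 * m ^ 2 + 6 * m + 2) + (m + 1) with hN
  have hfour : 4 * N = p ^ 3 + 1 := by
    rw [hN]
    generalize p = q at hm
    subst hm
    ring
  have hN4 : 4 * (N : ModCube p) = 1 := by
    have hcast := congrArg (Nat.cast : ℕ → ModCube p) hfour
    push_cast at hcast
    linear_combination hcast + p_pow_three (p := p)
  have hcount : Nat.count (¬p ∣ ·) N * 2 + 1 = (p - 1) / 2 * p ^ 2 := by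
    rw [hN, count_not_dvd (by omega), show (p - 1) / 2 = 2 * m + 1 by omega,
      show p - 1 = 4 * m + 2 by omega]
    generalize p = q at hm
    subst hm
    ring
  have htriple := gamma_triplication_sq hp3 he hN4
  have hthree := intCast_pow_eq_legendreSym (p := p) (by omega) 3
  have hrec := legendreSym_three hp3
  rw [Odd.neg_one_pow (by rw [Nat.odd_iff]; omega), neg_one_mul] at hrec
  rw [← neg_eq_iff_eq_neg.2 hrec, Int.cast_ofNat, Int.cast_neg, ← hcount, pow_add, pow_mul,
    pow_one] at hthree
  linear_combination -3 * legendreSym 3 p * htriple + (gamma p e * gamma p (5 * e)) ^ 2 *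
    legendreSym 3 p * hthree - (gamma p e * gamma p (5 * e)) ^ 2 * legendreSym_three_sq hp3

end Triplication

section UnitFactorial

/-- The product of the positive integers up to `n` that are prime to `p`. -/
def unitFactorial (p n : ℕ) : ℕ := ∏ i ∈ Finset.range n, if p ∣ i + 1 then 1 else i + 1

lemma unitFactorial_succ (p n : ℕ) :
    unitFactorial p (n + 1) = unitFactorial p n * if p ∣ n + 1 then 1 else n + 1 :=
  Finset.prod_range_succ _ _

lemma factorial_eq_mul_unitFactorial (p n : ℕ) :
    n.factorial = p ^ (n / p) * (n / p).factorial * unitFactorial p n := by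
  induction n with
  | zero => simp [unitFactorial]
  | succ n ih =>
    rw [Nat.factorial_succ, ih, unitFactorial_succ, Nat.succ_div]
    split_ifs with hdvd
    · have hquot : n + 1 = p * (n / p + 1) := by
        rw [← Nat.succ_div_of_dvd hdvd, Nat.mul_div_cancel' hdvd]
      rw [Nat.factorial_succ, hquot]
      generalize n / p = q
      ring
    · rw [add_zero]
      ring

lemma choose_mul_unitFactorial {p a b : ℕ} (hab : (a + b) / p = a / p + b / p) :
    (a + b).choose a * unitFactorial p a * unitFactorial p b =
      (a / p + b / p).choose (a / p) * unitFactorial p (a + b) := by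
  have hchoose := Nat.add_choose_mul_factorial_mul_factorial a b
  have hquot := Nat.add_choose_mul_factorial_mul_factorial (a / p) (b / p)
  rw [factorial_eq_mul_unitFactorial p a, factorial_eq_mul_unitFactorial p b,
    factorial_eq_mul_unitFactorial p (a + b), hab, ← hquot] at hchoose
  have hpos : 0 < p ^ (a / p + b / p) * ((a / p).factorial * (b / p).factorial) := by
    rcases p.eq_zero_or_pos with rfl | hp0
    · simp
    · positivity
  refine Nat.eq_of_mul_eq_mul_left hpos ?_
  rw [pow_add] at hchoose ⊢
  rw [Nat.choose_symm_add (a := a), Nat.choose_symm_add (a := a / p)]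
  linarith

variable {p : ℕ} [hp : Fact p.Prime]

lemma gamma_natCast_add_one (hp3 : 3 < p) (n : ℕ) :
    gamma p ((n + 1 : ℕ) : ModCube p) = (-1) ^ (n + 1) * (unitFactorial p n : ModCube p) := by
  rw [gamma_natCast hp3]
  induction n with
  | zero =>
    rw [gammaNat_succ, gammaFactor_of_not_isUnit (by simpa using not_isUnit_p_mul (p := p) 0)]
    simp [gammaNat, unitFactorial]
  | succ n ih =>
    rw [gammaNat_succ, ih, unitFactorial_succ]
    split_ifs with hdvd
    · rw [gammaFactor_of_not_isUnit (isUnit_natCast_iff.not.2 (not_not.2 hdvd))]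
      push_cast
      ring
    · rw [gammaFactor_of_isUnit (isUnit_natCast_iff.2 hdvd)]
      push_cast
      ring

lemma choose_mul_gamma (hp3 : 3 < p) {a b : ℕ} (hab : (a + b) / p = a / p + b / p) :
    ((a + b).choose a : ModCube p) * gamma p ((a + 1 : ℕ) : ModCube p) *
        gamma p ((b + 1 : ℕ) : ModCube p) =
      -((a / p + b / p).choose (a / p) : ModCube p) * gamma p ((a + b + 1 : ℕ) : ModCube p) := by
  have hcast := congrArg (Nat.cast : ℕ → ModCube p) (choose_mul_unitFactorial hab)
  push_cast at hcast
  rw [gamma_natCast_add_one hp3, gamma_natCast_add_one hp3, gamma_natCast_add_one hp3]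
  linear_combination (-1) ^ a * (-1) ^ b * hcast

end UnitFactorial

section Duplication

variable {p : ℕ} [hp : Fact p.Prime]

lemma exists_two_pow_eq (hp2 : p ≠ 2) : ∃ q, (2 : ModCube p) ^ (p - 1) = 1 + p * q := by
  obtain ⟨q, hq⟩ : (p : ModCube p) ∣ 2 ^ (p - 1) - 1 := by
    have htwo := isUnit_iff_residue_ne_zero.1 (isUnit_two hp2)
    rw [← residue_eq_zero_iff, map_sub, map_pow, map_one, ZMod.pow_card_sub_one_eq_one htwo,
      sub_self]
  exact ⟨q, by linear_combination hq⟩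

lemma exists_p_mul_gamma_add_p_mul (hp3 : 3 < p) (x : ModCube p) :
    ∃ a, ∀ y, p * gamma p (x + p * y) = p * (gamma p x * (1 + p * a * y)) := by
  obtain ⟨a, b, hab⟩ := gamma_add_p_mul hp3 x
  exact ⟨a, fun y => by rw [hab]; linear_combination gamma p x * b * y ^ 2 * p_pow_three (p := p)⟩

lemma gamma_inv_four_duplication (hp3 : 3 < p) {c : ModCube p} (hc : 4 * c = 1) :
    ∃ u, IsUnit u ∧ ∀ n : ℕ, gamma p (c + p * (n * 2⁻¹)) * gamma p (1 - c + p * (n * 2⁻¹)) =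
      u * gamma p (2⁻¹ + p * n) * 2⁻¹ ^ (n * (p - 1)) := by
  have hp2 : p ≠ 2 := by omega
  have hhalf := two_mul_inv_two hp2
  obtain ⟨M, hM⟩ : ∃ M, p = 2 * M + 1 := ⟨(p - 1) / 2, (two_mul_div_two_add_one hp2).symm⟩
  -- `(p ^ 2 - 1) / 2 * p + (p + 1) / 2 = (p ^ 3 + 1) / 2`
  have hN : ∀ n : ℕ, ((p * (2 * M ^ 2 + 2 * M + n) + (M + 1) : ℕ) : ModCube p) = 2⁻¹ + p * n := by
    intro n
    have hMc := congrArg (Nat.cast : ℕ → ModCube p) hM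
    push_cast at hMc ⊢
    generalize (2 : ModCube p)⁻¹ = d at *
    linear_combination -d * (p ^ 2 + p * (2 * M + 1) + 1) * hMc + d * p_pow_three (p := p) -
      (2 * p * M ^ 2 + 2 * p * M + M + 1) * hhalf
  refine ⟨gamma p 2⁻¹ * 2⁻¹ ^ ((2 * M ^ 2 + 2 * M) * (p - 1) + M),
    (isUnit_gamma _).mul ((isUnit_inv_two hp2).pow _), fun n => ?_⟩
  have hdup := prod_gamma_mul_add_mul hp3 (m := 2) (d := (2⁻¹ : ModCube p))
    (by exact_mod_cast hhalf) (p * (2 * M ^ 2 + 2 * M + n) + (M + 1))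
  rw [count_not_dvd (by omega), hN, Finset.prod_range_succ, Finset.prod_range_one,
    Finset.prod_range_succ, Finset.prod_range_one, add_mul (2 * M ^ 2 + 2 * M), add_right_comm,
    pow_add _ _ (n * (p - 1))] at hdup
  push_cast at hdup
  generalize (2 : ModCube p)⁻¹ = d at *
  have hd : d * d = c := by linear_combination c * (2 * d + 1) * hhalf - d * d * hc
  rw [show (d + p * n) * d + 0 * d = c + p * (n * d) by linear_combination hd,
    show (d + p * n) * d + 1 * d = 1 - c + p * (n * d) by
      linear_combination (d + 1) * hhalf - hd, zero_mul, one_mul, gamma_zero, one_mul] at hdup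
  linear_combination hdup

lemma p_sq_mul_eq_of_duplication (hp3 : 3 < p) {c a w q : ModCube p} (hc : 4 * c = 1)
    (ha : ∀ y, p * gamma p (c + p * y) = p * (gamma p c * (1 + p * a * y)))
    (hw : ∀ y, p * gamma p (2⁻¹ + p * y) = p * (gamma p 2⁻¹ * (1 + p * w * y)))
    (hq : (2 : ModCube p) ^ (p - 1) = 1 + p * q) : (p : ModCube p) ^ 2 * w = p ^ 2 * (a + q) := by
  have hp2 : p ≠ 2 := by omega
  have hhalf := two_mul_inv_two hp2
  obtain ⟨u, hu, hdup⟩ := gamma_inv_four_duplication hp3 hc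
  have hdup_zero := hdup 0
  have hdup_two := hdup 2
  have hrefl := reflection_add_p_mul hp3 c (-1)
  rw [reflection, reflection, show 1 - (c + p * -1) = 1 - c + p * 1 by ring] at hrefl
  have hneg := ha (-1)
  have hpos := ha 1
  have htwo := hw 2
  rw [Nat.cast_ofNat, hhalf] at hdup_two
  simp only [Nat.cast_zero, zero_mul, mul_zero, add_zero, pow_zero, mul_one] at hdup_zero
  have hpow : (2⁻¹ : ModCube p) ^ (2 * (p - 1)) * (1 + p * q) ^ 2 = 1 := by
    rw [← hq, ← pow_mul, mul_comm (p - 1) 2, ← mul_pow, mul_comm, hhalf, one_pow]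
  generalize (2⁻¹ : ModCube p) ^ (2 * (p - 1)) = D at *
  have hunit : IsUnit (2 * (u * gamma p 2⁻¹ * gamma p c)) :=
    (isUnit_two hp2).mul ((hu.mul (isUnit_gamma _)).mul (isUnit_gamma _))
  refine hunit.mul_left_cancel ?_
  linear_combination u * gamma p 2⁻¹ * (1 + p * q) ^ 2 * hpos +
    p * (1 + p * q) ^ 2 * gamma p (c + p * 1) * (hdup_zero + hrefl) -
    p * (1 + p * q) ^ 2 * gamma p (c + p * -1) * hdup_two -
    p * gamma p (c + p * -1) * u * gamma p (2⁻¹ + p * 2) * hpow -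
    gamma p (c + p * -1) * u * htwo - u * gamma p 2⁻¹ * (1 + 2 * p * w) * hneg +
    u * gamma p 2⁻¹ * gamma p c * (q ^ 2 + 2 * a * q + 2 * w * a + p * a * q ^ 2) *
      p_pow_three (p := p)

lemma choose_mul_gamma_inv_four_sq (hp3 : 3 < p) (hp4 : p % 4 = 3) {c : ModCube p}
    (hc : 4 * c = 1) :
    (((p - 1) / 2).choose (p / 4) : ModCube p) * gamma p (c + p * c) ^ 2 * (c + p * c) =
      gamma p (2⁻¹ + p * 2⁻¹) := by
  have hhalf := two_mul_inv_two (p := p) (by omega)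
  obtain ⟨m, hm⟩ : ∃ m, p = 4 * m + 3 := ⟨p / 4, by omega⟩
  have hmc := congrArg (Nat.cast : ℕ → ModCube p) hm
  push_cast at hmc
  have hlow : ((m + 1 : ℕ) : ModCube p) = c + p * c := by
    push_cast
    linear_combination -c * hmc - (m + 1) * hc
  have hhigh : ((m + (m + 1) + 1 : ℕ) : ModCube p) = 2⁻¹ + p * 2⁻¹ := by
    push_cast
    generalize (2 : ModCube p)⁻¹ = d at *
    linear_combination -d * hmc - (2 * m + 2) * hhalf
  have hchoose := choose_mul_gamma hp3 (a := m) (b := m + 1) (by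
    rw [Nat.div_eq_of_lt, Nat.div_eq_of_lt, Nat.div_eq_of_lt] <;> omega)
  rw [Nat.div_eq_of_lt (show m < p by omega), Nat.div_eq_of_lt (show m + 1 < p by omega),
    Nat.cast_succ (m + 1), gamma_add_one hp3,
    gammaFactor_of_isUnit (isUnit_natCast_of_lt (by omega) (by omega)), hlow, hhigh,
    Nat.choose_self, Nat.cast_one] at hchoose
  rw [show (p - 1) / 2 = m + (m + 1) by omega, show p / 4 = m by omega]
  linear_combination -hchoose

lemma p_mul_gamma_inv_two_add_sq (hp3 : 3 < p) (hp4 : p % 4 = 3) {w : ModCube p}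
    (hw : ∀ y, p * gamma p (2⁻¹ + p * y) = p * (gamma p 2⁻¹ * (1 + p * w * y))) :
    p * gamma p (2⁻¹ + p * 2⁻¹) ^ 2 = p * (1 + p * w) := by
  have hhalf := two_mul_inv_two (p := p) (by omega)
  have hsq := gamma_inv_two_sq (p := p) hp3
  rw [Even.neg_one_pow (by rw [Nat.even_iff]; omega)] at hsq
  have hhigh := hw 2⁻¹
  generalize gamma p (2⁻¹ + p * 2⁻¹) = T at *
  generalize gamma p 2⁻¹ = H at *
  generalize (2 : ModCube p)⁻¹ = d at *
  linear_combination (T + H * (1 + p * w * d)) * hhigh + p * (1 + p * w * d) ^ 2 * hsq +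
    p ^ 2 * w * hhalf + w ^ 2 * d ^ 2 * p_pow_three (p := p)

lemma p_mul_gamma_add_pow_four {p : ℕ} {a c : ModCube p} (hc : 4 * c = 1)
    (ha : ∀ y, p * gamma p (c + p * y) = p * (gamma p c * (1 + p * a * y))) :
    p * gamma p (c + p * c) ^ 4 = p * (gamma p c ^ 4 * (1 + p * a)) := by
  have hlow := ha c
  generalize gamma p (c + p * c) = L at *
  generalize gamma p c = G at *
  linear_combination (L + G * (1 + p * a * c)) * (L ^ 2 + (G * (1 + p * a * c)) ^ 2) * hlow +
    G ^ 4 * (p ^ 2 * a * hc) +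
    G ^ 4 * a ^ 2 * c ^ 2 * (6 + 4 * p * a * c + p ^ 2 * a ^ 2 * c ^ 2) * p_pow_three (p := p)

lemma p_mul_choose_sq_mul_gamma_pow_four (hp3 : 3 < p) (hp4 : p % 4 = 3) {c : ModCube p}
    (hc : 4 * c = 1) :
    p * ((2 * p + 2 - 2 ^ (p - 1)) * (((p - 1) / 2).choose (p / 4) : ModCube p) ^ 2 *
      gamma p c ^ 4) = 16 * p := by
  have hp2 : p ≠ 2 := by omega
  obtain ⟨a, ha⟩ := exists_p_mul_gamma_add_p_mul hp3 c
  obtain ⟨w, hw⟩ := exists_p_mul_gamma_add_p_mul hp3 (2⁻¹ : ModCube p)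
  obtain ⟨q, hq⟩ := exists_two_pow_eq hp2
  have hlog := p_sq_mul_eq_of_duplication hp3 hc ha hw hq
  have hchoose := choose_mul_gamma_inv_four_sq hp3 hp4 hc
  have hT := p_mul_gamma_inv_two_add_sq hp3 hp4 hw
  have hL := p_mul_gamma_add_pow_four hc ha
  rw [hq]
  generalize gamma p (c + p * c) = L at *
  generalize gamma p (2⁻¹ + p * 2⁻¹) = T at *
  generalize gamma p c = G at *
  generalize (((p - 1) / 2).choose (p / 4) : ModCube p) = C at *
  have hTL : p * (C * L ^ 2 * (c + p * c)) ^ 2 = p * T ^ 2 := by rw [hchoose]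
  have hCG : p * (C ^ 2 * G ^ 4 * ((1 + p) ^ 2 * (1 + p * a))) = 16 * p * (1 + p * w) := by
    linear_combination 16 * hTL - 16 * C ^ 2 * (c + p * c) ^ 2 * hL + 16 * hT -
      p * C ^ 2 * G ^ 4 * (1 + p * a) * (1 + p) ^ 2 * (4 * c + 1) * hc
  have hCG' : p * (C ^ 2 * G ^ 4) = 16 * p * (1 + p * (q - 2)) := by
    linear_combination (1 - p * (2 + a)) * hCG + 16 * hlog -
      (C ^ 2 * G ^ 4 * (1 + 2 * a - (2 + a) ^ 2 + p * (a - (1 + 2 * a) * (2 + a)) -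
        p ^ 2 * a * (2 + a)) + 16 * w * (2 + a)) * p_pow_three (p := p)
  linear_combination (1 + p * (2 - q)) * hCG' - 16 * (2 - q) ^ 2 * p_pow_three (p := p)

end Duplication

section Teichmuller

variable {p : ℕ} [hp : Fact p.Prime]

lemma residue_natCast_val (t : ZMod p) : residue p (t.val : ModCube p) = t := by
  rw [map_natCast, ZMod.natCast_zmod_val]

/-- The Teichmüller character modulo `p ^ 3`: the lift of `t` to a `(p - 1)`-th root of unity, which
is the `p ^ 2`-th power of any lift. -/
def teichmuller (p : ℕ) [hp : Fact p.Prime] : MulChar (ZMod p) (ModCube p) where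
  toFun t := (t.val : ModCube p) ^ p ^ 2
  map_one' := by rw [ZMod.val_one, Nat.cast_one, one_pow]
  map_mul' s t := by
    rw [← mul_pow]
    refine pow_p_sq_eq_of_p_dvd_sub (p_dvd_sub_of_residue_eq ?_)
    rw [map_mul, residue_natCast_val, residue_natCast_val, residue_natCast_val]
  map_nonunit' t ht := by
    rw [isUnit_iff_ne_zero, not_not] at ht
    simp [ht, hp.out.ne_zero]

lemma teichmuller_residue (x : ModCube p) : teichmuller p (residue p x) = x ^ p ^ 2 :=
  pow_p_sq_eq_of_p_dvd_sub (p_dvd_sub_of_residue_eq (residue_natCast_val _))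

lemma residue_teichmuller (t : ZMod p) : residue p (teichmuller p t) = t := by
  nth_rw 1 [← residue_natCast_val t]
  rw [teichmuller_residue, map_pow, residue_natCast_val, sq, pow_mul, ZMod.pow_card, ZMod.pow_card]

lemma teichmuller_neg_one (hp2 : p ≠ 2) : teichmuller p (-1) = -1 := by
  rw [show (-1 : ZMod p) = residue p (-1) by simp, teichmuller_residue]
  exact ((hp.out.odd_of_ne_two hp2).pow).neg_one_pow

lemma teichmuller_pow_card_sub_one : teichmuller p ^ (p - 1) = 1 := by
  rw [← ZMod.card_units p]
  exact MulChar.pow_card_eq_one _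

lemma sum_teichmuller_pow_of_not_dvd {n : ℕ} (hn : ¬p - 1 ∣ n) :
    ∑ t, (teichmuller p ^ n) t = 0 := by
  obtain ⟨g, hg⟩ := IsCyclic.exists_generator (α := (ZMod p)ˣ)
  have hne : (g : ZMod p) ^ n ≠ 1 := by
    rw [← Units.val_pow_eq_pow_val, Ne, Units.val_eq_one, ← orderOf_dvd_iff_pow_eq_one,
      orderOf_eq_card_of_forall_mem_zpowers hg, Nat.card_eq_fintype_card, ZMod.card_units]
    exact hn
  have hunit : IsUnit ((teichmuller p ^ n) g - 1) := by
    rw [isUnit_iff_residue_ne_zero, MulChar.pow_apply_coe, map_sub, map_pow, residue_teichmuller,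
      map_one]
    exact sub_ne_zero.2 hne
  refine hunit.mul_left_cancel ?_
  rw [sub_mul, Finset.mul_sum, one_mul, mul_zero, sub_eq_zero]
  simp only [← map_mul]
  exact Equiv.sum_comp (Units.mulLeft g) (teichmuller p ^ n)

lemma sum_teichmuller_pow_of_dvd {n : ℕ} (hn : p - 1 ∣ n) :
    ∑ t, (teichmuller p ^ n) t = p - 1 := by
  classical
  obtain ⟨k, rfl⟩ := hn
  rw [pow_mul, teichmuller_pow_card_sub_one, one_pow, MulChar.sum_one_eq_card_units,
    ZMod.card_units, Nat.cast_sub hp.out.one_le, Nat.cast_one]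

end Teichmuller

section QuarticJacobiSum

variable {p m : ℕ} [hp : Fact p.Prime]

/-- The Jacobi sum of the quartic character `ω ^ (3 * m)` and the quadratic character
`ω ^ (2 * m)`, where `ω` is the Teichmüller character and `p = 4 * m + 1`. -/
noncomputable def quarticJacobiSum (p m : ℕ) [Fact p.Prime] : ModCube p :=
  jacobiSum (teichmuller p ^ (3 * m)) (teichmuller p ^ (2 * m))

-- `8 * e = 15 * x - 10 * x ^ 3 + 3 * x ^ 5` has a triple zero at `x = e` when `e = ± 1`.
lemma eight_mul_pow_p_sq_of_sq_eq_one (hp3 : 3 < p) {x e : ModCube p} (he : e ^ 2 = 1)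
    (hxe : (p : ModCube p) ∣ x - e) : 8 * x ^ p ^ 2 = 15 * x - 10 * x ^ 3 + 3 * x ^ 5 := by
  have hodd : Odd (p ^ 2) := (hp.out.odd_of_ne_two (by omega)).pow
  have hpow : e ^ p ^ 2 = e := by
    obtain ⟨k, hk⟩ := hodd
    rw [hk, pow_succ, pow_mul, he, one_pow, one_mul]
  obtain ⟨y, hy⟩ := hxe
  rw [pow_p_sq_eq_of_p_dvd_sub ⟨y, hy⟩, hpow, eq_add_of_sub_eq hy]
  linear_combination
    (e * (-3 * e ^ 2 + 7) - 30 * e * (p * y) ^ 2 + 15 * (p * y) * (1 - e ^ 2)) * he -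
      (15 * e * p * y ^ 4 + 30 * e ^ 2 * y ^ 3 - 10 * y ^ 3 + 3 * p ^ 2 * y ^ 5) *
        p_pow_three (p := p)

lemma eight_mul_pow_p_sq (hp13 : 13 ≤ p) (hm : p = 4 * m + 1) (z : ModCube p) :
    8 * (z ^ (2 * m)) ^ p ^ 2 = 15 * z ^ (2 * m) - 10 * z ^ (6 * m) + 3 * z ^ (10 * m) := by
  rw [show 6 * m = 2 * m * 3 by ring, show 10 * m = 2 * m * 5 by ring, pow_mul z (2 * m) 3,
    pow_mul z (2 * m) 5]
  by_cases hz : IsUnit z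
  · have hfermat := ZMod.pow_card_sub_one_eq_one (isUnit_iff_residue_ne_zero.1 hz)
    rw [show p - 1 = 2 * m * 2 by omega, pow_mul, ← map_pow, sq_eq_one_iff] at hfermat
    rcases hfermat with h | h
    · exact eight_mul_pow_p_sq_of_sq_eq_one (by omega) (one_pow 2)
        (p_dvd_sub_of_residue_eq (by rw [h, map_one]))
    · exact eight_mul_pow_p_sq_of_sq_eq_one (by omega) neg_one_sq
        (p_dvd_sub_of_residue_eq (by rw [h, map_neg, map_one]))
  · obtain ⟨y, rfl⟩ := p_dvd_iff_not_isUnit.2 hz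
    have hzero : (p * y) ^ (2 * m) = 0 := by
      rw [show 2 * m = 3 + (2 * m - 3) by omega, pow_add, mul_pow, p_pow_three, zero_mul, zero_mul]
    simp [hzero, hp.out.ne_zero]

lemma eight_mul_teichmuller_pow_one_sub (hp13 : 13 ≤ p) (hm : p = 4 * m + 1) (t : ZMod p) :
    8 * (teichmuller p ^ (2 * m)) (1 - t) = 15 * (1 - teichmuller p t) ^ (2 * m) -
      10 * (1 - teichmuller p t) ^ (6 * m) + 3 * (1 - teichmuller p t) ^ (10 * m) := by
  have hres : residue p (1 - teichmuller p t) = 1 - t := by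
    rw [map_sub, map_one, residue_teichmuller]
  rw [MulChar.pow_apply' _ (by omega : 2 * m ≠ 0), ← hres, teichmuller_residue, pow_right_comm]
  exact eight_mul_pow_p_sq hp13 hm _

lemma sum_teichmuller_pow_mul_one_sub_pow (a N : ℕ) :
    ∑ t, (teichmuller p ^ a) t * (1 - teichmuller p t) ^ N =
      (p - 1) * ∑ j ∈ Finset.range (N + 1) with p - 1 ∣ a + j,
        (-1) ^ j * (N.choose j : ModCube p) := by
  have hexpand : ∀ t, (teichmuller p ^ a) t * (1 - teichmuller p t) ^ N =
      ∑ j ∈ Finset.range (N + 1),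
        (-1) ^ j * (N.choose j : ModCube p) * (teichmuller p ^ (a + j)) t := by
    intro t
    rw [sub_eq_neg_add, add_pow, Finset.mul_sum]
    refine Finset.sum_congr rfl fun j _ => ?_
    rcases eq_or_ne t 0 with rfl | ht
    · simp only [MulChar.map_zero, zero_mul, mul_zero]
    · rw [one_pow, neg_pow, pow_add, MulChar.mul_apply, ← Units.val_mk0 ht,
        MulChar.pow_apply_coe _ j]
      ring
  rw [Finset.sum_congr rfl fun t _ => hexpand t, Finset.sum_comm, Finset.sum_filter,
    Finset.mul_sum]
  refine Finset.sum_congr rfl fun j _ => ?_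
  rw [← Finset.mul_sum]
  split_ifs with hdvd
  · rw [sum_teichmuller_pow_of_dvd hdvd, mul_comm]
  · rw [sum_teichmuller_pow_of_not_dvd hdvd, mul_zero, mul_zero]

lemma four_mul_dvd_three_mul_add_iff {m j : ℕ} (hm0 : 0 < m) (hj : j ≤ 10 * m) :
    4 * m ∣ 3 * m + j ↔ j = m ∨ j = 5 * m ∨ j = 9 * m := by
  constructor
  · rintro ⟨k, hk⟩
    have hk4 : k < 4 := Nat.lt_of_mul_lt_mul_left (a := 4 * m) (by omega)
    interval_cases k <;> omega
  · rintro (rfl | rfl | rfl)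
    exacts [⟨1, by ring⟩, ⟨2, by ring⟩, ⟨3, by ring⟩]

lemma filter_four_mul_dvd_three_mul_add {m : ℕ} (hm0 : 0 < m) :
    {j ∈ Finset.range (2 * m + 1) | 4 * m ∣ 3 * m + j} = {m} ∧
      {j ∈ Finset.range (6 * m + 1) | 4 * m ∣ 3 * m + j} = {m, 5 * m} ∧
      {j ∈ Finset.range (10 * m + 1) | 4 * m ∣ 3 * m + j} = {m, 5 * m, 9 * m} := by
  refine ⟨?_, ?_, ?_⟩ <;> ext j
  all_goals
    have := four_mul_dvd_three_mul_add_iff (j := j) hm0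
    simp only [Finset.mem_filter, Finset.mem_range, Finset.mem_singleton, Finset.mem_insert]
    omega

lemma eight_mul_quarticJacobiSum (hp13 : 13 ≤ p) (hm : p = 4 * m + 1) :
    8 * quarticJacobiSum p m = (-1) ^ m * (p - 1) *
      (15 * ((2 * m).choose m : ModCube p) - 20 * ((6 * m).choose m : ModCube p) +
        6 * ((10 * m).choose m : ModCube p) + 3 * ((10 * m).choose (5 * m) : ModCube p)) := by
  have hm0 : 0 < m := by omega
  have hp1 : p - 1 = 4 * m := by omega
  have hterm : ∀ t, 8 * ((teichmuller p ^ (3 * m)) t * (teichmuller p ^ (2 * m)) (1 - t)) =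
      15 * ((teichmuller p ^ (3 * m)) t * (1 - teichmuller p t) ^ (2 * m)) -
      10 * ((teichmuller p ^ (3 * m)) t * (1 - teichmuller p t) ^ (6 * m)) +
      3 * ((teichmuller p ^ (3 * m)) t * (1 - teichmuller p t) ^ (10 * m)) := by
    intro t
    linear_combination
      (teichmuller p ^ (3 * m)) t * eight_mul_teichmuller_pow_one_sub hp13 hm t
  obtain ⟨hfilter_two, hfilter_six, hfilter_ten⟩ := filter_four_mul_dvd_three_mul_add hm0
  have hneg_five : (-1 : ModCube p) ^ (5 * m) = (-1) ^ m := by rw [pow_mul]; norm_num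
  have hneg_nine : (-1 : ModCube p) ^ (9 * m) = (-1) ^ m := by rw [pow_mul]; norm_num
  rw [quarticJacobiSum, jacobiSum, Finset.mul_sum, Finset.sum_congr rfl fun t _ => hterm t,
    Finset.sum_add_distrib, Finset.sum_sub_distrib, ← Finset.mul_sum, ← Finset.mul_sum,
    ← Finset.mul_sum, sum_teichmuller_pow_mul_one_sub_pow, sum_teichmuller_pow_mul_one_sub_pow,
    sum_teichmuller_pow_mul_one_sub_pow, hp1, hfilter_two, hfilter_six, hfilter_ten,
    Finset.sum_singleton, Finset.sum_pair (by omega), Finset.sum_insert (by simp; omega),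
    Finset.sum_pair (by omega), hneg_five, hneg_nine,
    Nat.choose_symm_of_eq_add (show 6 * m = 5 * m + m by ring),
    Nat.choose_symm_of_eq_add (show 10 * m = 9 * m + m by ring)]
  ring

end QuarticJacobiSum

section GaussianIntegers

lemma sq_eq_sq_of_prime_dvd {p : ℕ} (hp : p.Prime) {a b c d : ℤ} (hab : (p : ℤ) = a ^ 2 + b ^ 2)
    (hcd : (p : ℤ) = c ^ 2 + d ^ 2) (hodd : Odd (a * c + b * d))
    (hdvd : (p : ℤ) ∣ a * d - b * c) : a ^ 2 = c ^ 2 := by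
  have hpos : (0 : ℤ) < p := by exact_mod_cast hp.pos
  have hnorm : (a * c + b * d) ^ 2 + (a * d - b * c) ^ 2 = p * p := by
    nth_rw 1 [hab]
    rw [hcd]
    ring
  obtain ⟨w, hw⟩ := hdvd
  have hw0 : w = 0 := by
    by_contra hne
    have hsq : 0 ≤ w ^ 2 - 1 := sub_nonneg.2 (Int.add_one_le_of_lt (sq_pos_of_ne_zero hne))
    have hzero : (a * c + b * d) ^ 2 ≤ 0 := by
      rw [hw] at hnorm
      nlinarith [mul_nonneg (mul_pos hpos hpos).le hsq]
    rw [pow_eq_zero_iff two_ne_zero |>.1 (le_antisymm hzero (sq_nonneg _))] at hodd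
    exact Int.not_odd_zero hodd
  have hcross : p * (a ^ 2 - c ^ 2) = 0 := by
    rw [hw0] at hw
    linear_combination (a * d + b * c) * hw - c ^ 2 * hab + a ^ 2 * hcd
  exact sub_eq_zero.1 ((mul_eq_zero.1 hcross).resolve_left hpos.ne')

lemma sq_eq_sq_of_prime_eq_sq_add_sq {p : ℕ} (hp : p.Prime) {a b c d : ℤ}
    (hab : (p : ℤ) = a ^ 2 + b ^ 2) (hcd : (p : ℤ) = c ^ 2 + d ^ 2) (ha : Odd a) (hb : Even b)
    (hc : Odd c) : a ^ 2 = c ^ 2 := by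
  have hdvd : (p : ℤ) ∣ (a * d - b * c) * (a * d + b * c) :=
    ⟨a ^ 2 - c ^ 2, by linear_combination c ^ 2 * hab - a ^ 2 * hcd⟩
  rcases (Nat.prime_iff_prime_int.1 hp).dvd_or_dvd hdvd with h | h
  · exact sq_eq_sq_of_prime_dvd hp hab hcd ((ha.mul hc).add_even (hb.mul_right d)) h
  · refine sq_eq_sq_of_prime_dvd hp (b := -b) (by rw [hab]; ring) hcd
      ((ha.mul hc).add_even (hb.neg.mul_right d)) ?_
    rwa [neg_mul, sub_neg_eq_add]

lemma norm_jacobiSum {F : Type*} [Field F] [Fintype F] {χ φ : MulChar F GaussianInt} (hχ : χ ≠ 1)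
    (hφ : φ ≠ 1) (hχφ : χ * φ ≠ 1) : (jacobiSum χ φ).norm = Fintype.card F := by
  have hinj := GaussianInt.toComplex_injective
  have hchar : ringChar ℂ ≠ ringChar F := by
    rw [ringChar.eq_zero]
    exact (CharP.ringChar_ne_zero_of_finite F).symm
  have hmul := jacobiSum_mul_jacobiSum_inv hchar ((MulChar.ringHomComp_ne_one_iff hinj).2 hχ)
    ((MulChar.ringHomComp_ne_one_iff hinj).2 hφ)
    (by rwa [← MulChar.ringHomComp_mul, MulChar.ringHomComp_ne_one_iff hinj])
  have hstar : ∀ χ' φ' : MulChar F ℂ, jacobiSum χ'⁻¹ φ'⁻¹ = star (jacobiSum χ' φ') := by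
    intro χ' φ'
    simp only [jacobiSum, star_sum, star_mul', MulChar.star_apply']
  rw [hstar, jacobiSum_ringHomComp, Complex.star_def, Complex.mul_conj,
    ← GaussianInt.intCast_complex_norm] at hmul
  exact_mod_cast hmul

lemma sqrtd_sq : (Zsqrtd.sqrtd : GaussianInt) ^ 2 = -1 := by
  rw [sq, Zsqrtd.dmuld, Int.cast_neg, Int.cast_one]

lemma isPrimitiveRoot_sqrtd : IsPrimitiveRoot (Zsqrtd.sqrtd : GaussianInt) 4 := by
  refine IsPrimitiveRoot.iff_orderOf.2 (orderOf_eq_prime_pow (p := 2) (n := 1) ?_ ?_)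
  · rw [pow_one, sqrtd_sq]
    decide
  · rw [show 2 ^ (1 + 1) = 2 * 2 by rfl, pow_mul, sqrtd_sq, neg_one_sq]

lemma odd_re_jacobiSum {F : Type*} [Field F] [Fintype F] {χ φ : MulChar F GaussianInt}
    (hχ : χ ^ 4 = 1) (hφ : φ ^ 4 = 1) (hcard : 4 ∣ Fintype.card F - 1) :
    Odd (jacobiSum χ φ).re := by
  obtain ⟨z, -, hz⟩ :=
    exists_jacobiSum_eq_neg_one_add (by norm_num) hχ hφ hcard isPrimitiveRoot_sqrtd
  have htwo : jacobiSum χ φ = -1 + ((2 : ℤ) : GaussianInt) * -(z * Zsqrtd.sqrtd) := by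
    rw [hz, sub_sq, sqrtd_sq]
    push_cast
    ring
  refine ⟨(-(z * Zsqrtd.sqrtd)).re - 1, ?_⟩
  rw [htwo, Zsqrtd.re_add, Zsqrtd.re_smul, Zsqrtd.re_neg, Zsqrtd.re_one]
  ring

end GaussianIntegers

section QuarticCharacter

variable {p m : ℕ} [hp : Fact p.Prime]

lemma teichmuller_generator_pow_sq (hp3 : 3 < p) (hm : p = 4 * m + 1) {g : (ZMod p)ˣ}
    (hg : ∀ x, x ∈ Subgroup.zpowers g) : (teichmuller p g ^ (3 * m)) ^ 2 = -1 := by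
  have horder : orderOf g = 2 * m * 2 := by
    rw [orderOf_eq_card_of_forall_mem_zpowers hg, Nat.card_eq_fintype_card, ZMod.card_units]
    omega
  have hne : (g : ZMod p) ^ (2 * m) ≠ 1 := by
    rw [← Units.val_pow_eq_pow_val, Ne, Units.val_eq_one]
    exact pow_ne_one_of_lt_orderOf (by omega) (by omega)
  have hsq : ((g : ZMod p) ^ (2 * m)) ^ 2 = 1 := by
    rw [← pow_mul, ← horder, ← Units.val_pow_eq_pow_val, pow_orderOf_eq_one, Units.val_one]
  rw [← pow_mul, show 3 * m * 2 = 2 * m * 3 by ring, pow_mul, ← map_pow,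
    (sq_eq_one_iff.1 hsq).resolve_left hne, teichmuller_neg_one (by omega)]
  norm_num

lemma exists_quartic_mulChar (hp3 : 3 < p) (hm : p = 4 * m + 1) :
    ∃ (ψ : MulChar (ZMod p) GaussianInt) (ρ : GaussianInt →+* ModCube p),
      orderOf ψ = 4 ∧ ψ.ringHomComp ρ = teichmuller p ^ (3 * m) := by
  obtain ⟨g, hg⟩ := IsCyclic.exists_generator (α := (ZMod p)ˣ)
  obtain ⟨u, hu⟩ := isPrimitiveRoot_sqrtd.isUnit (by norm_num)
  have hroot : u ∈ rootsOfUnity (Fintype.card (ZMod p)ˣ) GaussianInt := by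
    rw [mem_rootsOfUnity', hu, ZMod.card_units, show p - 1 = 4 * m by omega, pow_mul,
      isPrimitiveRoot_sqrtd.pow_eq_one, one_pow]
  set ψ : MulChar (ZMod p) GaussianInt := MulChar.ofRootOfUnity hroot hg
  have hψ : ψ g = Zsqrtd.sqrtd := (MulChar.ofRootOfUnity_spec hroot hg).trans hu
  refine ⟨ψ, Zsqrtd.lift ⟨teichmuller p g ^ (3 * m), ?_⟩, ?_, ?_⟩
  · rw [← sq, teichmuller_generator_pow_sq hp3 hm hg, Int.cast_neg, Int.cast_one]
  · refine isPrimitiveRoot_sqrtd.eq_orderOf ▸ orderOf_eq_orderOf_iff.2 fun n => ?_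
    rw [MulChar.eq_iff hg, MulChar.pow_apply_coe, hψ, MulChar.one_apply_coe]
  · rw [MulChar.eq_iff hg, MulChar.pow_apply_coe]
    simp [MulChar.ringHomComp, hψ]

lemma exists_quarticJacobiSum_eq (hp3 : 3 < p) (hm : p = 4 * m + 1) :
    ∃ (J : GaussianInt) (ρ : GaussianInt →+* ModCube p),
      ρ J = quarticJacobiSum p m ∧ J.norm = p ∧ Odd J.re := by
  obtain ⟨ψ, ρ, horder, hψρ⟩ := exists_quartic_mulChar hp3 hm
  have hψ_pow : ψ ^ 4 = 1 := horder ▸ pow_orderOf_eq_one ψ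
  have hψ_ne : ∀ k, k ≠ 0 → k < 4 → ψ ^ k ≠ 1 := fun k hk0 hk =>
    pow_ne_one_of_lt_orderOf hk0 (horder ▸ hk)
  refine ⟨jacobiSum ψ (ψ ^ 2), ρ, ?_, ?_, ?_⟩
  · rw [← jacobiSum_ringHomComp, quarticJacobiSum, ← MulChar.ringHomComp_pow, hψρ, ← pow_mul,
      show 3 * m * 2 = p - 1 + 2 * m by omega, pow_add, teichmuller_pow_card_sub_one, one_mul]
  · rw [norm_jacobiSum (by simpa using hψ_ne 1) (hψ_ne 2 (by omega) (by omega)), ZMod.card]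
    rw [← pow_succ']
    exact hψ_ne 3 (by omega) (by omega)
  · refine odd_re_jacobiSum hψ_pow ?_ ⟨m, ?_⟩
    · rw [pow_right_comm, hψ_pow, one_pow]
    · rw [ZMod.card]
      omega

lemma four_mul_sq_mul_quarticJacobiSum_sq (hp3 : 3 < p) (hm : p = 4 * m + 1) {x y : ℤ}
    (hxy : (p : ℤ) = x ^ 2 + 4 * y ^ 2) :
    4 * (x : ModCube p) ^ 2 * quarticJacobiSum p m ^ 2 = (quarticJacobiSum p m ^ 2 + p) ^ 2 := by
  obtain ⟨J, ρ, hJ, hnorm, hodd⟩ := exists_quarticJacobiSum_eq hp3 hm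
  have hJxy : (p : ℤ) = J.re ^ 2 + J.im ^ 2 := by
    rw [← hnorm, Zsqrtd.norm_def]
    ring
  have hx_odd : Odd x := by
    have hx_sq : Odd (x ^ 2) := by
      rw [show x ^ 2 = p - 2 * (2 * y ^ 2) by rw [hxy]; ring]
      exact (hp.out.odd_of_ne_two (by omega)).natCast.sub_even (even_two_mul _)
    exact (Int.odd_pow' two_ne_zero).1 hx_sq
  have hx_sq : (x : ModCube p) ^ 2 = (J.re : ModCube p) ^ 2 := by
    exact_mod_cast congrArg (Int.cast : ℤ → ModCube p)
      (sq_eq_sq_of_prime_eq_sq_add_sq hp.out (b := 2 * y) (by rw [hxy]; ring) hJxy hx_odd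
        (even_two_mul y) hodd)
  have hmul : ρ J * ρ (star J) = p := by
    rw [← map_mul, ← Zsqrtd.norm_eq_mul_conj, hnorm, map_intCast, Int.cast_natCast]
  have hadd : ρ J + ρ (star J) = 2 * J.re := by
    have : J + star J = ((2 * J.re : ℤ) : GaussianInt) := by ext <;> simp; ring
    rw [← map_add, this, map_intCast, Int.cast_mul, Int.cast_ofNat]
  rw [hJ] at hmul hadd
  rw [hx_sq, ← hmul]
  linear_combination -quarticJacobiSum p m ^ 2 *
    (quarticJacobiSum p m + ρ (star J) + 2 * J.re) * hadd

end QuarticCharacter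

section QuadraticExpansion

variable {R : Type*} [CommRing R] {q a b v w K A B C D : R}

lemma quadratic_expansion_identity (hq : q ^ 3 = 0) :
    27 * (30 * ((1 + q * v + q ^ 2 * w) * (1 - q * a + q ^ 2 * b) ^ 2)) -
      27 * (20 * ((1 + 3 * q + 9 * q ^ 2) * (1 + 3 * q * v + 9 * q ^ 2 * w) *
        ((1 - q * a + q ^ 2 * b) * (1 - 5 * q * a + 25 * q ^ 2 * b) * (1 - 5 * q)))) +
      3 * ((1 + 5 * q + 25 * q ^ 2) * (9 + 15 * q + 25 * q ^ 2) *
        (1 + 5 * q * v + 25 * q ^ 2 * w)) *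
        ((1 - q * a + q ^ 2 * b) * (1 - 9 * q * a + 81 * q ^ 2 * b) * ((5 - 9 * q) * (1 - 9 * q)) +
          ((1 - 5 * q * a + 25 * q ^ 2 * b) * (1 - 5 * q)) ^ 2) = 432 * (1 + q + q ^ 2) := by
  grind

lemma combination_eq_of_quadratic_expansions (hq : q ^ 3 = 0)
    (hA : A = K * ((1 + q * v + q ^ 2 * w) * (1 - q * a + q ^ 2 * b) ^ 2))
    (hB : 2 * (1 - 3 * q) * B = K * ((1 + 3 * q * v + 9 * q ^ 2 * w) *
      ((1 - q * a + q ^ 2 * b) * (1 - 5 * q * a + 25 * q ^ 2 * b) * (1 - 5 * q))))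
    (hC : 4 * (1 - 5 * q) * (3 - 5 * q) * C = K * ((1 + 5 * q * v + 25 * q ^ 2 * w) *
      ((1 - q * a + q ^ 2 * b) * (1 - 9 * q * a + 81 * q ^ 2 * b) * ((5 - 9 * q) * (1 - 9 * q)))))
    (hD : 2 * (1 - 5 * q) * (3 - 5 * q) * D = K * ((1 + 5 * q * v + 25 * q ^ 2 * w) *
      ((1 - 5 * q * a + 25 * q ^ 2 * b) * (1 - 5 * q)) ^ 2)) :
    54 * (15 * A - 20 * B + 6 * C + 3 * D) = 432 * K * (1 + q + q ^ 2) := by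
  have hidentity := quadratic_expansion_identity (a := a) (b := b) (v := v) (w := w) hq
  linear_combination 810 * hA - 540 * (1 + 3 * q + 9 * q ^ 2) * hB +
    3 * ((1 + 5 * q + 25 * q ^ 2) * (9 + 15 * q + 25 * q ^ 2)) * (hC + hD) + K * hidentity +
    (-29160 * B + 6 * (3500 - 15625 * q ^ 3) * (2 * C + D)) * hq

end QuadraticExpansion

section Quarters

variable {p m : ℕ} {c : ModCube p}

lemma isUnit_of_four_mul (hc : 4 * c = 1) : IsUnit c := .of_mul_eq_one_right 4 hc

lemma natCast_eq_mul_p_sub_one (hm : p = 4 * m + 1) (hc : 4 * c = 1) :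
    (m : ModCube p) = c * (p - 1) := by
  have hcast : (p : ModCube p) = 4 * m + 1 := by exact_mod_cast congrArg Nat.cast hm
  linear_combination (-m) * hc - c * hcast

lemma neg_natCast_quarter (hm : p = 4 * m + 1) (hc : 4 * c = 1) :
    -(m : ModCube p) = c + p * (c * -1) := by
  linear_combination -natCast_eq_mul_p_sub_one hm hc

lemma neg_natCast_five_quarters (hm : p = 4 * m + 1) (hc : 4 * c = 1) :
    -((5 * m : ℕ) : ModCube p) = c + p * (c * -5) + 1 := by
  push_cast
  linear_combination -5 * natCast_eq_mul_p_sub_one hm hc + hc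

lemma neg_natCast_nine_quarters (hm : p = 4 * m + 1) (hc : 4 * c = 1) :
    -((9 * m : ℕ) : ModCube p) = c + p * (c * -9) + 1 + 1 := by
  push_cast
  linear_combination -9 * natCast_eq_mul_p_sub_one hm hc + 2 * hc

end Quarters

section QuarticChoose

variable {p m : ℕ} [hp : Fact p.Prime] {c : ModCube p}

lemma choose_mul_reflection (hp3 : 3 < p) {a b : ℕ} (hab : (a + b) / p = a / p + b / p) :
    ((a + b).choose a : ModCube p) * (reflection p (-a) * reflection p (-b)) =
      -((a / p + b / p).choose (a / p) : ModCube p) *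
        (gamma p ((a + b + 1 : ℕ) : ModCube p) * gamma p (-a) * gamma p (-b)) := by
  have hchoose := choose_mul_gamma hp3 hab
  have hneg (n : ℕ) : 1 - -(n : ModCube p) = (n + 1 : ℕ) := by
    push_cast
    ring
  rw [reflection, reflection, hneg, hneg]
  linear_combination gamma p (-(a : ModCube p)) * gamma p (-(b : ModCube p)) * hchoose

lemma isUnit_nine_quarters_sub_one (hp5 : 5 < p) (hc : 4 * c = 1) :
    IsUnit (c + p * (c * -9) + 1) := by
  have hunit : IsUnit (5 * c + p * (c * -9)) := (isUnit_add_p_mul _).2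
    (IsUnit.mul (mod_cast isUnit_natCast_of_lt (by norm_num) hp5) (isUnit_of_four_mul hc))
  convert hunit using 1
  linear_combination -hc

lemma reflection_neg_quarter (hp3 : 3 < p) (hm : p = 4 * m + 1) (hc : 4 * c = 1) :
    reflection p (-(m : ModCube p)) = reflection p c := by
  rw [neg_natCast_quarter hm hc, reflection_add_p_mul hp3]

lemma reflection_neg_five_quarters (hp3 : 3 < p) (hm : p = 4 * m + 1) (hc : 4 * c = 1) :
    reflection p (-((5 * m : ℕ) : ModCube p)) = -reflection p c := by
  classical
  rw [neg_natCast_five_quarters hm hc, reflection_add_one hp3,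
    if_pos ((isUnit_add_p_mul _).2 (isUnit_of_four_mul hc)), reflection_add_p_mul hp3,
    neg_one_mul]

lemma reflection_neg_nine_quarters (hp5 : 5 < p) (hm : p = 4 * m + 1) (hc : 4 * c = 1) :
    reflection p (-((9 * m : ℕ) : ModCube p)) = reflection p c := by
  classical
  have hp3 : 3 < p := by omega
  rw [neg_natCast_nine_quarters hm hc, reflection_add_one hp3,
    if_pos (isUnit_nine_quarters_sub_one hp5 hc), reflection_add_one hp3,
    if_pos ((isUnit_add_p_mul _).2 (isUnit_of_four_mul hc)), reflection_add_p_mul hp3,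
    neg_one_mul, neg_one_mul, neg_neg]

lemma gamma_neg_five_quarters (hp3 : 3 < p) (hm : p = 4 * m + 1) (hc : 4 * c = 1) :
    gamma p (-((5 * m : ℕ) : ModCube p)) = -(c * (1 - 5 * p)) * gamma p (c + p * (c * -5)) := by
  rw [neg_natCast_five_quarters hm hc, gamma_add_one hp3,
    gammaFactor_of_isUnit ((isUnit_add_p_mul _).2 (isUnit_of_four_mul hc))]
  ring

lemma gamma_neg_nine_quarters (hp5 : 5 < p) (hm : p = 4 * m + 1) (hc : 4 * c = 1) :
    gamma p (-((9 * m : ℕ) : ModCube p)) =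
      c ^ 2 * (5 - 9 * p) * (1 - 9 * p) * gamma p (c + p * (c * -9)) := by
  have hp3 : 3 < p := by omega
  rw [neg_natCast_nine_quarters hm hc, gamma_add_one hp3,
    gammaFactor_of_isUnit (isUnit_nine_quarters_sub_one hp5 hc), gamma_add_one hp3,
    gammaFactor_of_isUnit ((isUnit_add_p_mul _).2 (isUnit_of_four_mul hc))]
  linear_combination (-c * (1 - 9 * p) * gamma p (c + p * (c * -9))) * hc

lemma gamma_two_quarters_add_one (hp2 : p ≠ 2) (hm : p = 4 * m + 1) :
    gamma p ((2 * m + 1 : ℕ) : ModCube p) = gamma p (2⁻¹ + p * 2⁻¹) := by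
  have hcast : (p : ModCube p) = 4 * m + 1 := by exact_mod_cast congrArg Nat.cast hm
  congr 1
  push_cast
  linear_combination -(2 * m + 1) * two_mul_inv_two hp2 - 2⁻¹ * hcast

lemma gamma_six_quarters_add_one (hp3 : 3 < p) (hm : p = 4 * m + 1) :
    (1 - 3 * p) * gamma p ((6 * m + 1 : ℕ) : ModCube p) = 2 * gamma p (2⁻¹ + p * (2⁻¹ * 3)) := by
  have hp2 : p ≠ 2 := by omega
  have hhalf := two_mul_inv_two hp2
  have hcast : (p : ModCube p) = 4 * m + 1 := by exact_mod_cast congrArg Nat.cast hm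
  have hnode : ((6 * m + 1 : ℕ) : ModCube p) = -2⁻¹ + p * (2⁻¹ * 3) := by
    push_cast
    linear_combination -(6 * m + 1) * hhalf - 3 * 2⁻¹ * hcast
  have hunit : IsUnit (-2⁻¹ + p * (2⁻¹ * 3) : ModCube p) :=
    (isUnit_add_p_mul _).2 (isUnit_inv_two hp2).neg
  have hstep := gamma_add_one hp3 (-2⁻¹ + p * (2⁻¹ * 3) : ModCube p)
  rw [gammaFactor_of_isUnit hunit,
    show (-2⁻¹ + p * (2⁻¹ * 3) + 1 : ModCube p) = 2⁻¹ + p * (2⁻¹ * 3) by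
      linear_combination -hhalf] at hstep
  rw [hnode, hstep]
  linear_combination (-(1 - 3 * p) * gamma p (-2⁻¹ + p * (2⁻¹ * 3))) * hhalf

lemma gamma_ten_quarters_add_one (hp3 : 3 < p) (hm : p = 4 * m + 1) :
    (1 - 5 * p) * (3 - 5 * p) * gamma p ((10 * m + 1 : ℕ) : ModCube p) =
      4 * gamma p (2⁻¹ + p * (2⁻¹ * 5)) := by
  have hp2 : p ≠ 2 := by omega
  have hhalf := two_mul_inv_two hp2
  have hcast : (p : ModCube p) = 4 * m + 1 := by exact_mod_cast congrArg Nat.cast hm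
  have hnode : ((10 * m + 1 : ℕ) : ModCube p) = -3 * 2⁻¹ + p * (2⁻¹ * 5) := by
    push_cast
    linear_combination -(10 * m + 1) * hhalf - 5 * 2⁻¹ * hcast
  have hnext : (-3 * 2⁻¹ + p * (2⁻¹ * 5) + 1 : ModCube p) = -2⁻¹ + p * (2⁻¹ * 5) := by
    linear_combination -hhalf
  have hunit : IsUnit (-3 * 2⁻¹ + p * (2⁻¹ * 5) : ModCube p) :=
    (isUnit_add_p_mul _).2 ((isUnit_three hp3).neg.mul (isUnit_inv_two hp2))
  have hunit' : IsUnit (-2⁻¹ + p * (2⁻¹ * 5) : ModCube p) :=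
    (isUnit_add_p_mul _).2 (isUnit_inv_two hp2).neg
  have hstep := gamma_add_one hp3 (-3 * 2⁻¹ + p * (2⁻¹ * 5) : ModCube p)
  have hstep' := gamma_add_one hp3 (-2⁻¹ + p * (2⁻¹ * 5) : ModCube p)
  rw [gammaFactor_of_isUnit hunit, hnext] at hstep
  rw [gammaFactor_of_isUnit hunit', hstep,
    show (-2⁻¹ + p * (2⁻¹ * 5) + 1 : ModCube p) = 2⁻¹ + p * (2⁻¹ * 5) by
      linear_combination -hhalf] at hstep'
  rw [hnode, hstep']
  linear_combination (-(1 - 5 * p) * (3 - 5 * p) * gamma p (-3 * 2⁻¹ + p * (2⁻¹ * 5)) *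
    (2 * 2⁻¹ + 1)) * hhalf

lemma choose_two_quarters_eq (hp3 : 3 < p) (hm : p = 4 * m + 1) (hc : 4 * c = 1) :
    ((2 * m).choose m : ModCube p) =
      -(gamma p (2⁻¹ + p * 2⁻¹) * gamma p (c + p * (c * -1)) ^ 2) := by
  have hm0 : m / p = 0 := Nat.div_eq_of_lt (by omega)
  have h2m : (m + m) / p = 0 := Nat.div_eq_of_lt (by omega)
  have hchoose := choose_mul_reflection hp3 (a := m) (b := m) (by omega)
  rw [reflection_neg_quarter hp3 hm hc, hm0, neg_natCast_quarter hm hc, ← two_mul,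
    gamma_two_quarters_add_one (by omega) hm, Nat.choose_self, Nat.cast_one] at hchoose
  linear_combination hchoose - (2 * m).choose m * reflection_sq hp3 c

lemma choose_six_quarters_eq (hp3 : 3 < p) (hm : p = 4 * m + 1) (hc : 4 * c = 1) :
    2 * (1 - 3 * p) * ((6 * m).choose m : ModCube p) =
      -((1 - 5 * p) * gamma p (2⁻¹ + p * (2⁻¹ * 3)) *
        gamma p (c + p * (c * -1)) * gamma p (c + p * (c * -5))) := by
  have hm0 : m / p = 0 := Nat.div_eq_of_lt (by omega)
  have h5m : 5 * m / p = 1 := Nat.div_eq_of_lt_le (by omega) (by omega)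
  have h6m : (m + 5 * m) / p = 1 := Nat.div_eq_of_lt_le (by omega) (by omega)
  have hchoose := choose_mul_reflection hp3 (a := m) (b := 5 * m) (by omega)
  rw [reflection_neg_quarter hp3 hm hc, reflection_neg_five_quarters hp3 hm hc, hm0,
    gamma_neg_five_quarters hp3 hm hc, neg_natCast_quarter hm hc, Nat.choose_zero_right,
    Nat.cast_one, show m + 5 * m = 6 * m by ring] at hchoose
  linear_combination (-2 * (1 - 3 * p)) * hchoose -
    2 * (1 - 3 * p) * (6 * m).choose m * reflection_sq hp3 c -
    2 * c * (1 - 5 * p) * gamma p (c + p * (c * -1)) * gamma p (c + p * (c * -5)) *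
      gamma_six_quarters_add_one hp3 hm -
    (1 - 5 * p) * gamma p (2⁻¹ + p * (2⁻¹ * 3)) * gamma p (c + p * (c * -1)) *
      gamma p (c + p * (c * -5)) * hc

lemma choose_ten_quarters_eq (hp5 : 5 < p) (hm : p = 4 * m + 1) (hc : 4 * c = 1) :
    4 * (1 - 5 * p) * (3 - 5 * p) * ((10 * m).choose m : ModCube p) =
      -((5 - 9 * p) * (1 - 9 * p) * gamma p (2⁻¹ + p * (2⁻¹ * 5)) *
        gamma p (c + p * (c * -1)) * gamma p (c + p * (c * -9))) := by
  have hp3 : 3 < p := by omega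
  have hm0 : m / p = 0 := Nat.div_eq_of_lt (by omega)
  have h9m : 9 * m / p = 2 := Nat.div_eq_of_lt_le (by omega) (by omega)
  have h10m : (m + 9 * m) / p = 2 := Nat.div_eq_of_lt_le (by omega) (by omega)
  have hchoose := choose_mul_reflection hp3 (a := m) (b := 9 * m) (by omega)
  rw [reflection_neg_quarter hp3 hm hc, reflection_neg_nine_quarters hp5 hm hc, hm0,
    gamma_neg_nine_quarters hp5 hm hc, neg_natCast_quarter hm hc, Nat.choose_zero_right,
    Nat.cast_one, show m + 9 * m = 10 * m by ring] at hchoose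
  linear_combination (4 * (1 - 5 * p) * (3 - 5 * p)) * hchoose -
    4 * (1 - 5 * p) * (3 - 5 * p) * (10 * m).choose m * reflection_sq hp3 c -
    4 * c ^ 2 * (5 - 9 * p) * (1 - 9 * p) * gamma p (c + p * (c * -1)) *
      gamma p (c + p * (c * -9)) * gamma_ten_quarters_add_one hp3 hm -
    (5 - 9 * p) * (1 - 9 * p) * gamma p (2⁻¹ + p * (2⁻¹ * 5)) * gamma p (c + p * (c * -1)) *
      gamma p (c + p * (c * -9)) * (4 * c + 1) * hc

lemma choose_ten_five_quarters_eq (hp5 : 5 < p) (hm : p = 4 * m + 1) (hc : 4 * c = 1) :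
    2 * (1 - 5 * p) * (3 - 5 * p) * ((10 * m).choose (5 * m) : ModCube p) =
      -((1 - 5 * p) ^ 2 * gamma p (2⁻¹ + p * (2⁻¹ * 5)) * gamma p (c + p * (c * -5)) ^ 2) := by
  have hp3 : 3 < p := by omega
  have h5m : 5 * m / p = 1 := Nat.div_eq_of_lt_le (by omega) (by omega)
  have h10m : (5 * m + 5 * m) / p = 2 := Nat.div_eq_of_lt_le (by omega) (by omega)
  have hchoose := choose_mul_reflection hp3 (a := 5 * m) (b := 5 * m) (by omega)
  rw [reflection_neg_five_quarters hp3 hm hc, h5m, gamma_neg_five_quarters hp3 hm hc,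
    show 5 * m + 5 * m = 10 * m by ring, Nat.choose_one_right, one_add_one_eq_two,
    Nat.cast_ofNat] at hchoose
  linear_combination (2 * (1 - 5 * p) * (3 - 5 * p)) * hchoose -
    2 * (1 - 5 * p) * (3 - 5 * p) * (10 * m).choose (5 * m) * reflection_sq hp3 c -
    4 * c ^ 2 * (1 - 5 * p) ^ 2 * gamma p (c + p * (c * -5)) ^ 2 *
      gamma_ten_quarters_add_one hp3 hm -
    (1 - 5 * p) ^ 2 * gamma p (2⁻¹ + p * (2⁻¹ * 5)) * gamma p (c + p * (c * -5)) ^ 2 *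
      (4 * c + 1) * hc

lemma quarticJacobiSum_eq_gamma (hp13 : 13 ≤ p) (hm : p = 4 * m + 1) (hc : 4 * c = 1) :
    quarticJacobiSum p m = (-1) ^ m * (gamma p 2⁻¹ * gamma p c ^ 2) := by
  have hp3 : 3 < p := by omega
  have hp5 : 5 < p := by omega
  obtain ⟨a, b, hquarter⟩ := gamma_add_p_mul hp3 c
  obtain ⟨v, w, hhalf⟩ := gamma_add_p_mul hp3 (2⁻¹ : ModCube p)
  have htwo := choose_two_quarters_eq hp3 hm hc
  have hsix := choose_six_quarters_eq hp3 hm hc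
  have hten := choose_ten_quarters_eq hp5 hm hc
  have hten' := choose_ten_five_quarters_eq hp5 hm hc
  simp only [hquarter, hhalf] at htwo hsix hten hten'
  have hsum := combination_eq_of_quadratic_expansions (q := (p : ModCube p)) (a := a * c)
    (b := b * c ^ 2) (v := v * 2⁻¹) (w := w * 2⁻¹ ^ 2) (K := -(gamma p 2⁻¹ * gamma p c ^ 2))
    (A := (2 * m).choose m) (B := (6 * m).choose m) (C := (10 * m).choose m)
    (D := (10 * m).choose (5 * m)) p_pow_three (by linear_combination htwo)
    (by linear_combination hsix) (by linear_combination hten) (by linear_combination hten')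
  have hunit : IsUnit (2 ^ 4 * 3 ^ 3 : ModCube p) :=
    ((isUnit_two (by omega)).pow 4).mul ((isUnit_three hp3).pow 3)
  apply hunit.mul_left_cancel
  linear_combination 54 * eight_mul_quarticJacobiSum hp13 hm + (-1) ^ m * (p - 1) * hsum -
    432 * (-1) ^ m * gamma p 2⁻¹ * gamma p c ^ 2 * p_pow_three (p := p)

lemma quarticJacobiSum_sq (hp13 : 13 ≤ p) (hm : p = 4 * m + 1) (hc : 4 * c = 1) :
    quarticJacobiSum p m ^ 2 = -gamma p c ^ 4 := by
  have hodd : Odd ((p - 1) / 2 + 1) := ⟨m, by omega⟩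
  have hgamma := gamma_inv_two_sq (p := p) (by omega)
  rw [hodd.neg_one_pow] at hgamma
  rw [quarticJacobiSum_eq_gamma hp13 hm hc, mul_pow, ← pow_mul, mul_comm m 2, pow_mul, neg_one_sq,
    one_pow, one_mul, mul_pow, hgamma]
  ring

end QuarticChoose

section Evaluation

variable {p : ℕ} [hp : Fact p.Prime] {e : ModCube p}

lemma hyperSum_two_neg_two_mul (hp2 : p ≠ 2) (he : 12 * e = 1) :
    108 * hyperSum p 2 (-2 * e) = -46 * hyperSum p 1 (-2 * e) - 5 * hyperSum p 0 (-2 * e) := by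
  linear_combination 36 * three_mul_hyperSum_two hp2 (-2 * e) +
    (2 * hyperSum p 1 (-2 * e) + hyperSum p 0 (-2 * e)) * (12 * e - 5) * he

lemma hyperSum_three_neg_two_mul (hp2 : p ≠ 2) (he : 12 * e = 1) :
    180 * hyperSum p 3 (-2 * e) =
      -154 * hyperSum p 2 (-2 * e) - 51 * hyperSum p 1 (-2 * e) - 5 * hyperSum p 0 (-2 * e) := by
  linear_combination 36 * five_mul_hyperSum_three hp2 (-2 * e) +
    (2 * hyperSum p 2 (-2 * e) + 3 * hyperSum p 1 (-2 * e) + hyperSum p 0 (-2 * e)) *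
      (12 * e - 5) * he

section ModFourEqOne

variable {m : ℕ} {x y : ℤ}

lemma isUnit_quarticJacobiSum_sq (hp13 : 13 ≤ p) (hm : p = 4 * m + 1) (he : 12 * e = 1) :
    IsUnit (quarticJacobiSum p m ^ 2) := by
  rw [quarticJacobiSum_sq hp13 hm (c := 3 * e) (by linear_combination he)]
  exact ((isUnit_gamma _).pow 4).neg

lemma legendreSym_mul_hyperSum_zero (hp13 : 13 ≤ p) (hm : p = 4 * m + 1) (he : 12 * e = 1) :
    legendreSym 3 p * hyperSum p 0 (-2 * e) = quarticJacobiSum p m ^ 2 := by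
  have hp3 : 3 < p := by omega
  have hp4 : p % 4 = 1 := by omega
  rw [hyperSum_zero_of_mod_four_eq_one hp3 hp4 he,
    gamma_mul_gamma_sq_of_mod_four_eq_one hp3 hp4 he,
    quarticJacobiSum_sq hp13 hm (c := 3 * e) (by linear_combination he)]
  linear_combination -gamma p (3 * e) ^ 4 * legendreSym_three_sq hp3

lemma legendreSym_mul_hyperSum_one_mul_quarticJacobiSum_sq (hp13 : 13 ≤ p) (hm : p = 4 * m + 1)
    (he : 12 * e = 1) :
    36 * (legendreSym 3 p * hyperSum p 1 (-2 * e)) * quarticJacobiSum p m ^ 2 =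
      -5 * (quarticJacobiSum p m ^ 2) ^ 2 + 5 * p ^ 2 := by
  have hp3 : 3 < p := by omega
  have hmul := hyperSum_one_mul_hyperSum_zero_of_mod_four_eq_one hp3 (by omega) hp13 he
  have hsq := legendreSym_three_sq hp3
  rw [← legendreSym_mul_hyperSum_zero hp13 hm he]
  generalize hyperSum p 0 (-2 * e) = F₀ at *
  generalize hyperSum p 1 (-2 * e) = F₁ at *
  generalize (legendreSym 3 p : ModCube p) = L at *
  linear_combination 36 * L ^ 2 * hmul +
    (-5 * L ^ 2 * F₀ ^ 2 + 5 * L ^ 2 * p ^ 2) * (12 * e + 1) * he + 5 * p ^ 2 * hsq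

lemma four_mul_sq_mul_quarticJacobiSum_sq_eq (hp13 : 13 ≤ p) (hm : p = 4 * m + 1)
    (he : 12 * e = 1) (hxy : (p : ℤ) = x ^ 2 + 4 * y ^ 2) :
    4 * (x : ModCube p) ^ 2 * quarticJacobiSum p m ^ 2 =
      16 * (x : ModCube p) ^ 4 - 8 * p * (x : ModCube p) ^ 2 - p ^ 2 := by
  have hnorm := four_mul_sq_mul_quarticJacobiSum_sq (by omega) hm hxy
  have hunit := isUnit_quarticJacobiSum_sq hp13 hm he
  generalize quarticJacobiSum p m ^ 2 = F at *
  apply (hunit.pow 2).mul_left_cancel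
  linear_combination
    (F ^ 2 - (4 * (x : ModCube p) ^ 2 * F + (F + p) ^ 2) + 2 * p * F) * hnorm -
      (2 * F + p) * p_pow_three (p := p)

lemma legendreSym_mul_hyperSum_one (hp13 : 13 ≤ p) (hm : p = 4 * m + 1) (he : 12 * e = 1)
    (hxy : (p : ℤ) = x ^ 2 + 4 * y ^ 2) :
    legendreSym 3 p * hyperSum p 1 (-2 * e) * (72 * (x : ModCube p) ^ 2) =
      -40 * (x : ModCube p) ^ 4 + 20 * p * (x : ModCube p) ^ 2 + 5 * p ^ 2 := by
  have hnorm := four_mul_sq_mul_quarticJacobiSum_sq (by omega) hm hxy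
  have hmul := legendreSym_mul_hyperSum_one_mul_quarticJacobiSum_sq hp13 hm he
  have hunit := isUnit_quarticJacobiSum_sq hp13 hm he
  generalize quarticJacobiSum p m ^ 2 = F at *
  apply ((isUnit_two (by omega)).mul (hunit.pow 2)).mul_left_cancel
  linear_combination 4 * (x : ModCube p) ^ 2 * F * hmul +
    (5 * (4 * (x : ModCube p) ^ 2 * F + (F + p) ^ 2) - 10 * p * F - 5 * F ^ 2 + 5 * p ^ 2) * hnorm +
    10 * (2 * F + p) * p_pow_three (p := p)

lemma legendreSym_mul_hyperSum_two (hp13 : 13 ≤ p) (hm : p = 4 * m + 1) (he : 12 * e = 1)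
    (hxy : (p : ℤ) = x ^ 2 + 4 * y ^ 2) :
    legendreSym 3 p * hyperSum p 2 (-2 * e) * (1944 * (x : ModCube p) ^ 2) =
      100 * (x : ModCube p) ^ 4 - 50 * p * (x : ModCube p) ^ 2 - 35 * p ^ 2 := by
  have hp2 : p ≠ 2 := by omega
  apply (isUnit_two hp2).mul_left_cancel
  linear_combination
    36 * (x : ModCube p) ^ 2 * legendreSym 3 p * hyperSum_two_neg_two_mul hp2 he -
      23 * legendreSym_mul_hyperSum_one hp13 hm he hxy -
      45 * four_mul_sq_mul_quarticJacobiSum_sq_eq hp13 hm he hxy -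
      180 * (x : ModCube p) ^ 2 * legendreSym_mul_hyperSum_zero hp13 hm he

lemma legendreSym_mul_hyperSum_three (hp13 : 13 ≤ p) (hm : p = 4 * m + 1) (he : 12 * e = 1)
    (hxy : (p : ℤ) = x ^ 2 + 4 * y ^ 2) :
    legendreSym 3 p * hyperSum p 3 (-2 * e) * (69984 * (x : ModCube p) ^ 2) =
      160 * (x : ModCube p) ^ 4 - 80 * p * (x : ModCube p) ^ 2 + 187 * p ^ 2 := by
  have hp2 : p ≠ 2 := by omega
  have hfive : IsUnit (5 : ModCube p) :=
    mod_cast isUnit_natCast_of_lt (by norm_num : 0 < 5) (by omega : 5 < p)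
  apply hfive.mul_left_cancel
  linear_combination
    1944 * (x : ModCube p) ^ 2 * legendreSym 3 p * hyperSum_three_neg_two_mul hp2 he -
      154 * legendreSym_mul_hyperSum_two hp13 hm he hxy -
      1377 * legendreSym_mul_hyperSum_one hp13 hm he hxy -
      2430 * four_mul_sq_mul_quarticJacobiSum_sq_eq hp13 hm he hxy -
      9720 * (x : ModCube p) ^ 2 * legendreSym_mul_hyperSum_zero hp13 hm he

end ModFourEqOne

section ModFourEqThree

lemma p_mul_legendreSym_mul_hyperSum_one (hp3 : 3 < p) (hp4 : p % 4 = 3) (he : 12 * e = 1) :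
    p * (legendreSym 3 p * hyperSum p 1 (-2 * e) * 12) =
      p * ((2 * p + 2 - 2 ^ (p - 1)) * (((p - 1) / 2).choose (p / 4) : ModCube p) ^ 2) := by
  have hsum := (hyperSum_of_mod_four_eq_three hp3 hp4 he).2
  rw [gamma_mul_gamma_sq_of_mod_four_eq_three hp3 hp4 he] at hsum
  apply ((isUnit_gamma (3 * e)).pow 4).mul_left_cancel
  linear_combination -4 * hsum -
    p_mul_choose_sq_mul_gamma_pow_four hp3 hp4 (c := 3 * e) (by linear_combination he)

lemma p_mul_legendreSym_mul_hyperSum_two (hp3 : 3 < p) (hp4 : p % 4 = 3) (he : 12 * e = 1) :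
    p * (legendreSym 3 p * hyperSum p 2 (-2 * e) * 648) =
      p * (-23 * ((2 * p + 2 - 2 ^ (p - 1)) *
        (((p - 1) / 2).choose (p / 4) : ModCube p) ^ 2)) := by
  have hzero := (hyperSum_of_mod_four_eq_three hp3 hp4 he).1
  linear_combination 6 * legendreSym 3 p * p * hyperSum_two_neg_two_mul (by omega) he -
    23 * p_mul_legendreSym_mul_hyperSum_one hp3 hp4 he - 30 * legendreSym 3 p * hzero

lemma p_mul_legendreSym_mul_hyperSum_three (hp3 : 3 < p) (hp4 : p % 4 = 3) (he : 12 * e = 1) :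
    p * (legendreSym 3 p * hyperSum p 3 (-2 * e) * 29160) =
      p * (197 * ((2 * p + 2 - 2 ^ (p - 1)) *
        (((p - 1) / 2).choose (p / 4) : ModCube p) ^ 2)) := by
  have hp2 : p ≠ 2 := by omega
  have hzero := (hyperSum_of_mod_four_eq_three hp3 hp4 he).1
  have hunit : IsUnit (2 ^ 2 * 3 : ModCube p) := ((isUnit_two hp2).pow 2).mul (isUnit_three hp3)
  apply hunit.mul_left_cancel
  linear_combination 1944 * legendreSym 3 p * p * hyperSum_three_neg_two_mul hp2 he -
    462 * p_mul_legendreSym_mul_hyperSum_two hp3 hp4 he -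
    8262 * p_mul_legendreSym_mul_hyperSum_one hp3 hp4 he - 9720 * legendreSym 3 p * hzero

end ModFourEqThree

end Evaluation

lemma choose_mul_factorials (k : ℕ) :
    (2 * k).choose k * (3 * k).choose k * (6 * k).choose (3 * k) *
      ((3 * k).factorial * k.factorial ^ 3) = (6 * k).factorial := by
  have htwo := Nat.add_choose_mul_factorial_mul_factorial k k
  have hthree := Nat.add_choose_mul_factorial_mul_factorial (2 * k) k
  have hsix := Nat.add_choose_mul_factorial_mul_factorial (3 * k) (3 * k)
  rw [← two_mul] at htwo
  rw [show 2 * k + k = 3 * k by ring] at hthree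
  rw [show 3 * k + 3 * k = 6 * k by ring] at hsix
  calc _ = (6 * k).choose (3 * k) * (3 * k).factorial *
        ((3 * k).choose k * ((2 * k).choose k * k.factorial * k.factorial) * k.factorial) := by ring
    _ = _ := by rw [htwo, hthree, hsix]

lemma succ_pow_three_mul_choose (k : ℕ) :
    (k + 1) ^ 3 * ((2 * (k + 1)).choose (k + 1) * (3 * (k + 1)).choose (k + 1) *
      (6 * (k + 1)).choose (3 * (k + 1))) =
    24 * (2 * k + 1) * (6 * k + 1) * (6 * k + 5) *
      ((2 * k).choose k * (3 * k).choose k * (6 * k).choose (3 * k)) := by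
  have hk := choose_mul_factorials k
  have hsucc := choose_mul_factorials (k + 1)
  generalize (2 * (k + 1)).choose (k + 1) * (3 * (k + 1)).choose (k + 1) *
    (6 * (k + 1)).choose (3 * (k + 1)) = T' at *
  rw [show 3 * (k + 1) = 3 * k + 1 + 1 + 1 by ring,
    show 6 * (k + 1) = 6 * k + 1 + 1 + 1 + 1 + 1 + 1 by ring] at hsucc
  simp only [Nat.factorial_succ, ← hk] at hsucc
  have hpos : 0 < (3 * k + 3) * (3 * k + 2) * (3 * k + 1) *
    ((3 * k).factorial * k.factorial ^ 3) := by positivity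
  apply Nat.eq_of_mul_eq_mul_left hpos
  linarith

section Residues

variable {p : ℕ}

/-- The rational number `q` is `p`-integral with residue `r` modulo `p ^ 3`. The fraction
witnessing this need not be in lowest terms. -/
def HasResidue (p : ℕ) (q : ℚ) (r : ModCube p) : Prop :=
  ∃ n d : ℤ, IsUnit (d : ModCube p) ∧ q = n / d ∧ (n : ModCube p) = r * d

lemma hasResidue_intCast (z : ℤ) : HasResidue p z z := ⟨z, 1, by simp, by simp, by simp⟩

lemma HasResidue.mul {a b : ℚ} {r s : ModCube p} (ha : HasResidue p a r) (hb : HasResidue p b s) :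
    HasResidue p (a * b) (r * s) := by
  obtain ⟨n, d, hd, rfl, hn⟩ := ha
  obtain ⟨n', d', hd', rfl, hn'⟩ := hb
  refine ⟨n * n', d * d', ?_, ?_, ?_⟩
  · rw [Int.cast_mul]
    exact hd.mul hd'
  · push_cast
    exact div_mul_div_comm _ _ _ _
  · push_cast
    rw [hn, hn']
    ring

variable [hp : Fact p.Prime] {e : ModCube p}

lemma choose_eq_hyperTerm (hp2 : p ≠ 2) (he : 12 * e = 1) {k : ℕ} (hk : k < p) :
    ((2 * k).choose k * (3 * k).choose k * (6 * k).choose (3 * k) : ModCube p) =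
      hyperTerm p (-(-2 * e)) (1 + -2 * e) k * 12 ^ (3 * k) := by
  induction k with
  | zero => simp [hyperTerm_zero]
  | succ k ih =>
    have hunit := (isUnit_natCast_of_lt k.succ_pos hk).pow 3
    have hchoose := congrArg (Nat.cast : ℕ → ModCube p) (succ_pow_three_mul_choose k)
    have hterm := succ_pow_three_mul_hyperTerm_succ (-(-2 * e)) (1 + -2 * e) hk
    have hfactor : (12 : ModCube p) ^ 3 * ((k + 2⁻¹) * (k + -(-2 * e)) * (k + (1 + -2 * e))) =
        24 * (2 * k + 1) * (6 * k + 1) * (6 * k + 5) := by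
      have htwo : 2 * (k + 2⁻¹) = (2 * k + 1 : ModCube p) := by
        linear_combination two_mul_inv_two hp2
      have hsix : 6 * (k + -(-2 * e)) = 6 * k + 1 := by linear_combination he
      have hsix' : 6 * (k + (1 + -2 * e)) = 6 * k + 5 := by linear_combination -he
      rw [← htwo, ← hsix, ← hsix']
      ring
    apply hunit.mul_left_cancel
    push_cast at hchoose ⊢
    rw [hchoose, ih (by omega), Nat.mul_succ, pow_add]
    linear_combination -12 ^ (3 * k) * 12 ^ 3 * hterm -
      hyperTerm p (-(-2 * e)) (1 + -2 * e) k * 12 ^ (3 * k) * hfactor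

lemma intCast_ne_zero_of_isUnit {d : ℤ} (hd : IsUnit (d : ModCube p)) : (d : ℚ) ≠ 0 := by
  rintro h
  rw [Int.cast_eq_zero.1 h, isUnit_intCast_iff] at hd
  exact hd (dvd_zero _)

lemma HasResidue.add {a b : ℚ} {r s : ModCube p} (ha : HasResidue p a r) (hb : HasResidue p b s) :
    HasResidue p (a + b) (r + s) := by
  obtain ⟨n, d, hd, rfl, hn⟩ := ha
  obtain ⟨n', d', hd', rfl, hn'⟩ := hb
  refine ⟨n * d' + d * n', d * d', ?_, ?_, ?_⟩
  · rw [Int.cast_mul]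
    exact hd.mul hd'
  · rw [div_add_div _ _ (intCast_ne_zero_of_isUnit hd) (intCast_ne_zero_of_isUnit hd')]
    norm_cast
  · push_cast
    rw [hn, hn']
    ring

lemma HasResidue.sum {ι : Type*} {s : Finset ι} {f : ι → ℚ} {g : ι → ModCube p}
    (h : ∀ i ∈ s, HasResidue p (f i) (g i)) :
    HasResidue p (∑ i ∈ s, f i) (∑ i ∈ s, g i) := by
  classical
  induction s using Finset.induction_on with
  | empty => simpa using hasResidue_intCast (p := p) 0
  | insert i s hi ih =>
    rw [Finset.sum_insert hi, Finset.sum_insert hi]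
    exact (h i (s.mem_insert_self i)).add (ih fun j hj => h j (Finset.mem_insert_of_mem hj))

lemma pow_dvd_num_of_eq_div {q : ℚ} {n d : ℤ} {r : ℕ} (hd : IsUnit (d : ModCube p))
    (hq : q = n / d) (hn : (p : ℤ) ^ r ∣ n) : (p : ℤ) ^ r ∣ q.num := by
  have hcross : q.num * d = n * q.den := by
    have hden : (q.den : ℚ) ≠ 0 := by exact_mod_cast q.den_ne_zero
    rw [← q.num_div_den, div_eq_div_iff hden (intCast_ne_zero_of_isUnit hd)] at hq
    exact_mod_cast hq
  have hcoprime : IsCoprime ((p : ℤ) ^ r) d :=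
    ((Nat.prime_iff_prime_int.1 hp.out).coprime_iff_not_dvd.2 (isUnit_intCast_iff.1 hd)).pow_left
  exact hcoprime.dvd_of_dvd_mul_right (hcross ▸ hn.mul_right _)

lemma HasResidue.ratCongr_div {a : ℚ} {r : ModCube p} (ha : HasResidue p a r) {n d : ℤ} {i j : ℕ}
    (hij : i + j = 3) (hd : IsUnit (d : ModCube p))
    (hn : (p : ModCube p) ^ i * (r * d) = p ^ i * n) : ratCongr p j a (n / d) := by
  obtain ⟨n', d', hd', rfl, hn'⟩ := ha
  refine pow_dvd_num_of_eq_div (n := n' * d - d' * n) (d := d' * d)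
    (by rw [Int.cast_mul]; exact hd'.mul hd) ?_ ?_
  · rw [div_sub_div _ _ (intCast_ne_zero_of_isUnit hd') (intCast_ne_zero_of_isUnit hd)]
    norm_cast
  · have hzero : ((p ^ i * (n' * d - d' * n) : ℤ) : ModCube p) = 0 := by
      push_cast
      rw [hn']
      linear_combination d' * hn
    rw [ZMod.intCast_zmod_eq_zero_iff_dvd, ← hij] at hzero
    push_cast at hzero
    rw [pow_add] at hzero
    exact (mul_dvd_mul_iff_left (pow_ne_zero i (by exact_mod_cast hp.out.ne_zero))).1 hzero

end Residues

/-- The sum `(p/3) ∑_{k < p} k ^ j C(2k,k) C(3k,k) C(6k,3k) / 12 ^ (3k)`. -/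
def binomialSum (p j : ℕ) : ℚ :=
  (legendreSym 3 p : ℚ) * ∑ k ∈ Finset.range p,
    (k : ℚ) ^ j * ((2 * k).choose k : ℚ) * ((3 * k).choose k : ℚ) * ((6 * k).choose (3 * k) : ℚ)
      / 12 ^ (3 * k)

lemma binomialSum_five_ratCongr :
    ratCongr 5 3 (binomialSum 5 1) (185 / 72) ∧ ratCongr 5 3 (binomialSum 5 2) (-(1025 / 1944)) ∧
      ratCongr 5 3 (binomialSum 5 3) (4435 / 69984) := by
  have hlegendre : legendreSym 3 (5 : ℕ) = -1 := by decide
  norm_num [binomialSum, ratCongr, hlegendre, Finset.sum_range_succ, Nat.choose]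

section Congruences

variable {p : ℕ} [hp : Fact p.Prime]

lemma isUnit_twelve (hp3 : 3 < p) : IsUnit (12 : ModCube p) := by
  convert ((isUnit_two (p := p) (by omega)).pow 2).mul (isUnit_three hp3) using 1
  norm_num

lemma isUnit_of_dvd_twelve_pow (hp3 : 3 < p) (k : ℕ) {d : ℤ} (hd : d ∣ 12 ^ k) :
    IsUnit (d : ModCube p) := by
  refine isUnit_of_dvd_unit (Int.cast_dvd_cast _ _ hd) ?_
  rw [Int.cast_pow, Int.cast_ofNat]
  exact (isUnit_twelve hp3).pow k

lemma hasResidue_binomialSum (hp3 : 3 < p) {e : ModCube p} (he : 12 * e = 1) (j : ℕ) :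
    HasResidue p (binomialSum p j) (legendreSym 3 p * hyperSum p j (-2 * e)) := by
  refine (hasResidue_intCast _).mul (.sum fun k hk => ?_)
  refine ⟨k ^ j * ((2 * k).choose k * (3 * k).choose k * (6 * k).choose (3 * k)), 12 ^ (3 * k),
    isUnit_of_dvd_twelve_pow hp3 _ dvd_rfl, ?_, ?_⟩
  · push_cast
    ring
  · push_cast
    rw [choose_eq_hyperTerm (by omega) he (Finset.mem_range.1 hk), mul_assoc]

lemma isUnit_intCast_of_eq_sq_add_four_mul_sq (hp2 : p ≠ 2) {x y : ℤ}
    (hxy : (p : ℤ) = x ^ 2 + 4 * y ^ 2) : IsUnit (x : ModCube p) := by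
  have hprime := Nat.prime_iff_prime_int.1 hp.out
  rw [isUnit_intCast_iff]
  rintro ⟨a, rfl⟩
  have hdvd : (p : ℤ) ∣ 2 ^ 2 * y ^ 2 := ⟨1 - p * a ^ 2, by linear_combination -hxy⟩
  have hcoprime : IsCoprime (p : ℤ) (2 ^ 2) :=
    ((hprime.coprime_iff_not_dvd).2 fun h =>
      hp2 ((Nat.prime_dvd_prime_iff_eq hp.out Nat.prime_two).1 (by exact_mod_cast h))).pow_right
  obtain ⟨b, rfl⟩ := hprime.dvd_of_dvd_pow (hcoprime.dvd_of_dvd_mul_left hdvd)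
  refine hprime.not_isUnit (.of_mul_eq_one (a ^ 2 + 4 * b ^ 2) ?_)
  apply mul_left_cancel₀ hprime.ne_zero
  linear_combination -hxy

lemma binomialSum_ratCongr_of_thirteen_le (hp13 : 13 ≤ p) (hp4 : p % 4 = 1) {x y : ℤ}
    (hxy : (p : ℤ) = x ^ 2 + 4 * y ^ 2) :
    ratCongr p 3 (binomialSum p 1)
        ((-40 * x ^ 4 + 20 * p * x ^ 2 + 5 * p ^ 2 : ℤ) / (72 * x ^ 2 : ℤ)) ∧
      ratCongr p 3 (binomialSum p 2)
        ((100 * x ^ 4 - 50 * p * x ^ 2 - 35 * p ^ 2 : ℤ) / (1944 * x ^ 2 : ℤ)) ∧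
      ratCongr p 3 (binomialSum p 3)
        ((160 * x ^ 4 - 80 * p * x ^ 2 + 187 * p ^ 2 : ℤ) / (69984 * x ^ 2 : ℤ)) := by
  have hp3 : 3 < p := by omega
  have hm : p = 4 * (p / 4) + 1 := by omega
  obtain ⟨e, he⟩ := (isUnit_twelve hp3).exists_right_inv
  have hunit {c : ℤ} (k : ℕ) (hc : c ∣ 12 ^ k) : IsUnit ((c * x ^ 2 : ℤ) : ModCube p) := by
    rw [Int.cast_mul, Int.cast_pow]
    exact (isUnit_of_dvd_twelve_pow hp3 k hc).mul
      ((isUnit_intCast_of_eq_sq_add_four_mul_sq (by omega) hxy).pow 2)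
  refine ⟨(hasResidue_binomialSum hp3 he 1).ratCongr_div (i := 0) rfl (hunit 2 (by norm_num)) ?_,
    (hasResidue_binomialSum hp3 he 2).ratCongr_div (i := 0) rfl (hunit 5 (by norm_num)) ?_,
    (hasResidue_binomialSum hp3 he 3).ratCongr_div (i := 0) rfl (hunit 7 (by norm_num)) ?_⟩
  · simpa using legendreSym_mul_hyperSum_one hp13 hm he hxy
  · simpa using legendreSym_mul_hyperSum_two hp13 hm he hxy
  · simpa using legendreSym_mul_hyperSum_three hp13 hm he hxy

lemma binomialSum_ratCongr_of_mod_four_eq_one (hp3 : 3 < p) (hp4 : p % 4 = 1) {x y : ℤ}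
    (hxy : (p : ℤ) = x ^ 2 + 4 * y ^ 2) :
    ratCongr p 3 (binomialSum p 1)
        (-(5 / 9) * (x : ℚ) ^ 2 + 5 / 18 * (p : ℚ) + 5 * (p : ℚ) ^ 2 / (72 * (x : ℚ) ^ 2)) ∧
      ratCongr p 3 (binomialSum p 2)
        (25 / 486 * (x : ℚ) ^ 2 - 25 / 972 * (p : ℚ) - 35 * (p : ℚ) ^ 2 / (1944 * (x : ℚ) ^ 2)) ∧
      ratCongr p 3 (binomialSum p 3)
        (5 / 2187 * (x : ℚ) ^ 2 - 5 / 4374 * (p : ℚ) +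
          187 * (p : ℚ) ^ 2 / (69984 * (x : ℚ) ^ 2)) := by
  by_cases hp13 : 13 ≤ p
  · have hx0 := intCast_ne_zero_of_isUnit
      (isUnit_intCast_of_eq_sq_add_four_mul_sq (by omega) hxy)
    obtain ⟨hone, htwo, hthree⟩ := binomialSum_ratCongr_of_thirteen_le hp13 hp4 hxy
    refine ⟨?_, ?_, ?_⟩
    · convert hone using 1
      push_cast
      field_simp
      ring
    · convert htwo using 1
      push_cast
      field_simp
      ring
    · convert hthree using 1
      push_cast
      field_simp
      ring
  · obtain rfl : p = 5 := by
      have hp9 : p ≠ 9 := fun h => absurd (h ▸ hp.out) (by norm_num)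
      omega
    have hodd : Odd x := (Int.odd_pow' two_ne_zero).1 ⟨2 - 2 * y ^ 2, by linear_combination -hxy⟩
    have hx : x ^ 2 = 1 ^ 2 := sq_eq_sq_of_prime_eq_sq_add_sq hp.out (b := 2 * y) (d := 2)
      (by rw [hxy]; ring) (by norm_num) hodd (even_two_mul y) odd_one
    have hxQ : (x : ℚ) ^ 2 = 1 := by exact_mod_cast hx
    rw [hxQ]
    norm_num [binomialSum_five_ratCongr]

lemma binomialSum_ratCongr_of_mod_four_eq_three (hp3 : 3 < p) (hp4 : p % 4 = 3) :
    ratCongr p 2 (binomialSum p 1) (1 / 12 * R1 p) ∧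
      ratCongr p 2 (binomialSum p 2) (-(23 / 648) * R1 p) ∧
      ratCongr p 2 (binomialSum p 3) (197 / 29160 * R1 p) := by
  obtain ⟨e, he⟩ := (isUnit_twelve hp3).exists_right_inv
  have hfive : IsUnit ((5 : ℤ) : ModCube p) := by
    exact_mod_cast isUnit_natCast_of_lt (p := p) (by norm_num : 0 < 5) (by omega)
  have hunit : IsUnit ((29160 : ℤ) : ModCube p) := by
    have h := (isUnit_of_dvd_twelve_pow (p := p) hp3 6 (d := 5832) (by norm_num)).mul hfive
    rwa [← Int.cast_mul] at h
  refine ⟨?_, ?_, ?_⟩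
  · convert (hasResidue_binomialSum hp3 he 1).ratCongr_div (i := 1) (j := 2) (d := 12)
      (n := (2 * p + 2 - 2 ^ (p - 1)) * ((p - 1) / 2).choose (p / 4) ^ 2) rfl
      (isUnit_of_dvd_twelve_pow hp3 1 (by norm_num)) ?_
    · rw [R1]
      push_cast
      ring
    · simpa using p_mul_legendreSym_mul_hyperSum_one hp3 hp4 he
  · convert (hasResidue_binomialSum hp3 he 2).ratCongr_div (i := 1) (j := 2) (d := 648)
      (n := -23 * ((2 * p + 2 - 2 ^ (p - 1)) * ((p - 1) / 2).choose (p / 4) ^ 2)) rfl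
      (isUnit_of_dvd_twelve_pow hp3 4 (by norm_num)) ?_
    · rw [R1]
      push_cast
      ring
    · simpa using p_mul_legendreSym_mul_hyperSum_two hp3 hp4 he
  · convert (hasResidue_binomialSum hp3 he 3).ratCongr_div (i := 1) (j := 2)
      (n := 197 * ((2 * p + 2 - 2 ^ (p - 1)) * ((p - 1) / 2).choose (p / 4) ^ 2)) rfl hunit ?_
    · rw [R1]
      push_cast
      ring
    · simpa using p_mul_legendreSym_mul_hyperSum_three hp3 hp4 he

end Congruences

end ModCube

theorem statement10 (p : ℕ) (hp : p.Prime) (hp3 : 3 < p) :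
    (∀ x y : ℤ, p % 4 = 1 → (p : ℤ) = x^2 + 4*y^2 →
      ratCongr p 3
        ((legendreSym 3 p : ℚ) * ∑ k ∈ Finset.range p,
          (k:ℚ) * ((2*k).choose k : ℚ) * ((3*k).choose k : ℚ) * ((6*k).choose (3*k) : ℚ)
            / 12^(3*k))
        (-(5/9)*(x:ℚ)^2 + 5/18*(p:ℚ) + 5*(p:ℚ)^2/(72*(x:ℚ)^2)) ∧
      ratCongr p 3
        ((legendreSym 3 p : ℚ) * ∑ k ∈ Finset.range p,
          (k:ℚ)^2 * ((2*k).choose k : ℚ) * ((3*k).choose k : ℚ) * ((6*k).choose (3*k) : ℚ)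
            / 12^(3*k))
        (25/486*(x:ℚ)^2 - 25/972*(p:ℚ) - 35*(p:ℚ)^2/(1944*(x:ℚ)^2)) ∧
      ratCongr p 3
        ((legendreSym 3 p : ℚ) * ∑ k ∈ Finset.range p,
          (k:ℚ)^3 * ((2*k).choose k : ℚ) * ((3*k).choose k : ℚ) * ((6*k).choose (3*k) : ℚ)
            / 12^(3*k))
        (5/2187*(x:ℚ)^2 - 5/4374*(p:ℚ) + 187*(p:ℚ)^2/(69984*(x:ℚ)^2))) ∧
    (p % 4 = 3 →
      ratCongr p 2
        ((legendreSym 3 p : ℚ) * ∑ k ∈ Finset.range p,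
          (k:ℚ) * ((2*k).choose k : ℚ) * ((3*k).choose k : ℚ) * ((6*k).choose (3*k) : ℚ)
            / 12^(3*k))
        (1/12*R1 p) ∧
      ratCongr p 2
        ((legendreSym 3 p : ℚ) * ∑ k ∈ Finset.range p,
          (k:ℚ)^2 * ((2*k).choose k : ℚ) * ((3*k).choose k : ℚ) * ((6*k).choose (3*k) : ℚ)
            / 12^(3*k))
        (-(23/648)*R1 p) ∧
      ratCongr p 2
        ((legendreSym 3 p : ℚ) * ∑ k ∈ Finset.range p,
          (k:ℚ)^3 * ((2*k).choose k : ℚ) * ((3*k).choose k : ℚ) * ((6*k).choose (3*k) : ℚ)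
            / 12^(3*k))
        (197/29160*R1 p)) := by
  have : Fact p.Prime := ⟨hp⟩
  refine ⟨fun x y hp4 hxy => ?_, fun hp4 => ?_⟩
  · simpa only [ModCube.binomialSum, pow_one] using
      ModCube.binomialSum_ratCongr_of_mod_four_eq_one hp3 hp4 hxy
  · simpa only [ModCube.binomialSum, pow_one] using
      ModCube.binomialSum_ratCongr_of_mod_four_eq_three hp3 hp4
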